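/- If A is not K-trivial and D is non-computable, then there exists a Martin-Löf random sequence R such that A ⊕ R ≡_T A ⊕ D ⊕ ∅′, R ≱_T D, and R′ ≤_T A ⊕ R. -/

import Mathlib

open MeasureTheory ENNReal

/-! ### Cantor space and the uniform (coin-flipping) measure -/

/-- The binary digits of a real number in `[0,1)`, giving a point of Cantor space. -/
noncomputable def binaryDigits (x : ℝ) : ℕ → Bool :=
  fun n => decide (⌊x * 2 ^ (n + 1)⌋ % 2 = 1)

/-- The uniform (Lebesgue / coin-flipping) measure on Cantor space `2^ω`,
obtained as the pushforward of Lebesgue measure on `[0,1)` under binary expansion. -/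
noncomputable def μCantor : Measure (ℕ → Bool) :=
  Measure.map binaryDigits (volume.restrict (Set.Ico (0 : ℝ) 1))

/-- `σ` is an initial segment of the infinite sequence `X`. -/
def IsPrefixOf (σ : List Bool) (X : ℕ → Bool) : Prop :=
  ∀ i : Fin σ.length, X i = σ.get i

/-- The cylinder determined by a finite binary string. -/
def cylinder (σ : List Bool) : Set (ℕ → Bool) := {X | IsPrefixOf σ X}

/-- The open set generated by a set of finite binary strings. -/
def openOf (S : Set (List Bool)) : Set (ℕ → Bool) := ⋃ σ ∈ S, cylinder σ

/-- The density of a set `P` above the string `τ`: `μ([τ] ∩ P) · 2^{|τ|}`. -/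
noncomputable def dens (τ : List Bool) (P : Set (ℕ → Bool)) : ℝ≥0∞ :=
  μCantor (cylinder τ ∩ P) * 2 ^ τ.length

/-- The length-`n` initial segment of `X`, as a finite binary string. -/
def strPrefix (X : ℕ → Bool) (n : ℕ) : List Bool := (List.range n).map X

/-- A set of strings is prefix-free if no element is a proper prefix of another. -/
def PrefixFreeSet (S : Set (List Bool)) : Prop :=
  ∀ σ ∈ S, ∀ τ ∈ S, σ <+: τ → σ = τ

/-- The weight `∑_{σ ∈ S} 2^{-|σ|}` of a set of strings. -/
noncomputable def weight (S : Set (List Bool)) : ℝ≥0∞ :=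
  ∑' σ : S, 2⁻¹ ^ (σ : List Bool).length

/-- A set of strings is bounded if its weight is finite. -/
def BoundedStr (S : Set (List Bool)) : Prop := weight S < ⊤

/-- The tail `X(·+k)` of an infinite binary sequence. -/
def tailSeq (X : ℕ → Bool) (k : ℕ) : ℕ → Bool := fun n => X (n + k)

/-! ### Oracle computability -/

/-- The `e`-th computably enumerable set of naturals (the domain of the `e`-th
partial computable function). -/
def WEnum (e n : ℕ) : Prop := ((Denumerable.ofNat Nat.Partrec.Code e).eval n).Dom

/-- `OracleComputes e X n m` holds if the `e`-th Turing functional with oracle `X`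
outputs `m` on input `n`; a Turing functional is presented by the c.e. set `W_e`
of coded axioms `(σ, n, m)`, and `Γ_e^X(n) = m` iff some initial segment `σ` of `X`
has `(σ, n, m) ∈ W_e`. -/
def OracleComputes (e : ℕ) (X : ℕ → Bool) (n m : ℕ) : Prop :=
  ∃ σ : List Bool, IsPrefixOf σ X ∧
    WEnum e (Nat.pair (Encodable.encode σ) (Nat.pair n m))

def natOfBool (b : Bool) : ℕ := cond b 1 0

/-- `f : ℕ → ℕ` is computable with oracle `A`: some Turing functional with oracle `A`
has graph exactly `f`. -/
def FnComputableIn (f : ℕ → ℕ) (A : ℕ → Bool) : Prop :=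
  ∃ e, ∀ n m, OracleComputes e A n m ↔ m = f n

/-- Turing reducibility `B ≤_T A` for subsets of `ω` (as elements of Cantor space). -/
def TuringLE (B A : ℕ → Bool) : Prop := FnComputableIn (fun n => natOfBool (B n)) A

/-- Turing equivalence. -/
def TuringEquiv (A B : ℕ → Bool) : Prop := TuringLE A B ∧ TuringLE B A

/-- The Turing join `A ⊕ B`. -/
def joinSet (A B : ℕ → Bool) : ℕ → Bool :=
  fun n => if n % 2 = 0 then A (n / 2) else B (n / 2)

open Classical in
/-- The Turing jump `A′ = {e : Γ_e^A(e)↓}`. -/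
noncomputable def jump (A : ℕ → Bool) : ℕ → Bool :=
  fun e => decide (∃ m, OracleComputes e A e m)

/-- The empty oracle. -/
def emptyOracle : ℕ → Bool := fun _ => false

/-- The halting problem `∅′`. -/
noncomputable def zeroJump : ℕ → Bool := jump emptyOracle

/-- A set is computable iff it is Turing reducible to the empty oracle. -/
def ComputableSet (A : ℕ → Bool) : Prop := TuringLE A emptyOracle

/-- A set of naturals is c.e. in `A`. -/
def CeIn (A : ℕ → Bool) (S : Set ℕ) : Prop :=
  ∃ e, ∀ n, n ∈ S ↔ ∃ m, OracleComputes e A n m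

/-- A set of strings is c.e. in `A`. -/
def CeStrIn (A : ℕ → Bool) (S : Set (List Bool)) : Prop :=
  ∃ e, ∀ σ : List Bool, σ ∈ S ↔ ∃ m, OracleComputes e A (Encodable.encode σ) m

/-- A c.e. set of strings. -/
def CeStr (S : Set (List Bool)) : Prop := CeStrIn emptyOracle S

/-! ### Π⁰₁ classes, Martin-Löf randomness, K-triviality -/

/-- A `Π⁰₁(A)` class: the complement of the union of cylinders over an `A`-c.e.
set of strings. -/
def Pi01In (A : ℕ → Bool) (P : Set (ℕ → Bool)) : Prop :=
  ∃ S : Set (List Bool), CeStrIn A S ∧ P = (openOf S)ᶜ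

/-- A `Π⁰₁` class. -/
def Pi01 (P : Set (ℕ → Bool)) : Prop := Pi01In emptyOracle P

/-- The `n`-th level of the `e`-th `A`-effective sequence of open sets. -/
def testLevel (e : ℕ) (A : ℕ → Bool) (n : ℕ) : Set (ℕ → Bool) :=
  openOf {σ | ∃ m, OracleComputes e A (Nat.pair n (Encodable.encode σ)) m}

/-- A Martin-Löf test relative to `A`: a uniformly `A`-c.e. sequence of open sets
`G n` with `μ(G n) ≤ 2^{-n}`. -/
def MLTestIn (A : ℕ → Bool) (G : ℕ → Set (ℕ → Bool)) : Prop :=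
  (∃ e, ∀ n, G n = testLevel e A n) ∧ ∀ n, μCantor (G n) ≤ 2⁻¹ ^ n

/-- `X` is Martin-Löf random relative to `A`: it passes every `A`-Martin-Löf test. -/
def MLRandomIn (A X : ℕ → Bool) : Prop :=
  ∀ G : ℕ → Set (ℕ → Bool), MLTestIn A G → ∃ n, X ∉ G n

/-- `X` is Martin-Löf random. -/
def MLRandom (X : ℕ → Bool) : Prop := MLRandomIn emptyOracle X

/-- The domain of the `e`-th machine, viewed as a set of binary strings. -/
def machineDom (e : ℕ) : Set (List Bool) :=
  {σ | ((Denumerable.ofNat Nat.Partrec.Code e).eval (Encodable.encode σ)).Dom}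

/-- The `e`-th machine is prefix-free. -/
def PrefixFreeMachine (e : ℕ) : Prop := PrefixFreeSet (machineDom e)

/-- Prefix-free Kolmogorov complexity (defined, up to an additive constant, as the
least `|σ| + 2e + 2` over prefix-free machines `e` and programs `σ` producing `x`). -/
noncomputable def Kcpx (x : ℕ) : ℕ :=
  sInf {k | ∃ e, ∃ σ : List Bool, PrefixFreeMachine e ∧
    x ∈ (Denumerable.ofNat Nat.Partrec.Code e).eval (Encodable.encode σ) ∧
    k = σ.length + 2 * e + 2}

/-- `K(n)` means `K(1^n)`. -/
noncomputable def KofNat (n : ℕ) : ℕ := Kcpx (Encodable.encode (List.replicate n true))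

/-- `A` is K-trivial: `K(A↾n) ≤ K(n) + c` for some constant `c`. -/
def KTrivial (A : ℕ → Bool) : Prop :=
  ∃ c, ∀ n, Kcpx (Encodable.encode (strPrefix A n)) ≤ KofNat n + c

/-!
`R` is built by forcing with `Π⁰₁` classes of positive measure. At stage `e` one constraint decides
whether `e ∈ R′`, and another ensures `Γ_e^R ≠ D`: if no such constraint left enough measure, the
bits of `D` could be enumerated by searching for those whose constraint has small measure.

The next stem is then chosen among the strings that end at a minimal hit along `A`. A string is hit
when it vanishes on the block of positions reserved for `A ↾ m` and `k`, where `k` is the cost of an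
apparent description of `m`. If some class of positive measure missed all long hits, the
Kraft–Chaitin theorem would give descriptions of the `A ↾ m` about as short as those of `m`, and `A`
would be K-trivial. So there are infinitely many admissible stems, and they can be coloured
computably in `A ⊕ ∅′` such that every colour keeps occurring; the colour of the chosen stem codes
the two constraints, the bit `D e` and a bound for the search for `e ∈ ∅′`, which is also exceeded
by the length of the stem.

Minimal hits of a given kind along `R` are unique and recognizable from `A`, so `A ⊕ R` finds the
stems, from their lengths `∅′`, and from `∅′` and the colours `D` and `R′`.
-/

/-! ### Relativized computability -/

section Computable

attribute [fun_prop] Computable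
attribute [fun_prop] Computable.id Computable.const Computable.comp Computable.pair Computable.fst
  Computable.snd Computable.encode Computable.decode Computable.cond Computable.option_some
  Computable.list_length

variable {α β σ : Type*} [Primcodable α] [Primcodable β] [Primcodable σ]

@[fun_prop]
theorem computable_add {f g : α → ℕ} (hf : Computable f) (hg : Computable g) :
    Computable fun a => f a + g a :=
  Primrec.nat_add.to_comp.comp hf hg

@[fun_prop]
theorem computable_mul {f g : α → ℕ} (hf : Computable f) (hg : Computable g) :
    Computable fun a => f a * g a :=
  Primrec.nat_mul.to_comp.comp hf hg

@[fun_prop]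
theorem computable_sub {f g : α → ℕ} (hf : Computable f) (hg : Computable g) :
    Computable fun a => f a - g a :=
  Primrec.nat_sub.to_comp.comp hf hg

@[fun_prop]
theorem computable_natPair {f g : α → ℕ} (hf : Computable f) (hg : Computable g) :
    Computable fun a => Nat.pair (f a) (g a) :=
  Primrec₂.natPair.to_comp.comp hf hg

@[fun_prop]
theorem computable_unpair {f : α → ℕ} (hf : Computable f) : Computable fun a => (f a).unpair :=
  Primrec.unpair.to_comp.comp hf

@[fun_prop]
theorem computable_natRec {f : α → ℕ} {g : α → σ} {h : α → ℕ → σ → σ} (hf : Computable f)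
    (hg : Computable g) (hh : Computable fun p : α × ℕ × σ => h p.1 p.2.1 p.2.2) :
    Computable fun a => Nat.rec (motive := fun _ => σ) (g a) (h a) (f a) :=
  Computable.nat_rec (h := fun a p => h a p.1 p.2) hf hg hh

@[fun_prop]
theorem computable_pow {f g : α → ℕ} (hf : Computable f) (hg : Computable g) :
    Computable fun a => f a ^ g a := by
  have h : Computable fun a => Nat.rec (motive := fun _ => ℕ) 1 (fun _ q => q * f a) (g a) := by
    fun_prop
  refine h.of_eq fun a => ?_
  induction g a with
  | zero => rfl
  | succ n ih => rw [pow_succ, ← ih]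

@[fun_prop]
theorem computable_cons {f : α → β} {g : α → List β} (hf : Computable f) (hg : Computable g) :
    Computable fun a => f a :: g a :=
  Computable.list_cons.comp hf hg

@[fun_prop]
theorem computable_append {f g : α → List β} (hf : Computable f) (hg : Computable g) :
    Computable fun a => f a ++ g a :=
  Computable.list_append.comp hf hg

@[fun_prop]
theorem computable_getElem? {f : α → List β} {g : α → ℕ} (hf : Computable f)
    (hg : Computable g) : Computable fun a => (f a)[g a]? :=
  Computable.list_getElem?.comp hf hg

@[fun_prop]
theorem computable_take {f : α → ℕ} {g : α → List β} (hf : Computable f) (hg : Computable g) :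
    Computable fun a => (g a).take (f a) :=
  Primrec.list_take.to_comp.comp hf hg

@[fun_prop]
theorem computable_toList {f : α → Option β} (hf : Computable f) :
    Computable fun a => (f a).toList :=
  Primrec.optionToList.to_comp.comp hf

@[fun_prop]
theorem computable_isSome {f : α → Option β} (hf : Computable f) :
    Computable fun a => (f a).isSome :=
  Primrec.option_isSome.to_comp.comp hf

@[fun_prop]
theorem computable_beq [BEq β] [LawfulBEq β] {f g : α → β} (hf : Computable f)
    (hg : Computable g) : Computable fun a => f a == g a := by
  classical
  exact ((Primrec.eq (α := β)).decide.to_comp.comp hf hg).of_eq fun a => by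
    rw [Bool.eq_iff_iff]; simp

@[fun_prop]
theorem computable_ble {f g : α → ℕ} (hf : Computable f) (hg : Computable g) :
    Computable fun a => (f a).ble (g a) :=
  (Primrec.nat_le.decide.to_comp.comp hf hg).of_eq fun a => by rw [Bool.eq_iff_iff]; simp

@[fun_prop]
theorem computable_and {f g : α → Bool} (hf : Computable f) (hg : Computable g) :
    Computable fun a => f a && g a :=
  Primrec.and.to_comp.comp hf hg

@[fun_prop]
theorem computable_or {f g : α → Bool} (hf : Computable f) (hg : Computable g) :
    Computable fun a => f a || g a :=
  Primrec.or.to_comp.comp hf hg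

@[fun_prop]
theorem computable_not {f : α → Bool} (hf : Computable f) : Computable fun a => !f a :=
  Primrec.not.to_comp.comp hf

@[fun_prop]
theorem computable_natOfBool {f : α → Bool} (hf : Computable f) :
    Computable fun a => natOfBool (f a) := by
  unfold natOfBool
  fun_prop

@[fun_prop]
theorem computable_evaln {f g h : α → ℕ} (hf : Computable f) (hg : Computable g)
    (hh : Computable h) : Computable fun a =>
      Nat.Partrec.Code.evaln (f a) (Denumerable.ofNat Nat.Partrec.Code (g a)) (h a) :=
  Nat.Partrec.Code.primrec_evaln.to_comp.comp
    ((hf.pair ((Computable.ofNat Nat.Partrec.Code).comp hg)).pair hh)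

theorem computable_any_range {f : α → ℕ} {g : α → ℕ → Bool} (hf : Computable f)
    (hg : Computable fun p : α × ℕ => g p.1 p.2) :
    Computable fun a => (List.range (f a)).any (g a) := by
  have hstep : Computable fun p : α × ℕ × Bool => p.2.2 || g p.1 p.2.1 :=
    computable_or (by fun_prop) (hg.comp (g := fun p : α × ℕ × Bool => (p.1, p.2.1)) (by fun_prop))
  refine (computable_natRec (h := fun a n b => b || g a n) hf (Computable.const false)
    hstep).of_eq fun a => ?_
  induction f a with
  | zero => rfl
  | succ n ih => simp only [ih, List.range_succ, List.any_append, List.any_cons, List.any_nil,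
      Bool.or_false]

end Computable

section StrPrefix

variable (X : ℕ → Bool)

@[simp]
theorem length_strPrefix (n : ℕ) : (strPrefix X n).length = n := by
  simp [strPrefix]

theorem take_strPrefix {k n : ℕ} (h : k ≤ n) : (strPrefix X n).take k = strPrefix X k := by
  simp [strPrefix, ← List.map_take, List.take_range, h]

theorem getElem?_strPrefix {k n : ℕ} (h : k < n) : (strPrefix X n)[k]? = some (X k) := by
  simp [strPrefix, h]

theorem strPrefix_succ (n : ℕ) : strPrefix X (n + 1) = strPrefix X n ++ [X n] := by
  simp [strPrefix, List.range_succ]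

theorem isPrefixOf_iff_getElem? {σ : List Bool} {X : ℕ → Bool} :
    IsPrefixOf σ X ↔ ∀ i < σ.length, σ[i]? = some (X i) := by
  refine ⟨fun h i hi => by simp [hi, h ⟨i, hi⟩], fun h i => ?_⟩
  simpa [eq_comm] using h i i.2

theorem isPrefixOf_iff {σ : List Bool} {X : ℕ → Bool} :
    IsPrefixOf σ X ↔ σ = strPrefix X σ.length := by
  rw [isPrefixOf_iff_getElem?]
  constructor
  · intro h
    refine List.ext_getElem (by simp) fun i hi _ => ?_
    simpa [strPrefix, hi] using h i hi
  · intro h i hi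
    rw [h, getElem?_strPrefix X (by simpa using hi)]

theorem isPrefixOf_strPrefix (n : ℕ) : IsPrefixOf (strPrefix X n) X :=
  isPrefixOf_iff.2 (by simp)

theorem computable_strPrefix_emptyOracle : Computable (strPrefix emptyOracle) := by
  have h : Computable fun n : ℕ =>
      Nat.rec (motive := fun _ => List Bool) [] (fun _ l => l ++ [false]) n := by
    fun_prop
  refine h.of_eq fun n => ?_
  induction n with
  | zero => rfl
  | succ n ih => rw [strPrefix_succ, ← ih]; rfl

end StrPrefix

section Arithmetical

variable {α β : Type*} [Primcodable α] [Primcodable β]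

/-- `p` is `Σ⁰₁` relative to `X`: an instance of `p` holds iff some initial segment of the
oracle passes a computable test. -/
def SigmaOneIn (X : ℕ → Bool) (p : α → Prop) : Prop :=
  ∃ g : List Bool × α → Bool, Computable g ∧ ∀ a, p a ↔ ∃ s, g (strPrefix X s, a) = true

/-- `p` is `Δ⁰₁` relative to `X`, that is, decidable with oracle `X`. -/
def DeltaOneIn (X : ℕ → Bool) (p : α → Prop) : Prop :=
  SigmaOneIn X p ∧ SigmaOneIn X fun a => ¬ p a

namespace SigmaOneIn

variable {X : ℕ → Bool}

theorem exists_monotone_kernel {p : α → Prop} (h : SigmaOneIn X p) :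
    ∃ g : List Bool × α → Bool, Computable g ∧
      (∀ a, p a ↔ ∃ s, g (strPrefix X s, a) = true) ∧
      ∀ a s t, s ≤ t → g (strPrefix X s, a) = true → g (strPrefix X t, a) = true := by
  obtain ⟨g, hg, hp⟩ := h
  have key (a : α) (s : ℕ) :
      (List.range ((strPrefix X s).length + 1)).any (fun i => g ((strPrefix X s).take i, a)) = true
        ↔ ∃ i ≤ s, g (strPrefix X i, a) = true := by
    simp only [List.any_eq_true, List.mem_range, length_strPrefix, Nat.lt_succ_iff]
    exact exists_congr fun i => and_congr_right fun hi => by rw [take_strPrefix X hi]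
  refine ⟨fun q => (List.range (q.1.length + 1)).any fun i => g (q.1.take i, q.2), ?_, ?_, ?_⟩
  · exact computable_any_range (by fun_prop)
      (hg.comp (g := fun p : (List Bool × α) × ℕ => (p.1.1.take p.2, p.1.2)) (by fun_prop))
  · exact fun a => by
      simp only [key, hp]
      exact ⟨fun ⟨s, hs⟩ => ⟨s, s, le_rfl, hs⟩, fun ⟨_, i, _, hi⟩ => ⟨i, hi⟩⟩
  · intro a s t hst
    simp only [key]
    exact fun ⟨i, hi, h⟩ => ⟨i, hi.trans hst, h⟩

theorem of_iff {p q : α → Prop} (h : SigmaOneIn X p) (e : ∀ a, q a ↔ p a) : SigmaOneIn X q := by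
  rwa [funext fun a => propext (e a)]

theorem comp {p : β → Prop} (h : SigmaOneIn X p) (f : α → β)
    (hf : Computable f := by fun_prop) : SigmaOneIn X fun a => p (f a) := by
  obtain ⟨g, hg, hp⟩ := h
  exact ⟨fun q => g (q.1, f q.2),
    hg.comp (g := fun q : List Bool × α => (q.1, f q.2)) (by fun_prop), fun a => hp _⟩

theorem and {p q : α → Prop} (hp : SigmaOneIn X p) (hq : SigmaOneIn X q) :
    SigmaOneIn X fun a => p a ∧ q a := by
  obtain ⟨g, hg, hpg, hmono⟩ := hp.exists_monotone_kernel
  obtain ⟨g', hg', hqg, hmono'⟩ := hq.exists_monotone_kernel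
  refine ⟨fun q => g q && g' q, by fun_prop, fun a => ?_⟩
  simp only [hpg, hqg, Bool.and_eq_true]
  refine ⟨fun ⟨⟨s, hs⟩, ⟨t, ht⟩⟩ => ⟨max s t, ?_, ?_⟩, fun ⟨s, hs, ht⟩ => ⟨⟨s, hs⟩, ⟨s, ht⟩⟩⟩
  · exact hmono _ _ _ (le_max_left s t) hs
  · exact hmono' _ _ _ (le_max_right s t) ht

theorem or {p q : α → Prop} (hp : SigmaOneIn X p) (hq : SigmaOneIn X q) :
    SigmaOneIn X fun a => p a ∨ q a := by
  obtain ⟨g, hg, hpg⟩ := hp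
  obtain ⟨g', hg', hqg⟩ := hq
  refine ⟨fun q => g q || g' q, by fun_prop, fun a => ?_⟩
  simp only [hpg, hqg, Bool.or_eq_true, exists_or]

theorem of_computable {f : α → Bool} (hf : Computable f) : SigmaOneIn X fun a => f a = true :=
  ⟨fun q => f q.2, by fun_prop, fun a => by simp⟩

theorem eq {f g : α → β} (hf : Computable f := by fun_prop)
    (hg : Computable g := by fun_prop) : SigmaOneIn X fun a => f a = g a := by
  classical
  exact (of_computable (computable_beq hf hg)).of_iff (by simp)

theorem ne {f g : α → β} (hf : Computable f := by fun_prop)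
    (hg : Computable g := by fun_prop) : SigmaOneIn X fun a => f a ≠ g a := by
  classical
  exact (of_computable (computable_not (computable_beq hf hg))).of_iff (by simp)

theorem le {f g : α → ℕ} (hf : Computable f := by fun_prop)
    (hg : Computable g := by fun_prop) : SigmaOneIn X fun a => f a ≤ g a :=
  (of_computable (computable_ble hf hg)).of_iff (by simp)

theorem lt {f g : α → ℕ} (hf : Computable f := by fun_prop)
    (hg : Computable g := by fun_prop) : SigmaOneIn X fun a => f a < g a :=
  le (f := fun a => f a + 1)

theorem _root_.SigmaOneIn.exists {p : α → β → Prop} (h : SigmaOneIn X fun c : α × β => p c.1 c.2) :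
    SigmaOneIn X fun a => ∃ b, p a b := by
  obtain ⟨g, hg, hp, hmono⟩ := h.exists_monotone_kernel
  let k (q : List Bool × α) (i : ℕ) : Bool :=
    ((Encodable.decode i : Option β).map fun b => g (q.1, q.2, b)).getD false
  have hk : Computable fun q : (List Bool × α) × ℕ => k q.1 q.2 :=
    Computable.option_getD (Computable.option_map (by fun_prop) (hg.comp
      (g := fun q : ((List Bool × α) × ℕ) × β => (q.1.1.1, q.1.1.2, q.2)) (by fun_prop)))
      (by fun_prop)
  refine ⟨fun q => (List.range q.1.length).any (k q), computable_any_range (by fun_prop) hk,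
    fun a => ?_⟩
  simp only [List.any_eq_true, List.mem_range, length_strPrefix]
  constructor
  · rintro ⟨b, hb⟩
    obtain ⟨s, hs⟩ := (hp (a, b)).1 hb
    refine ⟨max s (Encodable.encode b + 1), Encodable.encode b, by simp, ?_⟩
    simpa [k] using hmono _ _ _ (le_max_left _ _) hs
  · rintro ⟨s, i, -, hi⟩
    cases hb : (Encodable.decode i : Option β) with
    | none => simp [k, hb] at hi
    | some b => exact ⟨b, (hp (a, b)).2 ⟨s, by simpa [k, hb] using hi⟩⟩

theorem forall_lt {f : α → ℕ} {p : α → ℕ → Prop} (hf : Computable f)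
    (h : SigmaOneIn X fun c : α × ℕ => p c.1 c.2) : SigmaOneIn X fun a => ∀ i < f a, p a i := by
  obtain ⟨g, hg, hp, hmono⟩ := h.exists_monotone_kernel
  refine ⟨fun q => !(List.range (f q.2)).any fun i => !g (q.1, q.2, i),
    computable_not (computable_any_range (by fun_prop) (computable_not (hg.comp
      (g := fun q : (List Bool × α) × ℕ => (q.1.1, q.1.2, q.2)) (by fun_prop)))), fun a => ?_⟩
  simp only [Bool.not_eq_true', List.any_eq_false, List.mem_range, Bool.not_eq_false]
  refine ⟨fun H => ?_, fun ⟨s, hs⟩ i hi => (hp (a, i)).2 ⟨s, by simpa using hs i hi⟩⟩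
  have stage (n : ℕ) (hn : n ≤ f a) : ∃ s, ∀ i < n, g (strPrefix X s, a, i) = true := by
    induction n with
    | zero => exact ⟨0, by simp⟩
    | succ n ih =>
      obtain ⟨s, hs⟩ := ih (Nat.le_of_succ_le hn)
      obtain ⟨t, ht⟩ := (hp (a, n)).1 (H n hn)
      refine ⟨max s t, fun i hi => ?_⟩
      rcases Nat.lt_succ_iff_lt_or_eq.1 hi with hi | rfl
      · exact hmono _ _ _ (le_max_left _ _) (hs i hi)
      · exact hmono _ _ _ (le_max_right _ _) ht
  simpa using stage _ le_rfl

theorem exists_lt {f : α → ℕ} {p : α → ℕ → Prop} (hf : Computable f)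
    (h : SigmaOneIn X fun c : α × ℕ => p c.1 c.2) : SigmaOneIn X fun a => ∃ i < f a, p a i :=
  .exists (.and .lt h)

theorem forall_mem {f : α → List β} {p : α → β → Prop} (hf : Computable f)
    (h : SigmaOneIn X fun c : α × β => p c.1 c.2) : SigmaOneIn X fun a => ∀ b ∈ f a, p a b := by
  have := forall_lt (X := X) (f := fun a => (f a).length)
    (p := fun a i => ∃ b, (f a)[i]? = some b ∧ p a b) (by fun_prop)
    (.exists (.and .eq (h.comp fun c : (α × ℕ) × β => (c.1.1, c.2))))
  refine this.of_iff fun a => ?_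
  rw [List.forall_mem_iff_getElem]
  exact ⟨fun H i hi => ⟨_, by simp [hi], H i hi⟩, fun H i hi => by simpa [hi] using H i hi⟩

theorem exists_mem {f : α → List β} {p : α → β → Prop} (hf : Computable f)
    (h : SigmaOneIn X fun c : α × β => p c.1 c.2) : SigmaOneIn X fun a => ∃ b ∈ f a, p a b := by
  have : SigmaOneIn X fun a => ∃ b, (∃ i : ℕ, (f a)[i]? = some b) ∧ p a b :=
    .exists (.and (.exists .eq) h)
  exact this.of_iff fun a => by simp only [List.mem_iff_getElem?]

theorem nodup {f : α → List β} (hf : Computable f) : SigmaOneIn X fun a => (f a).Nodup := by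
  have : SigmaOneIn X fun a => ∀ j < (f a).length, ∀ i < j, (f a)[i]? ≠ (f a)[j]? :=
    forall_lt (by fun_prop) (forall_lt (by fun_prop) .ne)
  refine this.of_iff fun a => ?_
  rw [List.nodup_iff_getElem?_ne_getElem?]
  exact ⟨fun H j hj i hi => H i j hi hj, fun H i j hi hj => H j hj i hi⟩

theorem oracle (X : ℕ → Bool) {f : α → ℕ} {g : α → Bool} (hf : Computable f := by fun_prop)
    (hg : Computable g := by fun_prop) : SigmaOneIn X fun a => X (f a) = g a := by
  refine ⟨fun q => q.1[f q.2]? == some (g q.2), by fun_prop, fun a => ?_⟩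
  simp only [beq_iff_eq]
  refine ⟨fun h => ⟨f a + 1, by rw [getElem?_strPrefix X (Nat.lt_succ_self _), h]⟩, ?_⟩
  rintro ⟨s, hs⟩
  have hlt : f a < s := by simpa using (List.getElem?_eq_some_iff.1 hs).1
  simpa [getElem?_strPrefix X hlt] using hs

theorem isPrefixOf (X : ℕ → Bool) {f : α → List Bool} (hf : Computable f := by fun_prop) :
    SigmaOneIn X fun a => IsPrefixOf (f a) X := by
  have : SigmaOneIn X fun a => ∀ i < (f a).length, ∃ b, (f a)[i]? = some b ∧ X i = b :=
    .forall_lt (by fun_prop) (.exists (.and .eq (.oracle X)))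
  exact this.of_iff fun a => by simp [isPrefixOf_iff_getElem?]

theorem comp_strPrefix {p : List Bool → α → Prop}
    (h : SigmaOneIn X fun c : List Bool × α => p c.1 c.2) {f : α → ℕ}
    (hf : Computable f := by fun_prop) : SigmaOneIn X fun a => p (strPrefix X (f a)) a := by
  have : SigmaOneIn X fun a => ∃ σ, (IsPrefixOf σ X ∧ σ.length = f a) ∧ p σ a :=
    .exists (.and (.and (.isPrefixOf X) .eq) (h.comp fun c : α × List Bool => (c.2, c.1)))
  refine this.of_iff fun a => ⟨fun h => ⟨_, ⟨isPrefixOf_strPrefix _ _, by simp⟩, h⟩, ?_⟩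
  rintro ⟨σ, ⟨hσ, hlen⟩, h⟩
  rwa [isPrefixOf_iff.1 hσ, hlen] at h

theorem exists_computable_test {p : α → Prop} (h : SigmaOneIn emptyOracle p) :
    ∃ g : α × ℕ → Bool, Computable g ∧ (∀ a, p a ↔ ∃ s, g (a, s) = true) ∧
      ∀ a s t, s ≤ t → g (a, s) = true → g (a, t) = true := by
  obtain ⟨g, hg, hp, hmono⟩ := h.exists_monotone_kernel
  have := computable_strPrefix_emptyOracle
  exact ⟨fun q => g (strPrefix emptyOracle q.2, q.1),
    hg.comp (g := fun q : α × ℕ => (strPrefix emptyOracle q.2, q.1)) (by fun_prop), hp, hmono⟩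

end SigmaOneIn

namespace DeltaOneIn

variable {X : ℕ → Bool}

theorem comp {p : β → Prop} (h : DeltaOneIn X p) (f : α → β)
    (hf : Computable f := by fun_prop) : DeltaOneIn X fun a => p (f a) :=
  ⟨h.1.comp f, h.2.comp f⟩

theorem of_iff {p q : α → Prop} (h : DeltaOneIn X p) (e : ∀ a, q a ↔ p a) : DeltaOneIn X q :=
  ⟨h.1.of_iff e, h.2.of_iff fun a => not_congr (e a)⟩

theorem not {p : α → Prop} (h : DeltaOneIn X p) : DeltaOneIn X fun a => ¬ p a :=
  ⟨h.2, h.1.of_iff fun _ => not_not⟩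

theorem and {p q : α → Prop} (hp : DeltaOneIn X p) (hq : DeltaOneIn X q) :
    DeltaOneIn X fun a => p a ∧ q a :=
  ⟨hp.1.and hq.1, (hp.2.or hq.2).of_iff fun _ => not_and_or⟩

theorem or {p q : α → Prop} (hp : DeltaOneIn X p) (hq : DeltaOneIn X q) :
    DeltaOneIn X fun a => p a ∨ q a :=
  ⟨hp.1.or hq.1, (hp.2.and hq.2).of_iff fun _ => not_or⟩

theorem imp {p q : α → Prop} (hp : DeltaOneIn X p) (hq : DeltaOneIn X q) :
    DeltaOneIn X fun a => p a → q a :=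
  (hp.not.or hq).of_iff fun _ => imp_iff_not_or

theorem iff {p q : α → Prop} (hp : DeltaOneIn X p) (hq : DeltaOneIn X q) :
    DeltaOneIn X fun a => p a ↔ q a :=
  ((hp.imp hq).and (hq.imp hp)).of_iff fun _ => iff_def

theorem of_computable {f : α → Bool} (hf : Computable f) : DeltaOneIn X fun a => f a = true :=
  ⟨.of_computable hf, (SigmaOneIn.of_computable (computable_not hf)).of_iff (by simp)⟩

theorem eq {f g : α → β} (hf : Computable f := by fun_prop)
    (hg : Computable g := by fun_prop) : DeltaOneIn X fun a => f a = g a :=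
  ⟨.eq, .ne⟩

theorem le {f g : α → ℕ} (hf : Computable f := by fun_prop)
    (hg : Computable g := by fun_prop) : DeltaOneIn X fun a => f a ≤ g a :=
  ⟨.le, (SigmaOneIn.lt hg hf).of_iff fun _ => not_le⟩

theorem lt {f g : α → ℕ} (hf : Computable f := by fun_prop)
    (hg : Computable g := by fun_prop) : DeltaOneIn X fun a => f a < g a :=
  ⟨.lt, (SigmaOneIn.le hg hf).of_iff fun _ => not_lt⟩

theorem forall_lt {f : α → ℕ} {p : α → ℕ → Prop} (hf : Computable f)
    (h : DeltaOneIn X fun c : α × ℕ => p c.1 c.2) : DeltaOneIn X fun a => ∀ i < f a, p a i :=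
  ⟨.forall_lt hf h.1, (SigmaOneIn.exists_lt hf h.2).of_iff fun a => by push Not; rfl⟩

theorem exists_lt {f : α → ℕ} {p : α → ℕ → Prop} (hf : Computable f)
    (h : DeltaOneIn X fun c : α × ℕ => p c.1 c.2) : DeltaOneIn X fun a => ∃ i < f a, p a i :=
  ⟨.exists_lt hf h.1, (SigmaOneIn.forall_lt hf h.2).of_iff fun a => by push Not; rfl⟩

theorem forall_mem {f : α → List β} {p : α → β → Prop} (hf : Computable f)
    (h : DeltaOneIn X fun c : α × β => p c.1 c.2) : DeltaOneIn X fun a => ∀ b ∈ f a, p a b :=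
  ⟨.forall_mem hf h.1, (SigmaOneIn.exists_mem hf h.2).of_iff fun a => by push Not; rfl⟩

theorem exists_mem {f : α → List β} {p : α → β → Prop} (hf : Computable f)
    (h : DeltaOneIn X fun c : α × β => p c.1 c.2) : DeltaOneIn X fun a => ∃ b ∈ f a, p a b :=
  ⟨.exists_mem hf h.1, (SigmaOneIn.forall_mem hf h.2).of_iff fun a => by push Not; rfl⟩

theorem mem {f : α → β} {g : α → List β} (hf : Computable f := by fun_prop)
    (hg : Computable g := by fun_prop) : DeltaOneIn X fun a => f a ∈ g a :=
  (exists_mem (p := fun a b => b = f a) hg .eq).of_iff fun _ => by simp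

theorem oracle (X : ℕ → Bool) {f : α → ℕ} {g : α → Bool} (hf : Computable f := by fun_prop)
    (hg : Computable g := by fun_prop) : DeltaOneIn X fun a => X (f a) = g a :=
  ⟨.oracle X, (SigmaOneIn.oracle X hf (computable_not hg)).of_iff fun _ => Bool.eq_not.symm⟩

theorem comp_strPrefix {p : List Bool → α → Prop}
    (h : DeltaOneIn X fun c : List Bool × α => p c.1 c.2) {f : α → ℕ}
    (hf : Computable f := by fun_prop) : DeltaOneIn X fun a => p (strPrefix X (f a)) a :=
  ⟨h.1.comp_strPrefix, SigmaOneIn.comp_strPrefix (p := fun σ a => ¬ p σ a) h.2⟩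

end DeltaOneIn

theorem SigmaOneIn.exists_uniformization {X : ℕ → Bool} {p : α → β → Prop}
    (h : SigmaOneIn X fun c : α × β => p c.1 c.2) :
    ∃ F : α → β → Prop, (SigmaOneIn X fun c : α × β => F c.1 c.2) ∧ (∀ a b, F a b → p a b) ∧
      (∀ a b b', F a b → F a b' → b = b') ∧ ∀ a, (∃ b, p a b) → ∃ b, F a b := by
  classical
  obtain ⟨g, hg, hp⟩ := h
  let W (a : α) (n : ℕ) : Prop :=
    ∃ c ∈ (Encodable.decode n : Option (ℕ × β)).toList, g (strPrefix X c.1, a, c.2) = true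
  have hW : DeltaOneIn X fun q : α × ℕ => W q.1 q.2 :=
    .exists_mem (by fun_prop) (.comp_strPrefix
      (p := fun σ (q : (α × ℕ) × ℕ × β) => g (σ, q.1.1, q.2.2) = true) (.of_computable (hg.comp
        (g := fun q : List Bool × (α × ℕ) × ℕ × β => (q.1, q.2.1.1, q.2.2.2)) (by fun_prop))))
  have hWmin : SigmaOneIn X fun q : α × ℕ => W q.1 q.2 ∧ ∀ m < q.2, ¬ W q.1 m :=
    .and hW.1 (.forall_lt (by fun_prop) (hW.2.comp fun q : (α × ℕ) × ℕ => (q.1.1, q.2)))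
  refine ⟨fun a b => ∃ n, (W a n ∧ ∀ m < n, ¬ W a m) ∧ ∃ s,
    (Encodable.decode n : Option (ℕ × β)) = some (s, b), ?_, ?_, ?_, ?_⟩
  · exact .exists (.and (hWmin.comp fun q : (α × β) × ℕ => (q.1.1, q.2))
      (.exists (β := ℕ) .eq))
  · rintro a b ⟨n, ⟨⟨c, hc, hgc⟩, -⟩, s, hn⟩
    obtain rfl : c = (s, b) := by simpa [hn] using hc
    exact (hp (a, b)).2 ⟨s, hgc⟩
  · rintro a b b' ⟨n, ⟨hn, hmin⟩, s, hb⟩ ⟨n', ⟨hn', hmin'⟩, s', hb'⟩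
    obtain rfl : n = n' := le_antisymm (not_lt.1 fun hlt => hmin _ hlt hn')
      (not_lt.1 fun hlt => hmin' _ hlt hn)
    simpa using congrArg (Option.map Prod.snd) (hb.symm.trans hb')
  · rintro a ⟨b, hb⟩
    obtain ⟨s, hs⟩ := (hp (a, b)).1 hb
    have hex : ∃ n, W a n := ⟨Encodable.encode (s, b), (s, b), by simp, hs⟩
    obtain ⟨c, hc, -⟩ := Nat.find_spec hex
    exact ⟨c.2, Nat.find hex, ⟨Nat.find_spec hex, fun m hm => Nat.find_min hex hm⟩, c.1,
      by simpa using hc⟩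

end Arithmetical

section Turing

open Nat.Partrec (Code)

variable {α : Type*} [Primcodable α]

theorem wEnum_iff {e n : ℕ} :
    WEnum e n ↔ ∃ k, (Code.evaln k (Denumerable.ofNat Code e) n).isSome = true := by
  rw [WEnum, Part.dom_iff_mem]
  constructor
  · rintro ⟨y, hy⟩
    obtain ⟨k, hk⟩ := Code.evaln_complete.1 hy
    exact ⟨k, Option.isSome_iff_exists.2 ⟨y, hk⟩⟩
  · rintro ⟨k, hk⟩
    obtain ⟨y, hy⟩ := Option.isSome_iff_exists.1 hk
    exact ⟨y, Code.evaln_sound (Option.mem_def.2 hy)⟩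

theorem SigmaOneIn.wEnum {X : ℕ → Bool} {f g : α → ℕ} (hf : Computable f := by fun_prop)
    (hg : Computable g := by fun_prop) : SigmaOneIn X fun a => WEnum (f a) (g a) := by
  simp only [wEnum_iff]
  exact .exists (.of_computable (by fun_prop))

theorem exists_code_eval_iff {Q : ℕ → ℕ → Prop}
    (h : SigmaOneIn emptyOracle fun c : ℕ × ℕ => Q c.1 c.2)
    (huniq : ∀ n x y, Q n x → Q n y → x = y) :
    ∃ e, ∀ n x, x ∈ (Denumerable.ofNat Code e).eval n ↔ Q n x := by
  obtain ⟨g, hg, hQ, -⟩ := h.exists_computable_test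
  let test (n w : ℕ) : Part Bool := Part.some (g ((n, w.unpair.1), w.unpair.2))
  have hsearch : Partrec fun n => (Nat.rfind (test n)).map fun w => w.unpair.1 :=
    Partrec.map (f := fun n => Nat.rfind (test n)) (g := fun _ w => w.unpair.1)
      (Partrec.rfind (p := test) (hg.comp
        (g := fun c : ℕ × ℕ => ((c.1, c.2.unpair.1), c.2.unpair.2)) (by fun_prop)).partrec)
      (show Computable fun c : ℕ × ℕ => c.2.unpair.1 by fun_prop)
  obtain ⟨c, hc⟩ := Code.exists_code.1 (Partrec.nat_iff.1 hsearch)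
  have sound {n w : ℕ} (hw : w ∈ Nat.rfind (test n)) : Q n w.unpair.1 :=
    (hQ (n, w.unpair.1)).2 ⟨w.unpair.2, by simpa [test] using Nat.rfind_spec hw⟩
  refine ⟨Encodable.encode c, fun n x => ?_⟩
  rw [Denumerable.ofNat_encode, hc]
  constructor
  · intro hx
    obtain ⟨w, hw, rfl⟩ := (Part.mem_map_iff _).1 hx
    exact sound hw
  · intro hx
    obtain ⟨s, hs⟩ := (hQ (n, x)).1 hx
    have hdom : (Nat.rfind (test n)).Dom :=
      Nat.rfind_dom.2 ⟨Nat.pair x s, by simp [test, hs], fun _ => trivial⟩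
    obtain ⟨w, hw⟩ := Part.dom_iff_mem.1 hdom
    exact (Part.mem_map_iff _).2 ⟨w, hw, huniq _ _ _ (sound hw) hx⟩

theorem exists_wEnum_iff {p : ℕ → Prop} (h : SigmaOneIn emptyOracle p) :
    ∃ e, ∀ n, WEnum e n ↔ p n := by
  obtain ⟨e, he⟩ := exists_code_eval_iff (Q := fun n x => p n ∧ x = 0)
    ((h.comp fun c : ℕ × ℕ => c.1).and .eq) fun n x y hx hy => hx.2.trans hy.2.symm
  exact ⟨e, fun n => by simp [WEnum, Part.dom_iff_mem, he]⟩

theorem SigmaOneIn.oracleComputes {X : ℕ → Bool} {f g h : α → ℕ}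
    (hf : Computable f := by fun_prop) (hg : Computable g := by fun_prop)
    (hh : Computable h := by fun_prop) :
    SigmaOneIn X fun a => OracleComputes (f a) X (g a) (h a) :=
  .exists (.and (.isPrefixOf X) .wEnum)

theorem exists_oracleComputes_iff {X : ℕ → Bool} {p : ℕ → ℕ → Prop}
    (h : SigmaOneIn X fun c : ℕ × ℕ => p c.1 c.2) :
    ∃ e, ∀ n m, OracleComputes e X n m ↔ p n m := by
  obtain ⟨g, hg, hp⟩ := h
  obtain ⟨e, he⟩ := exists_wEnum_iff (p := fun c => ∃ σ : List Bool,
      Encodable.encode σ = c.unpair.1 ∧ g (σ, c.unpair.2.unpair) = true)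
    (.exists (.and .eq (.of_computable (hg.comp
      (g := fun q : ℕ × List Bool => (q.2, q.1.unpair.2.unpair)) (by fun_prop)))))
  refine ⟨e, fun n m => ?_⟩
  refine Iff.trans ?_ (hp (n, m)).symm
  constructor
  · rintro ⟨σ, hσ, h⟩
    obtain ⟨σ', hσ', h⟩ := (he _).1 h
    obtain rfl : σ' = σ := by simpa using hσ'
    exact ⟨σ'.length, by simpa [← isPrefixOf_iff.1 hσ] using h⟩
  · rintro ⟨s, hs⟩
    exact ⟨strPrefix X s, isPrefixOf_strPrefix X s, (he _).2
      ⟨strPrefix X s, by simp, by simpa using hs⟩⟩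

theorem natOfBool_injective : Function.Injective natOfBool := by decide

theorem turingLE_iff {A B : ℕ → Bool} :
    TuringLE B A ↔ SigmaOneIn A fun c : ℕ × Bool => B c.1 = c.2 := by
  constructor
  · rintro ⟨e, he⟩
    refine (SigmaOneIn.oracleComputes (f := fun _ : ℕ × Bool => e) (g := Prod.fst)
      (h := fun c => natOfBool c.2)).of_iff fun c => ?_
    rw [he, natOfBool_injective.eq_iff, eq_comm]
  · intro h
    have : SigmaOneIn A fun c : ℕ × ℕ => ∃ b, B c.1 = b ∧ c.2 = natOfBool b :=
      .exists (.and (h.comp fun c : (ℕ × ℕ) × Bool => (c.1.1, c.2)) .eq)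
    exact exists_oracleComputes_iff (p := fun n m => m = natOfBool (B n))
      (this.of_iff fun c => by simp)

theorem turingLE_of_sigmaOneIn {A B : ℕ → Bool} (htrue : SigmaOneIn A fun n => B n = true)
    (hfalse : SigmaOneIn A fun n => B n = false) : TuringLE B A := by
  have : SigmaOneIn A fun c : ℕ × Bool =>
      (c.2 = true ∧ B c.1 = true) ∨ (c.2 = false ∧ B c.1 = false) :=
    .or (.and .eq (htrue.comp Prod.fst)) (.and .eq (hfalse.comp Prod.fst))
  exact turingLE_iff.2 (this.of_iff fun ⟨n, b⟩ => by cases b <;> simp)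

theorem SigmaOneIn.trans {X Y : ℕ → Bool} {p : α → Prop} (h : SigmaOneIn X p)
    (hXY : TuringLE X Y) : SigmaOneIn Y p := by
  obtain ⟨g, hg, hp⟩ := h
  have : SigmaOneIn Y fun a => ∃ σ : List Bool,
      (∀ i < σ.length, ∃ b, σ[i]? = some b ∧ X i = b) ∧ g (σ, a) = true :=
    .exists (.and (.forall_lt (by fun_prop) (.exists (.and .eq ((turingLE_iff.1 hXY).comp
      fun c : ((α × List Bool) × ℕ) × Bool => (c.1.2, c.2))))) (.of_computable
        (hg.comp (g := fun c : α × List Bool => (c.2, c.1)) (by fun_prop))))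
  refine this.of_iff fun a => ?_
  simp only [hp, exists_eq_right', ← isPrefixOf_iff_getElem?]
  refine ⟨fun ⟨s, hs⟩ => ⟨_, isPrefixOf_strPrefix X s, hs⟩, fun ⟨σ, hσ, h⟩ => ⟨σ.length, ?_⟩⟩
  rwa [← isPrefixOf_iff.1 hσ]

theorem DeltaOneIn.trans {X Y : ℕ → Bool} {p : α → Prop} (h : DeltaOneIn X p)
    (hXY : TuringLE X Y) : DeltaOneIn Y p :=
  ⟨h.1.trans hXY, h.2.trans hXY⟩

theorem TuringLE.trans {X Y Z : ℕ → Bool} (hXY : TuringLE X Y) (hYZ : TuringLE Y Z) :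
    TuringLE X Z :=
  turingLE_iff.2 ((turingLE_iff.1 hXY).trans hYZ)

theorem emptyOracle_turingLE (Y : ℕ → Bool) : TuringLE emptyOracle Y :=
  turingLE_iff.2 (.eq (f := fun _ => false))

theorem turingLE_joinSet_left (A B : ℕ → Bool) : TuringLE A (joinSet A B) := by
  refine turingLE_iff.2 ((SigmaOneIn.oracle (joinSet A B) (f := fun c : ℕ × Bool => 2 * c.1)
    (g := Prod.snd)).of_iff fun c => ?_)
  simp [joinSet]

theorem turingLE_joinSet_right (A B : ℕ → Bool) : TuringLE B (joinSet A B) := by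
  refine turingLE_iff.2 ((SigmaOneIn.oracle (joinSet A B) (f := fun c : ℕ × Bool => 2 * c.1 + 1)
    (g := Prod.snd)).of_iff fun c => ?_)
  simp [joinSet, show (2 * c.1 + 1) / 2 = c.1 by lia]

theorem joinSet_turingLE {A B X : ℕ → Bool} (hA : TuringLE A X) (hB : TuringLE B X) :
    TuringLE (joinSet A B) X := by
  have : SigmaOneIn X fun c : ℕ × Bool =>
      ∃ k, (c.1 = 2 * k ∧ A k = c.2) ∨ (c.1 = 2 * k + 1 ∧ B k = c.2) :=
    .exists (.or
      (.and .eq ((turingLE_iff.1 hA).comp fun c : (ℕ × Bool) × ℕ => (c.2, c.1.2)))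
      (.and .eq ((turingLE_iff.1 hB).comp fun c : (ℕ × Bool) × ℕ => (c.2, c.1.2))))
  refine turingLE_iff.2 (this.of_iff fun ⟨n, b⟩ => ?_)
  obtain ⟨k, rfl | rfl⟩ := n.even_or_odd'
  · refine ⟨fun h => ⟨k, .inl ⟨rfl, by simpa [joinSet] using h⟩⟩, ?_⟩
    rintro ⟨j, ⟨hj, h⟩ | ⟨hj, -⟩⟩
    · obtain rfl : j = k := by lia
      simpa [joinSet] using h
    · lia
  · have hk : (2 * k + 1) / 2 = k := by lia
    refine ⟨fun h => ⟨k, .inr ⟨rfl, by simpa [joinSet, hk] using h⟩⟩, ?_⟩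
    rintro ⟨j, ⟨hj, -⟩ | ⟨hj, h⟩⟩
    · lia
    · obtain rfl : j = k := by lia
      simpa [joinSet, hk] using h

theorem jump_eq_true_iff {X : ℕ → Bool} {e : ℕ} :
    jump X e = true ↔ ∃ m, OracleComputes e X e m := by
  simp [jump]

theorem SigmaOneIn.jump (X : ℕ → Bool) : SigmaOneIn X fun e => jump X e = true :=
  (SigmaOneIn.exists (p := fun e m => OracleComputes e X e m) .oracleComputes).of_iff
    fun _ => jump_eq_true_iff

theorem SigmaOneIn.deltaOneIn_zeroJump {p : α → Prop} (h : SigmaOneIn emptyOracle p) :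
    DeltaOneIn zeroJump p := by
  obtain ⟨e, he⟩ := exists_wEnum_iff
    (p := fun n => ∃ a : α, Encodable.encode a = n.unpair.1 ∧ p a) (.exists (.and .eq (h.comp _)))
  let f (a : α) : ℕ :=
    Encodable.encode (Code.curry (Denumerable.ofNat Code e) (Encodable.encode a))
  have hf : Computable f := Computable.encode.comp
    (Code.primrec₂_curry.to_comp.comp (Computable.const _) Computable.encode)
  have hWf (a : α) (n : ℕ) : WEnum (f a) n ↔ p a := by
    have := he (Nat.pair (Encodable.encode a) n)
    simpa [WEnum, f, Code.eval_curry] using this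
  refine (DeltaOneIn.oracle zeroJump hf (.const true)).of_iff fun a => ?_
  simp only [zeroJump, jump_eq_true_iff, OracleComputes, hWf]
  exact ⟨fun h => ⟨0, [], fun i => i.elim0, h⟩, fun ⟨_, _, _, h⟩ => h⟩

end Turing

section Recursion

variable {α β : Type*} [Primcodable α] [Primcodable β] {X : ℕ → Bool}

theorem sigmaOneIn_of_step {s : ℕ → β} {F : ℕ → β → β → Prop}
    (hF : SigmaOneIn X fun c : ℕ × β × β => F c.1 c.2.1 c.2.2)
    (hs : ∀ i t, F i (s i) t ↔ t = s (i + 1)) : SigmaOneIn X fun c : ℕ × β => s c.1 = c.2 := by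
  have : SigmaOneIn X fun c : ℕ × β => ∃ l : List β, l[0]? = some (s 0) ∧
      (∀ i < c.1, ∃ u : β × β, l[i]? = some u.1 ∧ l[i + 1]? = some u.2 ∧ F i u.1 u.2) ∧
      l[c.1]? = some c.2 :=
    .exists (.and .eq (.and (.forall_lt (by fun_prop) (.exists (.and .eq (.and .eq
      (hF.comp fun c : (((ℕ × β) × List β) × ℕ) × β × β => (c.1.2, c.2.1, c.2.2)))))) .eq))
  refine this.of_iff fun ⟨n, t⟩ => ⟨?_, ?_⟩
  · intro h
    refine ⟨(List.range (n + 1)).map s, by simp, fun i hi => ⟨(s i, s (i + 1)), ?_, ?_, ?_⟩,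
      by simpa using h⟩
    · simp [show i < n + 1 by lia]
    · simp [hi]
    · exact (hs _ _).2 rfl
  · rintro ⟨l, hzero, hstep, hlast⟩
    have hl (i : ℕ) (hi : i ≤ n) : l[i]? = some (s i) := by
      induction i with
      | zero => exact hzero
      | succ i ih =>
        obtain ⟨u, hu, hu', hFu⟩ := hstep i hi
        have hsu : s i = u.1 := by simpa [ih (Nat.le_of_succ_le hi)] using hu
        rw [hu', (hs i u.2).1 (by rwa [hsu])]
    simpa [hl n le_rfl] using hlast

theorem SigmaOneIn.exists_dependent_choice {P : ℕ → β → β → Prop} {Inv : ℕ → β → Prop} {b₀ : β}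
    (hP : SigmaOneIn X fun c : ℕ × β × β => P c.1 c.2.1 c.2.2) (hzero : Inv 0 b₀)
    (hex : ∀ i b, Inv i b → ∃ b', P i b b')
    (hinv : ∀ i b b', Inv i b → P i b b' → Inv (i + 1) b') :
    ∃ s : ℕ → β, s 0 = b₀ ∧ (∀ i, P i (s i) (s (i + 1))) ∧ (∀ i, Inv i (s i)) ∧
      SigmaOneIn X fun c : ℕ × β => s c.1 = c.2 := by
  classical
  obtain ⟨F, hF, hFP, hFunique, hFex⟩ := SigmaOneIn.exists_uniformization
    (p := fun (c : ℕ × β) b => P c.1 c.2 b)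
    (hP.comp fun c : (ℕ × β) × β => (c.1.1, c.1.2, c.2))
  let next (i : ℕ) (b : β) : β := if h : ∃ b', F (i, b) b' then h.choose else b₀
  let s (n : ℕ) : β := Nat.rec b₀ next n
  have hnext (i : ℕ) (hi : Inv i (s i)) : F (i, s i) (s (i + 1)) := by
    have h := hFex (i, s i) (hex i _ hi)
    have hs : s (i + 1) = h.choose := dif_pos h
    exact hs ▸ h.choose_spec
  have hInv (i : ℕ) : Inv i (s i) := by
    induction i with
    | zero => exact hzero
    | succ i ih => exact hinv i _ _ ih (hFP _ _ (hnext i ih))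
  refine ⟨s, rfl, fun i => hFP _ _ (hnext i (hInv i)), hInv,
    sigmaOneIn_of_step (F := fun i b b' => F (i, b) b')
      (hF.comp fun c : ℕ × β × β => ((c.1, c.2.1), c.2.2)) fun i t => ?_⟩
  exact ⟨fun h => hFunique _ _ _ h (hnext i (hInv i)), fun h => h ▸ hnext i (hInv i)⟩

end Recursion

section Coloring

/-- `j` is one of the first `2 ^ d` elements of the `d`-th set `{j | T d j}`. -/
def IsEarly (T : ℕ → ℕ → Prop) (d j : ℕ) : Prop :=
  T d j ∧ ∃ l : List ℕ, l.length < 2 ^ d ∧ ∀ i < j, T d i → i ∈ l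

theorem isEarly_iff {T : ℕ → ℕ → Prop} [∀ d, DecidablePred (T d)] {d j : ℕ} :
    IsEarly T d j ↔ T d j ∧ Nat.count (T d) j < 2 ^ d := by
  simp only [IsEarly, Nat.count_eq_card_filter_range]
  refine and_congr_right fun _ => ⟨fun ⟨l, hl, h⟩ => ?_, fun h =>
    ⟨((Finset.range j).filter (T d)).toList, by rwa [Finset.length_toList], by simp +contextual⟩⟩
  refine (Finset.card_le_card (t := l.toFinset) fun i hi => ?_).trans_lt
    ((List.toFinset_card_le l).trans_lt hl)
  obtain ⟨hij, hi⟩ := Finset.mem_filter.1 hi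
  exact List.mem_toFinset.2 (h i (Finset.mem_range.1 hij) hi)

theorem not_isEarly_iff {T : ℕ → ℕ → Prop} {d j : ℕ} : ¬ IsEarly T d j ↔
    ¬ T d j ∨ ∃ l : List ℕ, l.Nodup ∧ 2 ^ d ≤ l.length ∧ ∀ i ∈ l, i < j ∧ T d i := by
  classical
  rw [isEarly_iff, not_and_or, not_lt, Nat.count_eq_card_filter_range]
  refine or_congr_right ⟨fun h => ⟨((Finset.range j).filter (T d)).toList,
    Finset.nodup_toList _, by rwa [Finset.length_toList], by simp⟩, fun ⟨l, hnodup, hl, h⟩ => ?_⟩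
  rw [← List.toFinset_card_of_nodup hnodup] at hl
  exact hl.trans (Finset.card_le_card fun i hi => by simpa using h i (List.mem_toFinset.1 hi))

-- The smaller colours claim at most `∑ d' < d, 2 ^ d' < 2 ^ d` elements altogether.
theorem exists_isEarly_forall_not_isEarly {T : ℕ → ℕ → Prop} {d : ℕ}
    (hT : {j | T d j}.Infinite) : ∃ j, IsEarly T d j ∧ ∀ d' < d, ¬ IsEarly T d' j := by
  classical
  by_contra! hne
  have hearly (k : ℕ) (hk : k < 2 ^ d) : IsEarly T d (Nat.nth (T d) k) :=
    isEarly_iff.2 ⟨Nat.nth_mem_of_infinite hT k, by rwa [Nat.count_nth_of_infinite hT]⟩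
  have hclaimed (k : Fin (2 ^ d)) : ∃ d' < d, IsEarly T d' (Nat.nth (T d) k) :=
    hne _ (hearly k k.2)
  choose c hcd hc using hclaimed
  let claims := (Finset.range d).sigma fun d' => Finset.range (2 ^ d')
  have hcard : claims.card < (Finset.univ : Finset (Fin (2 ^ d))).card := by
    rw [Finset.card_sigma, Finset.card_univ, Fintype.card_fin]
    simpa using Nat.geomSum_lt (m := 2) le_rfl (n := d) (s := Finset.range d) (by simp)
  obtain ⟨k, -, k', -, hkk', heq⟩ := Finset.exists_ne_map_eq_of_card_lt_of_maps_to hcard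
    (f := fun k => ⟨c k, Nat.count (T (c k)) (Nat.nth (T d) k)⟩)
    fun k _ => Finset.mem_coe.2 (Finset.mem_sigma.2
      ⟨Finset.mem_range.2 (hcd k), Finset.mem_range.2 (isEarly_iff.1 (hc k)).2⟩)
  obtain ⟨hcc, hcount⟩ : c k = c k' ∧ Nat.count (T (c k)) (Nat.nth (T d) k) =
      Nat.count (T (c k')) (Nat.nth (T d) k') := by simpa using heq
  refine hkk' (Fin.ext (Nat.nth_injective hT (Nat.count_injective (hc k).1 ?_ ?_)))
  · exact hcc ▸ (hc k').1
  · exact hcount.trans (by rw [hcc])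

theorem DeltaOneIn.isEarly {α : Type*} [Primcodable α] {Z : ℕ → Bool} {T : α → ℕ → ℕ → Prop}
    (hT : DeltaOneIn Z fun c : α × ℕ × ℕ => T c.1 c.2.1 c.2.2) :
    DeltaOneIn Z fun c : α × ℕ × ℕ => IsEarly (T c.1) c.2.1 c.2.2 := by
  have hTi : DeltaOneIn Z fun c : ((α × ℕ × ℕ) × List ℕ) × ℕ => T c.1.1.1 c.1.1.2.1 c.2 :=
    hT.comp fun c : ((α × ℕ × ℕ) × List ℕ) × ℕ => (c.1.1.1, c.1.1.2.1, c.2)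
  have hnot : SigmaOneIn Z fun c : α × ℕ × ℕ => ¬ T c.1 c.2.1 c.2.2 ∨
      ∃ l : List ℕ, l.Nodup ∧ 2 ^ c.2.1 ≤ l.length ∧ ∀ i ∈ l, i < c.2.2 ∧ T c.1 c.2.1 i :=
    .or hT.2 (.exists (.and (.nodup (by fun_prop))
      (.and .le (.forall_mem (by fun_prop) (.and .lt hTi.1)))))
  exact ⟨.and hT.1 (.exists (.and .lt (.forall_lt (by fun_prop) (hTi.imp .mem).1))),
    hnot.of_iff fun c => not_isEarly_iff⟩

theorem DeltaOneIn.exists_coloring_nat {α : Type*} [Primcodable α] {Z : ℕ → Bool}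
    {T : α → ℕ → ℕ → Prop} (hT : DeltaOneIn Z fun c : α × ℕ × ℕ => T c.1 c.2.1 c.2.2) :
    ∃ C : α → ℕ → ℕ → Prop, (SigmaOneIn Z fun c : α × ℕ × ℕ => C c.1 c.2.1 c.2.2) ∧
      (∀ a j d d', C a j d → C a j d' → d = d') ∧ (∀ a j d, C a j d → T a d j) ∧
      ∀ a d, {j | T a d j}.Infinite → ∃ j, C a j d := by
  refine ⟨fun a j d => IsEarly (T a) d j ∧ ∀ d' < d, ¬ IsEarly (T a) d' j, ?_, ?_,
    fun a j d h => h.1.1, fun a d h => exists_isEarly_forall_not_isEarly h⟩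
  · exact .and (hT.isEarly.1.comp fun c : α × ℕ × ℕ => (c.1, c.2.2, c.2.1)) (.forall_lt
      (by fun_prop) (hT.isEarly.2.comp fun c : (α × ℕ × ℕ) × ℕ => (c.1.1, c.2, c.1.2.1)))
  · rintro a j d d' ⟨h, hmin⟩ ⟨h', hmin'⟩
    exact le_antisymm (not_lt.1 fun hlt => hmin _ hlt h') (not_lt.1 fun hlt => hmin' _ hlt h)

theorem computable_map_encode_decode {β : Type*} [Primcodable β] :
    Computable fun n : ℕ => (Encodable.decode n : Option β).map Encodable.encode :=
  Computable.option_map Computable.decode (Computable.encode.comp Computable.snd).to₂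

theorem DeltaOneIn.exists_encode_eq {α γ δ : Type*} [Primcodable α] [Primcodable γ]
    [Primcodable δ] {Z : ℕ → Bool} {T : α → δ → γ → Prop}
    (hT : DeltaOneIn Z fun c : α × δ × γ => T c.1 c.2.1 c.2.2) :
    DeltaOneIn Z fun c : α × ℕ × ℕ =>
      ∃ u : δ × γ, Encodable.encode u.1 = c.2.1 ∧ Encodable.encode u.2 = c.2.2 ∧ T c.1 u.1 u.2 := by
  refine ⟨.exists (.and .eq (.and .eq
    (hT.1.comp fun c : (α × ℕ × ℕ) × δ × γ => (c.1.1, c.2.1, c.2.2)))), ?_⟩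
  have hnot : SigmaOneIn Z fun c : α × ℕ × ℕ =>
      ((Encodable.decode c.2.1 : Option δ).map Encodable.encode ≠ some c.2.1 ∨
        (Encodable.decode c.2.2 : Option γ).map Encodable.encode ≠ some c.2.2) ∨
      ∃ u : δ × γ, Encodable.encode u.1 = c.2.1 ∧ Encodable.encode u.2 = c.2.2 ∧ ¬ T c.1 u.1 u.2 :=
    .or (.or (.ne (computable_map_encode_decode.comp (by fun_prop)))
      (.ne (computable_map_encode_decode.comp (by fun_prop)))) (.exists (.and .eq (.and .eq
      (hT.2.comp fun c : (α × ℕ × ℕ) × δ × γ => (c.1.1, c.2.1, c.2.2)))))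
  refine hnot.of_iff fun ⟨a, m, j⟩ => ⟨fun h => ?_, ?_⟩
  · by_contra! hcon
    obtain ⟨d, -, hd⟩ := Option.map_eq_some_iff.1 hcon.1.1
    obtain ⟨y, -, hy⟩ := Option.map_eq_some_iff.1 hcon.1.2
    exact h ⟨(d, y), hd, hy, hcon.2 (d, y) hd hy⟩
  · rintro h ⟨⟨d, y⟩, rfl, rfl, hT⟩
    rcases h with h | ⟨⟨d', y'⟩, hd, hy, hT'⟩
    · simp at h
    · obtain rfl := Encodable.encode_injective hd
      obtain rfl := Encodable.encode_injective hy
      exact hT' hT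

theorem DeltaOneIn.exists_coloring {α γ δ : Type*} [Primcodable α] [Primcodable γ] [Primcodable δ]
    {Z : ℕ → Bool} {T : α → δ → γ → Prop}
    (hT : DeltaOneIn Z fun c : α × δ × γ => T c.1 c.2.1 c.2.2) :
    ∃ C : α → γ → δ → Prop, (SigmaOneIn Z fun c : α × γ × δ => C c.1 c.2.1 c.2.2) ∧
      (∀ a y d d', C a y d → C a y d' → d = d') ∧ (∀ a y d, C a y d → T a d y) ∧
      ∀ a d, {y | T a d y}.Infinite → ∃ y, C a y d := by
  obtain ⟨C, hC, hunique, hCT, hex⟩ := DeltaOneIn.exists_coloring_nat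
    (T := fun a m j => ∃ u : δ × γ, Encodable.encode u.1 = m ∧ Encodable.encode u.2 = j ∧
      T a u.1 u.2) hT.exists_encode_eq
  have hT_of_encode {a y d} (h : ∃ u : δ × γ, Encodable.encode u.1 = Encodable.encode d ∧
      Encodable.encode u.2 = Encodable.encode y ∧ T a u.1 u.2) : T a d y := by
    obtain ⟨u, hd, hy, hu⟩ := h
    rwa [← Encodable.encode_injective hd, ← Encodable.encode_injective hy]
  refine ⟨fun a y d => C a (Encodable.encode y) (Encodable.encode d),
    hC.comp fun c : α × γ × δ => (c.1, Encodable.encode c.2.1, Encodable.encode c.2.2),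
    fun a y d d' h h' => Encodable.encode_injective (hunique _ _ _ _ h h'),
    fun a y d h => hT_of_encode (hCT _ _ _ h), fun a d h => ?_⟩
  obtain ⟨j, hj⟩ := hex a (Encodable.encode d)
    ((h.image Encodable.encode_injective.injOn).mono
      (Set.image_subset_iff.2 fun y hy => ⟨(d, y), rfl, rfl, hy⟩))
  obtain ⟨⟨d', y⟩, -, rfl, -⟩ := hCT _ _ _ hj
  exact ⟨y, hj⟩

end Coloring

/-! ### The uniform measure -/

section Cylinder

variable {σ τ : List Bool} {X : ℕ → Bool}

theorem mem_cylinder_iff : X ∈ _root_.cylinder σ ↔ strPrefix X σ.length = σ := by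
  rw [_root_.cylinder, Set.mem_ofPred_eq, isPrefixOf_iff, eq_comm]

theorem cylinder_nil : _root_.cylinder [] = Set.univ :=
  Set.eq_univ_of_forall fun _ => by simp [mem_cylinder_iff, strPrefix]

theorem mem_cylinder_strPrefix (X : ℕ → Bool) (n : ℕ) : X ∈ _root_.cylinder (strPrefix X n) :=
  isPrefixOf_strPrefix X n

theorem mem_openOf_iff {S : Set (List Bool)} : X ∈ openOf S ↔ ∃ n, strPrefix X n ∈ S := by
  simp only [openOf, Set.mem_iUnion, exists_prop]
  refine ⟨fun ⟨σ, hσ, hX⟩ => ⟨σ.length, by rwa [mem_cylinder_iff.1 hX]⟩, ?_⟩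
  exact fun ⟨n, hn⟩ => ⟨_, hn, mem_cylinder_strPrefix X n⟩

theorem disjoint_cylinder (hlen : σ.length = τ.length) (hne : σ ≠ τ) :
    Disjoint (_root_.cylinder σ) (_root_.cylinder τ) := by
  rw [Set.disjoint_left]
  intro X hσ hτ
  rw [mem_cylinder_iff] at hσ hτ
  exact hne (hσ.symm.trans (hlen ▸ hτ))

theorem cylinder_inter_eq_right (hlen : σ.length ≤ τ.length)
    (hne : (_root_.cylinder σ ∩ _root_.cylinder τ).Nonempty) :
    _root_.cylinder σ ∩ _root_.cylinder τ = _root_.cylinder τ := by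
  obtain ⟨X, hσ, hτ⟩ := hne
  refine Set.inter_eq_right.2 fun Y hY => ?_
  rw [mem_cylinder_iff] at hσ hτ hY ⊢
  rw [← take_strPrefix Y hlen, hY, ← hτ, take_strPrefix X hlen, hσ]

theorem measurableSet_cylinder (σ : List Bool) : MeasurableSet (_root_.cylinder σ) := by
  have : _root_.cylinder σ = ⋂ i : Fin σ.length, {X : ℕ → Bool | X i = σ.get i} := by
    ext X; simp [_root_.cylinder, IsPrefixOf]
  rw [this]
  exact .iInter fun i => measurableSet_eq_fun (measurable_pi_apply (i : ℕ)) measurable_const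

theorem measurableSet_openOf (S : Set (List Bool)) : MeasurableSet (openOf S) :=
  .biUnion (Set.to_countable _) fun σ _ => measurableSet_cylinder σ

theorem isPiSystem_range_cylinder : IsPiSystem (Set.range _root_.cylinder) := by
  rintro _ ⟨σ, rfl⟩ _ ⟨τ, rfl⟩ hne
  rcases le_total σ.length τ.length with h | h
  · exact ⟨τ, (cylinder_inter_eq_right h hne).symm⟩
  · rw [Set.inter_comm] at hne ⊢
    exact ⟨σ, (cylinder_inter_eq_right h hne).symm⟩

theorem generateFrom_range_cylinder :
    MeasurableSpace.generateFrom (Set.range _root_.cylinder) = MeasurableSpace.pi := by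
  refine le_antisymm (MeasurableSpace.generateFrom_le ?_) (iSup_le fun i => ?_)
  · rintro _ ⟨σ, rfl⟩
    exact measurableSet_cylinder σ
  · rw [← measurable_iff_comap_le]
    refine @measurable_to_bool _ (_) _ ?_
    have : (fun X : ℕ → Bool => X i) ⁻¹' {true} = openOf {σ | σ[i]? = some true} := by
      ext X
      rw [mem_openOf_iff]
      refine ⟨fun h => ⟨i + 1, ?_⟩, fun ⟨n, hn⟩ => ?_⟩
      · rwa [Set.mem_ofPred_eq, getElem?_strPrefix X i.lt_succ_self, Option.some_inj]
      · have hi : i < n := by simpa using (List.getElem?_eq_some_iff.1 hn).1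
        rwa [Set.mem_ofPred_eq, getElem?_strPrefix X hi, Option.some_inj] at hn
    rw [this]
    exact @MeasurableSet.biUnion _ _ (_) _ _ (Set.to_countable _) fun σ _ =>
      MeasurableSpace.measurableSet_generateFrom ⟨σ, rfl⟩

end Cylinder

section BinaryValue

/-- The number written in base two by a string, most significant bit first. The cylinder of `σ`
corresponds to the dyadic interval of length `2⁻¹ ^ |σ|` starting at
`binaryValue σ / 2 ^ |σ|`. -/
def binaryValue (σ : List Bool) : ℕ := σ.foldl (fun v b => 2 * v + natOfBool b) 0

theorem binaryValue_nil : binaryValue [] = 0 := rfl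

theorem binaryValue_concat (σ : List Bool) (b : Bool) :
    binaryValue (σ ++ [b]) = 2 * binaryValue σ + natOfBool b := by
  simp [binaryValue]

theorem binaryValue_lt (σ : List Bool) : binaryValue σ < 2 ^ σ.length := by
  induction σ using List.reverseRecOn with
  | nil => simp [binaryValue_nil]
  | append_singleton σ b ih =>
    rw [binaryValue_concat, List.length_append, List.length_singleton, pow_succ]
    cases b <;> simp only [natOfBool, cond_true, cond_false] <;> lia

end BinaryValue

section UniformMeasure

theorem measurable_binaryDigits : Measurable binaryDigits := by
  refine measurable_pi_iff.2 fun n => ?_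
  have h : Measurable fun k : ℤ => decide (k % 2 = 1) := measurable_from_top
  exact h.comp (Int.measurable_floor.comp (by fun_prop))

theorem floor_mul_two_pow (x : ℝ) (n : ℕ) : ⌊x * 2 ^ n⌋ = ⌊x * 2 ^ (n + 1)⌋ / 2 := by
  have h := Int.floor_div_natCast (x * 2 ^ (n + 1)) 2
  rwa [Nat.cast_ofNat, pow_succ, ← mul_assoc, mul_div_cancel_right₀ _ two_ne_zero,
    mul_assoc, ← pow_succ, Nat.cast_ofNat] at h

theorem binaryDigits_mem_cylinder_iff {x : ℝ} (hx : x ∈ Set.Ico (0 : ℝ) 1) {σ : List Bool} :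
    binaryDigits x ∈ _root_.cylinder σ ↔ ⌊x * 2 ^ σ.length⌋ = (binaryValue σ : ℤ) := by
  rw [mem_cylinder_iff]
  induction σ using List.reverseRecOn with
  | nil => simpa [strPrefix, binaryValue_nil, Int.floor_eq_zero_iff] using hx
  | append_singleton σ b ih =>
    rw [List.length_append, List.length_singleton, strPrefix_succ, List.append_singleton_inj,
      ih, floor_mul_two_pow, binaryValue_concat, binaryDigits]
    generalize ⌊x * 2 ^ (σ.length + 1)⌋ = k
    cases b <;> simp only [natOfBool, cond_true, cond_false, decide_eq_true_eq,
      decide_eq_false_iff_not] <;> lia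

instance isProbabilityMeasure_μCantor : IsProbabilityMeasure μCantor :=
  have : IsProbabilityMeasure (volume.restrict (Set.Ico (0 : ℝ) 1)) := ⟨by simp⟩
  Measure.isProbabilityMeasure_map measurable_binaryDigits.aemeasurable

theorem preimage_binaryDigits_cylinder (σ : List Bool) :
    binaryDigits ⁻¹' _root_.cylinder σ ∩ Set.Ico 0 1 =
      Set.Ico ((binaryValue σ : ℝ) / 2 ^ σ.length) ((binaryValue σ + 1 : ℝ) / 2 ^ σ.length) := by
  have hpos : (0 : ℝ) < 2 ^ σ.length := by positivity
  have hlt : (binaryValue σ : ℝ) + 1 ≤ 2 ^ σ.length := by exact_mod_cast binaryValue_lt σ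
  ext x
  have hfloor : x ∈ Set.Ico ((binaryValue σ : ℝ) / 2 ^ σ.length)
      ((binaryValue σ + 1 : ℝ) / 2 ^ σ.length) ↔ ⌊x * 2 ^ σ.length⌋ = (binaryValue σ : ℤ) := by
    rw [Int.floor_eq_iff, Set.mem_Ico, div_le_iff₀ hpos, lt_div_iff₀ hpos, Int.cast_natCast]
  refine ⟨fun ⟨hσ, hx⟩ => hfloor.2 ((binaryDigits_mem_cylinder_iff hx).1 hσ), fun h => ?_⟩
  have hx : x ∈ Set.Ico (0 : ℝ) 1 :=
    ⟨h.1.trans' (by positivity), h.2.trans_le ((div_le_one hpos).2 hlt)⟩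
  exact ⟨(binaryDigits_mem_cylinder_iff hx).2 (hfloor.1 h), hx⟩

theorem μCantor_cylinder (σ : List Bool) : μCantor (_root_.cylinder σ) = 2⁻¹ ^ σ.length := by
  rw [μCantor, Measure.map_apply measurable_binaryDigits (measurableSet_cylinder σ),
    Measure.restrict_apply (measurable_binaryDigits (measurableSet_cylinder σ)),
    preimage_binaryDigits_cylinder, Real.volume_Ico, ← sub_div, add_sub_cancel_left, one_div,
    ← inv_pow, ENNReal.ofReal_pow (by positivity), ENNReal.ofReal_inv_of_pos two_pos,
    ENNReal.ofReal_ofNat]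

theorem real_μCantor_cylinder (σ : List Bool) :
    μCantor.real (_root_.cylinder σ) = (1 / 2) ^ σ.length := by
  simp [Measure.real, μCantor_cylinder]

/-- The uniform distribution on a single bit. -/
noncomputable def fairCoin : Measure Bool := (PMF.uniformOfFintype Bool).toMeasure

instance isProbabilityMeasure_fairCoin : IsProbabilityMeasure fairCoin :=
  PMF.toMeasure.isProbabilityMeasure _

theorem fairCoin_singleton (b : Bool) : fairCoin {b} = 2⁻¹ := by
  simp [fairCoin]

theorem infinitePi_fairCoin_cylinder (σ : List Bool) :
    Measure.infinitePi (fun _ : ℕ => fairCoin) (_root_.cylinder σ) = 2⁻¹ ^ σ.length := by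
  have : _root_.cylinder σ = Set.pi (Finset.range σ.length) fun i => {(σ[i]?).getD false} := by
    ext X
    simp only [_root_.cylinder, isPrefixOf_iff_getElem?, Set.mem_ofPred_eq, Set.mem_pi,
      Finset.coe_range, Set.mem_Iio, Set.mem_singleton_iff]
    refine forall₂_congr fun i hi => ?_
    simp [hi, eq_comm]
  rw [this, Measure.infinitePi_pi _ fun _ _ => .singleton _]
  simp [fairCoin_singleton]

theorem μCantor_eq_infinitePi : μCantor = Measure.infinitePi fun _ : ℕ => fairCoin := by
  refine ext_of_generate_finite _ generateFrom_range_cylinder.symm isPiSystem_range_cylinder ?_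
    (by simp)
  rintro _ ⟨σ, rfl⟩
  rw [μCantor_cylinder, infinitePi_fairCoin_cylinder]

/-- The sequences that vanish on `S`. -/
def zeroOn (S : Finset ℕ) : Set (ℕ → Bool) := {X | ∀ i ∈ S, X i = false}

theorem zeroOn_eq_pi (S : Finset ℕ) : zeroOn S = Set.pi S fun _ => {false} := rfl

theorem measurableSet_zeroOn (S : Finset ℕ) : MeasurableSet (zeroOn S) :=
  zeroOn_eq_pi S ▸ .pi (Finset.countable_toSet S) fun _ _ => .singleton _

theorem μCantor_zeroOn (S : Finset ℕ) : μCantor (zeroOn S) = 2⁻¹ ^ S.card := by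
  rw [zeroOn_eq_pi, μCantor_eq_infinitePi, Measure.infinitePi_pi _ fun _ _ => .singleton _]
  simp [fairCoin_singleton]

theorem real_μCantor_zeroOn (S : Finset ℕ) : μCantor.real (zeroOn S) = (1 / 2) ^ S.card := by
  simp [Measure.real, μCantor_zeroOn]

theorem iIndepSet_zeroOn {ι : Type*} {S : ι → Finset ℕ}
    (hS : Pairwise (Function.onFun Disjoint S)) :
    ProbabilityTheory.iIndepSet (fun c => zeroOn (S c)) μCantor := by
  classical
  rw [ProbabilityTheory.iIndepSet_iff_meas_biInter fun c => measurableSet_zeroOn (S c)]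
  intro F
  have hinter : ⋂ c ∈ F, zeroOn (S c) = zeroOn (F.biUnion S) := by
    ext X
    simp only [zeroOn, Set.mem_iInter, Set.mem_ofPred_eq, Finset.mem_biUnion]
    grind
  rw [hinter, μCantor_zeroOn, Finset.card_biUnion fun c _ c' _ hne => hS hne]
  simp [μCantor_zeroOn, Finset.prod_pow_eq_pow_sum]

theorem real_μCantor_biInter_compl_zeroOn {ι : Type*} {S : ι → Finset ℕ}
    (hS : Pairwise (Function.onFun Disjoint S)) (F : Finset ι) :
    μCantor.real (⋂ c ∈ F, (zeroOn (S c))ᶜ) = ∏ c ∈ F, (1 - (1 / 2) ^ (S c).card) := by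
  have hindep : μCantor (⋂ c ∈ F, (zeroOn (S c))ᶜ) = ∏ c ∈ F, μCantor (zeroOn (S c))ᶜ :=
    (ProbabilityTheory.iIndepSet_iff _ _).1 (iIndepSet_zeroOn hS) F fun c _ =>
      (MeasurableSpace.measurableSet_generateFrom (Set.mem_singleton _)).compl
  rw [Measure.real, hindep, ENNReal.toReal_prod]
  refine Finset.prod_congr rfl fun c _ => ?_
  rw [← Measure.real, probReal_compl_eq_one_sub (measurableSet_zeroOn _), real_μCantor_zeroOn]

end UniformMeasure

section Continuity

variable {Ω : Type*} [MeasurableSpace Ω] {μ : Measure Ω} [IsFiniteMeasure μ] {f : ℕ → Set Ω}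

theorem exists_lt_measureReal_of_lt_iUnion (hf : Monotone f) {r : ℝ}
    (h : r < μ.real (⋃ i, f i)) : ∃ i, r < μ.real (f i) := by
  have hlim : Filter.Tendsto (fun i => μ.real (f i)) Filter.atTop (nhds (μ.real (⋃ i, f i))) :=
    (ENNReal.tendsto_toReal (measure_ne_top _ _)).comp (tendsto_measure_iUnion_atTop hf)
  exact (hlim.eventually (lt_mem_nhds h)).exists

theorem measureReal_iUnion_le_of_sum_le {g : ℕ → ℝ} {r : ℝ} (hfg : ∀ i, μ.real (f i) ≤ g i)
    (hg : ∀ N, ∑ i ∈ Finset.range N, g i ≤ r) : μ.real (⋃ i, f i) ≤ r := by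
  by_contra! h
  rw [← Set.iUnion_accumulate] at h
  obtain ⟨n, hn⟩ := exists_lt_measureReal_of_lt_iUnion Set.monotone_accumulate h
  have hacc : Set.accumulate f n = ⋃ i ∈ Finset.range (n + 1), f i := by
    simp [Set.accumulate]
  rw [hacc] at hn
  have := (measureReal_biUnion_finset_le (μ := μ) (Finset.range (n + 1)) f).trans
    (Finset.sum_le_sum fun i _ => hfg i)
  linarith [hg (n + 1)]

end Continuity

section EffectiveMeasure

theorem measureReal_biUnion_cylinder {N : ℕ} {F : Finset (List Bool)}
    (hF : ∀ ρ ∈ F, ρ.length = N) :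
    μCantor.real (⋃ ρ ∈ F, _root_.cylinder ρ) = F.card * (1 / 2) ^ N := by
  rw [measureReal_biUnion_finset (fun ρ hρ ρ' hρ' hne =>
    disjoint_cylinder (by rw [hF ρ hρ, hF ρ' hρ']) hne) fun ρ _ => measurableSet_cylinder ρ,
    Finset.sum_congr rfl fun ρ hρ => by rw [real_μCantor_cylinder, hF ρ hρ]]
  simp

theorem openOf_eq_iUnion (V : Set (List Bool)) :
    openOf V = ⋃ N, {X | ∃ i ≤ N, strPrefix X i ∈ V} := by
  ext X
  simp only [mem_openOf_iff, Set.mem_iUnion, Set.mem_ofPred_eq]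
  exact ⟨fun ⟨n, h⟩ => ⟨n, n, le_rfl, h⟩, fun ⟨_, n, _, h⟩ => ⟨n, h⟩⟩

theorem lt_measureReal_openOf_iff {V : Set (List Bool)} {r : ℝ} :
    r < μCantor.real (openOf V) ↔ ∃ (N : ℕ) (F : List (List Bool)), F.Nodup ∧
      (∀ ρ ∈ F, ρ.length = N ∧ ∃ i ≤ N, ρ.take i ∈ V) ∧ r < F.length * (1 / 2) ^ N := by
  classical
  constructor
  · intro h
    rw [openOf_eq_iUnion] at h
    obtain ⟨N, hN⟩ := exists_lt_measureReal_of_lt_iUnion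
      (f := fun N => {X | ∃ i ≤ N, strPrefix X i ∈ V})
      (fun a b hab X ⟨i, hi, hX⟩ => ⟨i, hi.trans hab, hX⟩) h
    have hfin : {ρ : List Bool | ρ.length = N ∧ ∃ i ≤ N, ρ.take i ∈ V}.Finite :=
      (List.finite_length_eq Bool N).subset fun ρ h => h.1
    refine ⟨N, hfin.toFinset.toList, Finset.nodup_toList _, fun ρ hρ => by simpa using hρ, ?_⟩
    rw [Finset.length_toList, ← measureReal_biUnion_cylinder
      fun ρ hρ => (hfin.mem_toFinset.1 hρ).1]
    refine hN.trans_le (measureReal_mono (fun X ⟨i, hi, hX⟩ => ?_) (measure_ne_top _ _))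
    refine Set.mem_biUnion (hfin.mem_toFinset.2 ⟨length_strPrefix X N, i, hi, ?_⟩)
      (mem_cylinder_strPrefix X N)
    rwa [take_strPrefix X hi]
  · rintro ⟨N, F, hnodup, hF, hr⟩
    rw [← List.toFinset_card_of_nodup hnodup, ← measureReal_biUnion_cylinder
      fun ρ hρ => (hF ρ (List.mem_toFinset.1 hρ)).1] at hr
    refine hr.trans_le (measureReal_mono (Set.iUnion₂_subset fun ρ hρ X hX => ?_))
    obtain ⟨hlen, i, hi, hV⟩ := hF ρ (List.mem_toFinset.1 hρ)
    rw [mem_cylinder_iff, hlen] at hX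
    exact mem_openOf_iff.2 ⟨i, by rwa [← take_strPrefix X hi, hX]⟩

theorem compl_openOf_inter_cylinder (V : Set (List Bool)) (τ : List Bool) :
    (openOf V)ᶜ ∩ _root_.cylinder τ = (openOf (V ∪ {ρ | ρ.length = τ.length ∧ ρ ≠ τ}))ᶜ := by
  ext X
  simp only [Set.mem_inter_iff, Set.mem_compl_iff, mem_openOf_iff, mem_cylinder_iff,
    Set.mem_union, Set.mem_ofPred_eq, not_exists, not_or, length_strPrefix]
  refine ⟨fun ⟨hV, hτ⟩ n => ⟨hV n, fun ⟨hn, hne⟩ => hne (hn ▸ hτ)⟩, fun h => ⟨fun n => (h n).1, ?_⟩⟩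
  by_contra hne
  exact (h τ.length).2 ⟨rfl, hne⟩

variable {α : Type*} [Primcodable α]

theorem SigmaOneIn.measureReal_lt {V : α → List Bool → Prop}
    (hV : SigmaOneIn emptyOracle fun c : α × List Bool => V c.1 c.2) :
    SigmaOneIn emptyOracle fun c : α × List Bool × ℕ =>
      μCantor.real ((openOf {ρ | V c.1 ρ})ᶜ ∩ _root_.cylinder c.2.1) < (1 / 2) ^ c.2.2 := by
  have hcount : SigmaOneIn emptyOracle fun c : α × List Bool × ℕ =>
      ∃ (N : ℕ) (F : List (List Bool)), F.Nodup ∧ (∀ ρ ∈ F, ρ.length = N ∧ ∃ i ≤ N,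
        (V c.1 (ρ.take i) ∨ (ρ.take i).length = c.2.1.length ∧ ρ.take i ≠ c.2.1)) ∧
      2 ^ c.2.2 * 2 ^ N < 2 ^ N + 2 ^ c.2.2 * F.length := by
    refine .exists (.exists (.and (.nodup (by fun_prop)) (.and (.forall_mem (by fun_prop)
      (.and .eq (.exists (.and .le (.or ?_ (.and .eq .ne)))))) .lt)))
    exact hV.comp fun c : ((((α × List Bool × ℕ) × ℕ) × List (List Bool)) × List Bool) × ℕ =>
      (c.1.1.1.1.1, c.1.2.take c.2)
  refine hcount.of_iff fun ⟨a, τ, n⟩ => ?_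
  rw [compl_openOf_inter_cylinder, probReal_compl_eq_one_sub (measurableSet_openOf _),
    sub_lt_comm, lt_measureReal_openOf_iff]
  refine exists_congr fun N => exists_congr fun F => and_congr_right' (and_congr_right' ?_)
  rw [← Nat.cast_lt (α := ℝ), ← sub_pos, ← sub_pos (b := ((2 ^ n * 2 ^ N : ℕ) : ℝ))]
  have hscale : ((2 ^ N + 2 ^ n * F.length : ℕ) : ℝ) - (2 ^ n * 2 ^ N : ℕ) =
      2 ^ n * 2 ^ N * (F.length * (1 / 2) ^ N - (1 - (1 / 2) ^ n)) := by
    push_cast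
    simp only [one_div, inv_pow]
    field_simp
    ring
  rw [hscale, mul_pos_iff_of_pos_left (by positivity)]

end EffectiveMeasure

/-! ### Kraft–Chaitin and K-triviality -/

section Enumeration

variable {β : Type*} [Primcodable β]

theorem SigmaOneIn.exists_injective_enumeration {p : β → Prop} (h : SigmaOneIn emptyOracle p) :
    ∃ enum : ℕ → Option β, Computable enum ∧ (∀ b, p b ↔ ∃ i, enum i = some b) ∧
      ∀ i j b, enum i = some b → enum j = some b → i = j := by
  obtain ⟨g, hg, hp, -⟩ := h.exists_computable_test
  let first (b : β) (s : ℕ) : Bool := g (b, s) && !(List.range s).any fun t => g (b, t)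
  have hfirst : Computable fun q : β × ℕ => first q.1 q.2 :=
    computable_and hg (computable_not (computable_any_range (by fun_prop) (hg.comp
      (g := fun q : (β × ℕ) × ℕ => (q.1.1, q.2)) (by fun_prop))))
  have first_iff (b : β) (s : ℕ) :
      first b s = true ↔ g (b, s) = true ∧ ∀ t < s, ¬ g (b, t) = true := by simp [first]
  let enum (i : ℕ) : Option β := (Encodable.decode i.unpair.1).bind fun b =>
    bif Encodable.encode b == i.unpair.1 && first b i.unpair.2 then some b else none
  have henum (i : ℕ) (b : β) :
      enum i = some b ↔ Encodable.encode b = i.unpair.1 ∧ first b i.unpair.2 = true := by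
    simp only [enum, Option.bind_eq_some_iff, cond_eq_ite]
    constructor
    · rintro ⟨c, -, hc⟩
      split_ifs at hc with h
      obtain rfl := Option.some.inj hc
      simpa using h
    · exact fun h => ⟨b, by simp [← h.1], by simp [h]⟩
  refine ⟨enum, ?_, fun b => (hp b).trans ⟨fun hb => ?_, fun ⟨i, hi⟩ => ?_⟩, fun i j b hi hj => ?_⟩
  · refine Computable.option_bind (by fun_prop) (Computable.cond (computable_and ?_ ?_)
      (by fun_prop) (by fun_prop))
    · exact computable_beq (by fun_prop) (by fun_prop)
    · exact hfirst.comp (g := fun q : ℕ × β => (q.2, q.1.unpair.2)) (by fun_prop)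
  · refine ⟨Nat.pair (Encodable.encode b) (Nat.find hb), (henum _ _).2 ⟨by simp, ?_⟩⟩
    rw [Nat.unpair_pair, first_iff]
    exact ⟨Nat.find_spec hb, fun t => Nat.find_min hb⟩
  · exact ⟨_, ((first_iff _ _).1 ((henum _ _).1 hi).2).1⟩
  · simp only [henum, first_iff] at hi hj
    refine Nat.pairEquiv.symm.injective (Prod.ext (hi.1.symm.trans hj.1) ?_)
    exact le_antisymm (not_lt.1 fun h => hi.2.2 _ h hj.2.1) (not_lt.1 fun h => hj.2.2 _ h hi.2.1)

end Enumeration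

section PrefixFreeMachine

open Nat.Partrec (Code)

theorem exists_prefixFreeMachine {R : List Bool → ℕ → Prop}
    (hR : SigmaOneIn emptyOracle fun c : List Bool × ℕ => R c.1 c.2)
    (huniq : ∀ σ x y, R σ x → R σ y → x = y) (hfree : PrefixFreeSet {σ | ∃ x, R σ x}) :
    ∃ e, PrefixFreeMachine e ∧
      ∀ σ x, x ∈ (Denumerable.ofNat Code e).eval (Encodable.encode σ) ↔ R σ x := by
  obtain ⟨e, he⟩ := exists_code_eval_iff
    (Q := fun n x => ∃ σ : List Bool, Encodable.encode σ = n ∧ R σ x)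
    (.exists (.and .eq (hR.comp fun c : (ℕ × ℕ) × List Bool => (c.2, c.1.2))))
    (by rintro _ x y ⟨σ, rfl, hx⟩ ⟨τ, hτ, hy⟩
        exact huniq σ x y hx (Encodable.encode_injective hτ ▸ hy))
  have heval (σ : List Bool) (x : ℕ) :
      x ∈ (Denumerable.ofNat Code e).eval (Encodable.encode σ) ↔ R σ x := by
    simp [he]
  refine ⟨e, ?_, heval⟩
  have hdom : machineDom e = {σ | ∃ x, R σ x} := by
    ext σ
    simp only [machineDom, Set.mem_ofPred_eq, Part.dom_iff_mem, heval]
  rwa [PrefixFreeMachine, hdom]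

theorem Kcpx_le {e : ℕ} {σ : List Bool} {x : ℕ} (he : PrefixFreeMachine e)
    (hx : x ∈ (Denumerable.ofNat Code e).eval (Encodable.encode σ)) :
    Kcpx x ≤ σ.length + 2 * e + 2 :=
  Nat.sInf_le ⟨e, σ, he, hx, rfl⟩

theorem exists_description (x : ℕ) : ∃ e, ∃ σ : List Bool, PrefixFreeMachine e ∧
    x ∈ (Denumerable.ofNat Code e).eval (Encodable.encode σ) ∧
    Kcpx x = σ.length + 2 * e + 2 := by
  obtain ⟨e, hfree, he⟩ := exists_prefixFreeMachine (R := fun σ y => σ = [] ∧ y = x)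
    (.and .eq .eq) (fun σ y z hy hz => hy.2.trans hz.2.symm)
    (fun σ ⟨_, hσ, _⟩ τ ⟨_, hτ, _⟩ _ => hσ.trans hτ.symm)
  exact Nat.sInf_mem (s := {k | ∃ e, ∃ σ : List Bool, PrefixFreeMachine e ∧
    x ∈ (Denumerable.ofNat Code e).eval (Encodable.encode σ) ∧ k = σ.length + 2 * e + 2})
    ⟨_, e, [], hfree, (he _ _).2 ⟨rfl, rfl⟩, rfl⟩

end PrefixFreeMachine

section KraftChaitin

theorem exists_binaryValue_eq {l v : ℕ} (h : v < 2 ^ l) :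
    ∃ σ : List Bool, σ.length = l ∧ binaryValue σ = v := by
  induction l generalizing v with
  | zero => exact ⟨[], rfl, by rw [binaryValue_nil]; lia⟩
  | succ l ih =>
    obtain ⟨σ, hlen, hval⟩ := ih (v := v / 2) (by lia)
    refine ⟨σ ++ [decide (v % 2 = 1)], by simp [hlen], ?_⟩
    rw [binaryValue_concat, hval]
    by_cases hv : v % 2 = 1 <;> simp only [hv, natOfBool, decide_true, decide_false, cond_true,
      cond_false] <;> lia

theorem binaryValue_append (σ ρ : List Bool) :
    binaryValue (σ ++ ρ) = binaryValue σ * 2 ^ ρ.length + binaryValue ρ := by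
  induction ρ using List.reverseRecOn with
  | nil => simp [binaryValue_nil]
  | append_singleton ρ b ih =>
    rw [← List.append_assoc, binaryValue_concat, binaryValue_concat, ih, List.length_append,
      List.length_singleton, pow_succ]
    ring

@[fun_prop] theorem computable_binaryValue {α : Type*} [Primcodable α] {f : α → List Bool}
    (hf : Computable f) : Computable fun a => binaryValue (f a) := by
  have hstep : Primrec fun p : List Bool × ℕ × Bool => 2 * p.2.1 + natOfBool p.2.2 :=
    Primrec.nat_add.comp
      (Primrec.nat_mul.comp (Primrec.const 2) (Primrec.fst.comp Primrec.snd))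
      (Primrec.cond (Primrec.snd.comp Primrec.snd) (Primrec.const 1) (Primrec.const 0))
  exact (Primrec.list_foldl (h := fun _ p => 2 * p.1 + natOfBool p.2) Primrec.id
    (Primrec.const 0) hstep).to_comp.comp hf

/-- The dyadic rational with binary expansion `0.σ`. -/
noncomputable def binaryFraction (σ : List Bool) : ℝ := binaryValue σ / 2 ^ σ.length

theorem binaryFraction_append (σ ρ : List Bool) :
    binaryFraction (σ ++ ρ) = binaryFraction σ + binaryFraction ρ * (1 / 2) ^ σ.length := by
  simp only [binaryFraction, binaryValue_append, List.length_append, pow_add, one_div, inv_pow]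
  push_cast
  field_simp

theorem binaryFraction_nonneg (σ : List Bool) : 0 ≤ binaryFraction σ := by
  unfold binaryFraction; positivity

theorem binaryFraction_lt_one (σ : List Bool) : binaryFraction σ < 1 := by
  rw [binaryFraction, div_lt_one (by positivity)]
  exact_mod_cast binaryValue_lt σ

@[fun_prop] theorem computable_sum_range {α : Type*} [Primcodable α] {f : α → ℕ} {g : α → ℕ → ℕ}
    (hf : Computable f) (hg : Computable fun c : α × ℕ => g c.1 c.2) :
    Computable fun a => ∑ i ∈ Finset.range (f a), g a i := by
  refine (computable_natRec (h := fun a i v => v + g a i) hf (Computable.const 0) ?_).of_eq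
    fun a => ?_
  · have := hg.comp (g := fun p : α × ℕ × ℕ => (p.1, p.2.1)) (by fun_prop)
    fun_prop
  · induction f a with
    | zero => rfl
    | succ n ih => simp only [ih, Finset.sum_range_succ]

/-- The left endpoint of the interval of length `(1/2) ^ len i` that the Kraft–Chaitin
construction reserves for the `i`-th request. -/
noncomputable def kraftSum (len : ℕ → ℕ) (i : ℕ) : ℝ :=
  ∑ j ∈ Finset.range i, (1 / 2) ^ len j

/-- `σ` is the code word of the `i`-th request: the dyadic interval of `σ` is the leftmost one
of its length inside the interval reserved for that request. -/
def IsKraftCode (len : ℕ → ℕ) (i : ℕ) (σ : List Bool) : Prop :=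
  σ.length = len i + 1 ∧ kraftSum len i ≤ binaryFraction σ ∧
    binaryFraction σ < kraftSum len i + (1 / 2) ^ σ.length

variable {len : ℕ → ℕ}

theorem kraftSum_succ (i : ℕ) : kraftSum len (i + 1) = kraftSum len i + (1 / 2) ^ len i :=
  Finset.sum_range_succ ..

theorem monotone_kraftSum : Monotone (kraftSum len) :=
  monotone_nat_of_le_succ fun i => by
    rw [kraftSum_succ]; exact le_add_of_nonneg_right (by positivity)

theorem IsKraftCode.add_le {i : ℕ} {σ : List Bool} (h : IsKraftCode len i σ) :
    binaryFraction σ + (1 / 2) ^ σ.length ≤ kraftSum len (i + 1) := by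
  obtain ⟨hlen, -, hlt⟩ := h
  have hhalf : ((1 : ℝ) / 2) ^ len i = 2 * (1 / 2) ^ σ.length := by rw [hlen]; ring
  rw [kraftSum_succ, hhalf]
  linarith

theorem IsKraftCode.eq_of_prefix {i j : ℕ} {σ τ : List Bool} (hσ : IsKraftCode len i σ)
    (hτ : IsKraftCode len j τ) (h : σ <+: τ) : i = j := by
  obtain ⟨ρ, rfl⟩ := h
  have hpos : (0 : ℝ) < (1 / 2) ^ σ.length := by positivity
  have hpos' : (0 : ℝ) < (1 / 2) ^ (σ ++ ρ).length := by positivity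
  have hle : 0 ≤ binaryFraction ρ * (1 / 2) ^ σ.length :=
    mul_nonneg (binaryFraction_nonneg ρ) hpos.le
  have hlt : binaryFraction ρ * (1 / 2) ^ σ.length < (1 / 2) ^ σ.length :=
    mul_lt_of_lt_one_left hpos (binaryFraction_lt_one ρ)
  have happ := binaryFraction_append σ ρ
  rcases lt_trichotomy i j with hij | rfl | hij
  · linarith [monotone_kraftSum (len := len) (Nat.succ_le_of_lt hij), hσ.add_le, hτ.2.1]
  · rfl
  · linarith [monotone_kraftSum (len := len) (Nat.succ_le_of_lt hij), hτ.add_le, hσ.2.1]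

theorem exists_isKraftCode (hsum : ∀ n, kraftSum len n ≤ 1) (i : ℕ) :
    ∃ σ, IsKraftCode len i σ := by
  set l := len i + 1 with hl
  have hpos : (0 : ℝ) < 2 ^ l := by positivity
  have hnonneg : 0 ≤ kraftSum len i := Finset.sum_nonneg fun _ _ => by positivity
  set v := ⌈kraftSum len i * 2 ^ l⌉₊
  have hlt : (v : ℝ) < kraftSum len i * 2 ^ l + 1 := Nat.ceil_lt_add_one (by positivity)
  have hroom : kraftSum len i * 2 ^ l + 2 ≤ 2 ^ l := by
    have h := mul_le_mul_of_nonneg_right (hsum (i + 1)) hpos.le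
    rw [kraftSum_succ, add_mul, one_mul] at h
    have hhalf : ((1 : ℝ) / 2) ^ len i * 2 ^ l = 2 := by
      rw [hl, one_div, inv_pow, pow_succ]; field_simp
    rwa [hhalf] at h
  obtain ⟨σ, hlen, hval⟩ := exists_binaryValue_eq (l := l) (v := v) <| by
    exact_mod_cast (show (v : ℝ) < 2 ^ l by linarith)
  refine ⟨σ, hlen, ?_, ?_⟩ <;> rw [binaryFraction, hval, hlen]
  · exact (le_div_iff₀ hpos).2 (Nat.le_ceil _)
  · rw [div_lt_iff₀ hpos, add_mul, one_div, inv_pow, inv_mul_cancel₀ hpos.ne']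
    exact hlt

theorem kraftSum_eq_div (i : ℕ) : kraftSum len i =
    ((∑ j ∈ Finset.range i, 2 ^ (∑ k ∈ Finset.range i, len k - len j) : ℕ) : ℝ) /
      2 ^ ∑ k ∈ Finset.range i, len k := by
  push_cast
  rw [kraftSum, Finset.sum_div]
  refine Finset.sum_congr rfl fun j hj => ?_
  rw [pow_sub₀ _ two_ne_zero (Finset.single_le_sum (fun _ _ => Nat.zero_le _) hj), one_div, inv_pow]
  field_simp

theorem SigmaOneIn.isKraftCode {X : ℕ → Bool} (hlen : Computable len) :
    SigmaOneIn X fun c : ℕ × List Bool => IsKraftCode len c.1 c.2 := by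
  let D (i : ℕ) : ℕ := ∑ k ∈ Finset.range i, len k
  let N (i : ℕ) : ℕ := ∑ j ∈ Finset.range i, 2 ^ (D i - len j)
  have hD : Computable D := by fun_prop
  have hN : Computable N := by fun_prop
  have h : SigmaOneIn X fun c : ℕ × List Bool => c.2.length = len c.1 + 1 ∧
      N c.1 * 2 ^ c.2.length ≤ binaryValue c.2 * 2 ^ D c.1 ∧
      binaryValue c.2 * 2 ^ D c.1 < N c.1 * 2 ^ c.2.length + 2 ^ D c.1 :=
    .and .eq (.and .le .lt)
  refine h.of_iff fun ⟨i, σ⟩ => and_congr_right fun _ => ?_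
  have hsum : kraftSum len i = (N i : ℝ) / 2 ^ D i := kraftSum_eq_div i
  have hpos : (0 : ℝ) < 2 ^ D i := by positivity
  have hpos' : (0 : ℝ) < 2 ^ σ.length := by positivity
  have hadd : (N i : ℝ) / 2 ^ D i + (1 / 2) ^ σ.length =
      (N i * 2 ^ σ.length + 2 ^ D i) / (2 ^ D i * 2 ^ σ.length) := by
    rw [one_div, inv_pow]; field_simp
  rw [hsum, hadd, binaryFraction, div_le_div_iff₀ hpos hpos', div_lt_div_iff₀ hpos' (by positivity),
    mul_comm (2 ^ D i) (2 ^ σ.length), ← mul_assoc, mul_right_comm, mul_lt_mul_iff_left₀ hpos']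
  norm_cast

theorem exists_Kcpx_le_of_kraftSum_le_one {β : Type*} [Primcodable β] {enum : ℕ → Option β}
    (henum : Computable enum) (hlen : Computable len) (hsum : ∀ n, kraftSum len n ≤ 1) :
    ∃ c, ∀ i b, enum i = some b → Kcpx (Encodable.encode b) ≤ len i + c := by
  obtain ⟨e, hfree, he⟩ := exists_prefixFreeMachine
    (R := fun σ x => ∃ i, IsKraftCode len i σ ∧ ∃ b, enum i = some b ∧ Encodable.encode b = x)
    (.exists (.and ((SigmaOneIn.isKraftCode hlen).comp fun c : (List Bool × ℕ) × ℕ => (c.2, c.1.1))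
      (.exists (.and .eq .eq))))
    (by rintro σ _ _ ⟨i, hi, b, hb, rfl⟩ ⟨j, hj, b', hb', rfl⟩
        obtain rfl := hi.eq_of_prefix hj (List.prefix_refl σ)
        rw [Option.some.inj (hb.symm.trans hb')])
    (by rintro σ ⟨_, i, hi, -⟩ τ ⟨_, j, hj, -⟩ hστ
        obtain rfl := hi.eq_of_prefix hj hστ
        exact hστ.eq_of_length (hi.1.trans hj.1.symm))
  refine ⟨2 * e + 3, fun i b hb => ?_⟩
  obtain ⟨σ, hσ⟩ := exists_isKraftCode hsum i
  have := Kcpx_le hfree ((he σ _).2 ⟨i, hσ, b, hb, rfl⟩)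
  have := hσ.1
  lia

-- Stages of the enumeration that produce no request are padded with dummy requests of total weight
-- at most `1/2`.
theorem kraftSum_padded_le_one {β : Type*} {enum : ℕ → Option β} (w : β → ℕ)
    (hinj : ∀ i j b, enum i = some b → enum j = some b → i = j)
    (hsum : ∀ F : Finset β, (∀ b ∈ F, ∃ i, enum i = some b) →
      ∑ b ∈ F, (1 / 2 : ℝ) ^ w b ≤ 1 / 2) (n : ℕ) :
    kraftSum (fun i => ((enum i).map w).getD (i + 2)) n ≤ 1 := by
  classical
  have hweight (i : ℕ) : (1 / 2 : ℝ) ^ ((enum i).map w).getD (i + 2) ≤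
      (∑ b ∈ (enum i).toFinset, (1 / 2) ^ w b) + 1 / 4 * (1 / 2) ^ i := by
    cases enum i with
    | none =>
      rw [Option.map_none, Option.getD_none, Option.toFinset_none, Finset.sum_empty, pow_add]
      linarith
    | some b =>
      rw [Option.map_some, Option.getD_some, Option.toFinset_some, Finset.sum_singleton]
      exact le_add_of_nonneg_right (by positivity)
  let F : Finset β := (Finset.range n).biUnion fun i => (enum i).toFinset
  have hdisj : Set.PairwiseDisjoint (Finset.range n : Set ℕ) fun i => (enum i).toFinset :=
    fun i _ j _ hij => Finset.disjoint_left.2 fun b hi hj =>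
      hij (hinj i j b (by simpa using hi) (by simpa using hj))
  have hF : ∑ b ∈ F, (1 / 2 : ℝ) ^ w b ≤ 1 / 2 := hsum F fun b hb => by
    obtain ⟨i, -, hi⟩ := Finset.mem_biUnion.1 hb
    exact ⟨i, by simpa using hi⟩
  calc kraftSum (fun i => ((enum i).map w).getD (i + 2)) n
    _ ≤ ∑ i ∈ Finset.range n, ((∑ b ∈ (enum i).toFinset, (1 / 2) ^ w b) + 1 / 4 * (1 / 2) ^ i) :=
        Finset.sum_le_sum fun i _ => hweight i
    _ = ∑ b ∈ F, (1 / 2 : ℝ) ^ w b + 1 / 4 * ∑ i ∈ Finset.range n, (1 / 2 : ℝ) ^ i := by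
        rw [Finset.sum_add_distrib, Finset.sum_biUnion hdisj, Finset.mul_sum]
    _ ≤ 1 / 2 + 1 / 4 * 2 := by gcongr; exact sum_geometric_two_le n
    _ = 1 := by norm_num

theorem kraft_chaitin {β : Type*} [Primcodable β] {V : β × ℕ → Prop}
    (hV : SigmaOneIn emptyOracle V) (c : ℕ)
    (hsum : ∀ F : Finset (β × ℕ), (∀ p ∈ F, V p) → ∑ p ∈ F, (1 / 2 : ℝ) ^ p.2 ≤ 2 ^ c) :
    ∃ d, ∀ p, V p → Kcpx (Encodable.encode p.1) ≤ p.2 + d := by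
  obtain ⟨enum, henum, hVenum, hinj⟩ := hV.exists_injective_enumeration
  let w (p : β × ℕ) : ℕ := p.2 + (c + 1)
  have hlen : Computable fun i => ((enum i).map w).getD (i + 2) := Computable.option_getD
    (Computable.option_map henum (show Computable fun q : ℕ × β × ℕ => q.2.2 + (c + 1) by fun_prop))
    (by fun_prop)
  have hw (F : Finset (β × ℕ)) (hF : ∀ p ∈ F, ∃ i, enum i = some p) :
      ∑ p ∈ F, (1 / 2 : ℝ) ^ w p ≤ 1 / 2 := by
    calc ∑ p ∈ F, (1 / 2 : ℝ) ^ w p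
      _ = (∑ p ∈ F, (1 / 2 : ℝ) ^ p.2) * (1 / 2) ^ (c + 1) := by
          simp only [w, pow_add _ _ (c + 1), Finset.sum_mul]
      _ ≤ 2 ^ c * (1 / 2) ^ (c + 1) := by
          gcongr; exact hsum F fun p hp => (hVenum p).2 (hF p hp)
      _ = 1 / 2 := by rw [pow_succ, ← mul_assoc, ← mul_pow]; norm_num
  obtain ⟨d, hd⟩ := exists_Kcpx_le_of_kraftSum_le_one (enum := fun i => (enum i).map Prod.fst)
    (Computable.option_map henum (show Computable fun q : ℕ × β × ℕ => q.2.1 by fun_prop)) hlen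
    (kraftSum_padded_le_one w hinj hw)
  refine ⟨c + 1 + d, fun p hp => ?_⟩
  obtain ⟨i, hi⟩ := (hVenum p).1 hp
  have := hd i p.1 (by rw [hi, Option.map_some])
  rw [hi, Option.map_some, Option.getD_some] at this
  lia

end KraftChaitin

section KraftInequality

theorem sum_half_pow_length_le_one {F : Finset (List Bool)}
    (hF : PrefixFreeSet (F : Set (List Bool))) : ∑ σ ∈ F, (1 / 2 : ℝ) ^ σ.length ≤ 1 := by
  have hdisj : (F : Set (List Bool)).PairwiseDisjoint _root_.cylinder := fun σ hσ τ hτ hne =>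
    Set.disjoint_left.2 fun X hXσ hXτ => hne <| by
      rw [mem_cylinder_iff] at hXσ hXτ
      rcases le_total σ.length τ.length with h | h
      · refine hF σ hσ τ hτ ?_
        rw [← hXσ, ← hXτ, ← take_strPrefix X h]
        exact List.take_prefix _ _
      · refine (hF τ hτ σ hσ ?_).symm
        rw [← hXσ, ← hXτ, ← take_strPrefix X h]
        exact List.take_prefix _ _
  calc ∑ σ ∈ F, (1 / 2 : ℝ) ^ σ.length
    _ = ∑ σ ∈ F, μCantor.real (_root_.cylinder σ) :=
        Finset.sum_congr rfl fun σ _ => (real_μCantor_cylinder σ).symm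
    _ = μCantor.real (⋃ σ ∈ F, _root_.cylinder σ) :=
        (measureReal_biUnion_finset hdisj fun σ _ => measurableSet_cylinder σ).symm
    _ ≤ 1 := measureReal_le_one

theorem sum_half_pow_description_le_one {F : Finset (ℕ × List Bool)}
    (hF : ∀ e, PrefixFreeSet {σ | (e, σ) ∈ F}) :
    ∑ p ∈ F, (1 / 2 : ℝ) ^ (p.2.length + 2 * p.1 + 2) ≤ 1 := by
  classical
  have hfiber (e : ℕ) : ∑ p ∈ F with p.1 = e, (1 / 2 : ℝ) ^ p.2.length ≤ 1 := by
    have hinj : Set.InjOn Prod.snd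
        ((F.filter fun p => p.1 = e : Finset (ℕ × List Bool)) : Set (ℕ × List Bool)) := by
      intro p hp q hq h
      simp only [Finset.coe_filter, Set.mem_ofPred_eq] at hp hq
      exact Prod.ext (hp.2.trans hq.2.symm) h
    rw [← Finset.sum_image (f := fun σ : List Bool => (1 / 2 : ℝ) ^ σ.length) hinj]
    refine sum_half_pow_length_le_one fun σ hσ τ hτ h => hF e σ ?_ τ ?_ h
    · simpa using hσ
    · simpa using hτ
  calc ∑ p ∈ F, (1 / 2 : ℝ) ^ (p.2.length + 2 * p.1 + 2)
    _ ≤ ∑ p ∈ F, (1 / 2) ^ (p.1 + 1) * (1 / 2 : ℝ) ^ p.2.length := by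
        refine Finset.sum_le_sum fun p _ => ?_
        rw [← pow_add]
        exact pow_le_pow_of_le_one (by norm_num) (by norm_num) (by lia)
    _ = ∑ e ∈ F.image Prod.fst, (1 / 2) ^ (e + 1) *
          ∑ p ∈ F with p.1 = e, (1 / 2 : ℝ) ^ p.2.length := by
        rw [← Finset.sum_fiberwise_of_maps_to fun p hp => Finset.mem_image_of_mem Prod.fst hp]
        refine Finset.sum_congr rfl fun e _ => ?_
        rw [Finset.mul_sum]
        exact Finset.sum_congr rfl fun p hp => by rw [(Finset.mem_filter.1 hp).2]
    _ ≤ ∑ e ∈ F.image Prod.fst, (1 / 2 : ℝ) ^ (e + 1) :=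
        Finset.sum_le_sum fun e _ => mul_le_of_le_one_right (by positivity) (hfiber e)
    _ = (∑ e ∈ F.image Prod.fst, (1 / 2 : ℝ) ^ e) * (1 / 2) := by
        simp only [pow_succ, Finset.sum_mul]
    _ ≤ 2 * (1 / 2) := by
        gcongr
        exact (summable_geometric_two.sum_le_tsum _ fun _ _ => by positivity).trans_eq
          tsum_geometric_two
    _ = 1 := by norm_num

end KraftInequality

section ApparentDescription

open Nat.Partrec (Code)

/-- The `e`-th machine has not yet violated prefix-freeness after `s` steps of computation. Unlike
`PrefixFreeMachine e`, this is decidable. -/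
def LooksPrefixFree (e s : ℕ) : Prop :=
  PrefixFreeSet {σ | (Code.evaln s (Denumerable.ofNat Code e) (Encodable.encode σ)).isSome = true}

/-- `x` has a description of cost `k` by a machine that still looks prefix-free when it halts.
This is a c.e. substitute for `Kcpx x = k`. -/
def HasApparentDescription (x k : ℕ) : Prop :=
  ∃ (e : ℕ) (σ : List Bool) (s : ℕ),
    Code.evaln s (Denumerable.ofNat Code e) (Encodable.encode σ) = some x ∧
    LooksPrefixFree e s ∧ k = σ.length + 2 * e + 2

theorem PrefixFreeMachine.looksPrefixFree {e : ℕ} (h : PrefixFreeMachine e) (s : ℕ) :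
    LooksPrefixFree e s := by
  have hdom {σ : List Bool}
      (hσ : (Code.evaln s (Denumerable.ofNat Code e) (Encodable.encode σ)).isSome = true) :
      σ ∈ machineDom e := by
    obtain ⟨x, hx⟩ := Option.isSome_iff_exists.1 hσ
    exact Part.dom_iff_mem.2 ⟨x, Code.evaln_sound hx⟩
  exact fun σ hσ τ hτ => h σ (hdom hσ) τ (hdom hτ)

theorem DeltaOneIn.looksPrefixFree {X : ℕ → Bool} :
    DeltaOneIn X fun c : ℕ × ℕ => LooksPrefixFree c.1 c.2 := by
  let strings (s : ℕ) : List (List Bool) := (List.range s).filterMap Encodable.decode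
  have hstrings : Computable strings := Primrec.to_comp <|
    Primrec.listFilterMap Primrec.list_range (Primrec.decode.comp Primrec.snd)
  have hmem {e s : ℕ} {σ : List Bool}
      (h : (Code.evaln s (Denumerable.ofNat Code e) (Encodable.encode σ)).isSome = true) :
      σ ∈ strings s := by
    obtain ⟨x, hx⟩ := Option.isSome_iff_exists.1 h
    exact List.mem_filterMap.2
      ⟨_, List.mem_range.2 (Code.evaln_bound hx), Encodable.encodek σ⟩
  have h : DeltaOneIn X fun c : ℕ × ℕ => ∀ σ ∈ strings c.2, ∀ τ ∈ strings c.2,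
      (Code.evaln c.2 (Denumerable.ofNat Code c.1) (Encodable.encode σ)).isSome = true →
      (Code.evaln c.2 (Denumerable.ofNat Code c.1) (Encodable.encode τ)).isSome = true →
      σ = τ.take σ.length → σ = τ :=
    .forall_mem (by fun_prop) (.forall_mem (by fun_prop) (.imp (.of_computable (by fun_prop))
      (.imp (.of_computable (by fun_prop)) (.imp .eq .eq))))
  refine h.of_iff fun c => ?_
  simp only [LooksPrefixFree, PrefixFreeSet, List.prefix_iff_eq_take, Set.mem_ofPred_eq]
  exact ⟨fun H σ _ τ _ hσ hτ => H σ hσ τ hτ, fun H σ hσ τ hτ => H σ (hmem hσ) τ (hmem hτ) hσ hτ⟩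

theorem SigmaOneIn.hasApparentDescription {X : ℕ → Bool} :
    SigmaOneIn X fun c : ℕ × ℕ => HasApparentDescription c.1 c.2 :=
  .exists (.exists (.exists (.and .eq (.and
    (DeltaOneIn.looksPrefixFree.1.comp fun c : (((ℕ × ℕ) × ℕ) × List Bool) × ℕ => (c.1.1.2, c.2))
    .eq))))

theorem hasApparentDescription_Kcpx (x : ℕ) : HasApparentDescription x (Kcpx x) := by
  obtain ⟨e, σ, hfree, hx, hk⟩ := exists_description x
  obtain ⟨s, hs⟩ := Code.evaln_complete.1 hx
  exact ⟨e, σ, s, hs, hfree.looksPrefixFree s, hk⟩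

theorem sum_half_pow_le_one_of_hasApparentDescription {F : Finset (ℕ × ℕ)}
    (hF : ∀ p ∈ F, HasApparentDescription p.1 p.2) : ∑ p ∈ F, (1 / 2 : ℝ) ^ p.2 ≤ 1 := by
  classical
  choose! e σ s heval hfree hcost using hF
  have heq {p q : ℕ × ℕ} (hp : p ∈ F) (hq : q ∈ F) (he : e p = e q) (hσ : σ p <+: σ q) :
      p = q := by
    have hp' := Code.evaln_mono (le_max_left (s p) (s q)) (heval p hp)
    have hq' := Code.evaln_mono (le_max_right (s p) (s q)) (heval q hq)
    have hlooks : LooksPrefixFree (e p) (max (s p) (s q)) := by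
      rcases le_total (s p) (s q) with h | h
      · rw [max_eq_right h, he]; exact hfree q hq
      · rw [max_eq_left h]; exact hfree p hp
    have hσ' : σ p = σ q := hlooks _ (Option.isSome_iff_exists.2 ⟨_, hp'⟩) _
      (Option.isSome_iff_exists.2 ⟨_, he ▸ hq'⟩) hσ
    rw [he, hσ'] at hp'
    exact Prod.ext (Option.some.inj (hp'.symm.trans hq'))
      (by rw [hcost p hp, hcost q hq, he, hσ'])
  have hinj : Set.InjOn (fun p => (e p, σ p)) F := fun p hp q hq h =>
    heq hp hq (Prod.mk.inj h).1 ((Prod.mk.inj h).2 ▸ List.prefix_refl _)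
  calc ∑ p ∈ F, (1 / 2 : ℝ) ^ p.2
    _ = ∑ p ∈ F, (1 / 2 : ℝ) ^ ((σ p).length + 2 * e p + 2) :=
        Finset.sum_congr rfl fun p hp => by rw [← hcost p hp]
    _ = ∑ d ∈ F.image fun p => (e p, σ p), (1 / 2 : ℝ) ^ (d.2.length + 2 * d.1 + 2) :=
        (Finset.sum_image (f := fun d : ℕ × List Bool =>
          (1 / 2 : ℝ) ^ (d.2.length + 2 * d.1 + 2)) hinj).symm
    _ ≤ 1 := by
        refine sum_half_pow_description_le_one fun i τ hτ τ' hτ' h => ?_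
        obtain ⟨p, hp, hpτ⟩ := Finset.mem_image.1 hτ
        obtain ⟨q, hq, hqτ⟩ := Finset.mem_image.1 hτ'
        obtain ⟨rfl, rfl⟩ := Prod.mk.inj hpτ
        obtain ⟨he, rfl⟩ := Prod.mk.inj hqτ
        rw [heq hp hq he.symm h]

end ApparentDescription

section KTrivial

@[fun_prop] theorem computable_replicate {α β : Type*} [Primcodable α] [Primcodable β]
    {f : α → ℕ} {g : α → β} (hf : Computable f) (hg : Computable g) :
    Computable fun a => List.replicate (f a) (g a) := by
  refine (computable_natRec (h := fun a _ l => g a :: l) hf (Computable.const []) ?_).of_eq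
    fun a => ?_
  · fun_prop
  · induction f a with
    | zero => rfl
    | succ n ih => simp only [ih, List.replicate_succ]

/-- `HasApparentDescription` for the unary numeral `1^m`. -/
def HasApparentLengthDescription (m k : ℕ) : Prop :=
  HasApparentDescription (Encodable.encode (List.replicate m true)) k

theorem SigmaOneIn.hasApparentLengthDescription {X : ℕ → Bool} :
    SigmaOneIn X fun c : ℕ × ℕ => HasApparentLengthDescription c.1 c.2 :=
  SigmaOneIn.hasApparentDescription.comp
    fun c : ℕ × ℕ => (Encodable.encode (List.replicate c.1 true), c.2)

theorem sum_half_pow_le_one_of_hasApparentLengthDescription {F : Finset (ℕ × ℕ)}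
    (hF : ∀ p ∈ F, HasApparentLengthDescription p.1 p.2) : ∑ p ∈ F, (1 / 2 : ℝ) ^ p.2 ≤ 1 := by
  classical
  let code (p : ℕ × ℕ) : ℕ × ℕ := (Encodable.encode (List.replicate p.1 true), p.2)
  have hinj : Function.Injective code := fun p q h => Prod.ext
    (by simpa using congrArg List.length (Encodable.encode_injective (Prod.mk.inj h).1))
    (Prod.mk.inj h).2
  rw [← Finset.sum_image (f := fun p : ℕ × ℕ => (1 / 2 : ℝ) ^ p.2) (g := code) hinj.injOn]
  refine sum_half_pow_le_one_of_hasApparentDescription fun p hp => ?_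
  obtain ⟨q, hq, rfl⟩ := Finset.mem_image.1 hp
  exact hF q hq

theorem kTrivial_of_requests {W : List Bool × ℕ → Prop} (hW : SigmaOneIn emptyOracle W) (c : ℕ)
    (hsum : ∀ F : Finset (List Bool × ℕ), (∀ p ∈ F, W p) → ∑ p ∈ F, (1 / 2 : ℝ) ^ p.2 ≤ 2 ^ c)
    {A : ℕ → Bool} (hA : ∀ m k, HasApparentLengthDescription m k → W (strPrefix A m, k)) :
    KTrivial A := by
  obtain ⟨d, hd⟩ := kraft_chaitin hW c hsum
  exact ⟨d, fun n => hd _ (hA n _ (hasApparentDescription_Kcpx _))⟩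

end KTrivial

/-! ### Minimal hits -/

section Hits

/-- The requests `(m, k)` of `HasApparentLengthDescription` that have been found by stage `s` of a
fixed computable enumeration. -/
def RequestedBy (s m k : ℕ) : Prop :=
  Classical.choose
    (SigmaOneIn.hasApparentLengthDescription (X := emptyOracle)).exists_computable_test
    ((m, k), s) = true

theorem DeltaOneIn.requestedBy {X : ℕ → Bool} :
    DeltaOneIn X fun c : ℕ × ℕ × ℕ => RequestedBy c.1 c.2.1 c.2.2 :=
  (DeltaOneIn.of_computable (Classical.choose_spec
    SigmaOneIn.hasApparentLengthDescription.exists_computable_test).1).comp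
      fun c : ℕ × ℕ × ℕ => ((c.2.1, c.2.2), c.1)

theorem hasApparentLengthDescription_iff {m k : ℕ} :
    HasApparentLengthDescription m k ↔ ∃ s, RequestedBy s m k :=
  (Classical.choose_spec
    SigmaOneIn.hasApparentLengthDescription.exists_computable_test).2.1 (m, k)

theorem RequestedBy.mono {s t m k : ℕ} (hst : s ≤ t) (h : RequestedBy s m k) : RequestedBy t m k :=
  (Classical.choose_spec
    SigmaOneIn.hasApparentLengthDescription.exists_computable_test).2.2 (m, k) s t hst h

/-- The `i`-th position of the block reserved for the string `y` and the number `k`. -/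
def blockPosition (y : List Bool) (k i : ℕ) : ℕ := Nat.pair (Nat.pair k (Encodable.encode y)) i

/-- The block of `k + n + 1` positions reserved for `y` and `k`; a random sequence vanishes on it
with probability `2^{-(k+n+1)}`. -/
def block (n : ℕ) (p : List Bool × ℕ) : Finset ℕ :=
  (Finset.range (p.2 + n + 1)).image (blockPosition p.1 p.2)

theorem card_block (n : ℕ) (p : List Bool × ℕ) : (block n p).card = p.2 + n + 1 := by
  have hinj : Function.Injective (blockPosition p.1 p.2) := fun i j h => (Nat.pair_eq_pair.1 h).2
  rw [block, Finset.card_image_of_injective _ hinj, Finset.card_range]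

theorem pairwise_disjoint_block (n : ℕ) : Pairwise (Function.onFun Disjoint (block n)) := by
  refine fun p q hpq => Finset.disjoint_left.2 fun j hp hq => hpq ?_
  obtain ⟨i, -, rfl⟩ := Finset.mem_image.1 hp
  obtain ⟨i', -, h⟩ := Finset.mem_image.1 hq
  obtain ⟨hk, hy⟩ := Nat.pair_eq_pair.1 (Nat.pair_eq_pair.1 h).1
  exact (Prod.ext (Encodable.encode_injective hy) hk).symm

theorem mem_zeroOn_block {n : ℕ} {p : List Bool × ℕ} {R : ℕ → Bool} :
    R ∈ zeroOn (block n p) ↔ ∀ i < p.2 + n + 1, R (blockPosition p.1 p.2 i) = false := by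
  simp [zeroOn, block]

/-- `σ` vanishes on the block of `(x ↾ m, k)` for some request `(m, k)` found by stage `|σ|`. -/
def IsHit (n : ℕ) (x σ : List Bool) : Prop :=
  ∃ m < σ.length, ∃ k < σ.length, RequestedBy σ.length m k ∧
    ∀ i < k + n + 1, σ[blockPosition (x.take m) k i]? = some false

/-- `σ` is the first initial segment of itself that is a hit. -/
def IsMinimalHit (n : ℕ) (x σ : List Bool) : Prop :=
  IsHit n x σ ∧ ¬ IsHit n x (σ.take (σ.length - 1))

/-- `σ` is a minimal hit for the initial segments of `A`. -/
def IsMinimalHitAlong (A : ℕ → Bool) (n : ℕ) (σ : List Bool) : Prop :=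
  IsMinimalHit n (strPrefix A σ.length) σ

theorem DeltaOneIn.isHit {X : ℕ → Bool} :
    DeltaOneIn X fun c : ℕ × List Bool × List Bool => IsHit c.1 c.2.1 c.2.2 := by
  unfold IsHit blockPosition
  exact .exists_lt (by fun_prop) (.exists_lt (by fun_prop) (.and
    (DeltaOneIn.requestedBy.comp
      fun c : ((ℕ × List Bool × List Bool) × ℕ) × ℕ => (c.1.1.2.2.length, c.1.2, c.2))
    (.forall_lt (by fun_prop) .eq)))

theorem DeltaOneIn.isMinimalHit {X : ℕ → Bool} :
    DeltaOneIn X fun c : ℕ × List Bool × List Bool => IsMinimalHit c.1 c.2.1 c.2.2 :=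
  .and .isHit (.not (DeltaOneIn.isHit.comp
    fun c : ℕ × List Bool × List Bool => (c.1, c.2.1, c.2.2.take (c.2.2.length - 1))))

theorem DeltaOneIn.isMinimalHitAlong (A : ℕ → Bool) :
    DeltaOneIn A fun c : ℕ × List Bool => IsMinimalHitAlong A c.1 c.2 :=
  .comp_strPrefix (p := fun x (c : ℕ × List Bool) => IsMinimalHit c.1 x c.2)
    (DeltaOneIn.isMinimalHit.comp fun c : List Bool × ℕ × List Bool => (c.2.1, c.1, c.2.2))

variable {n : ℕ} {x x' σ τ : List Bool} {A R : ℕ → Bool}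

theorem IsHit.of_prefix (h : IsHit n x σ) (hστ : σ <+: τ) : IsHit n x τ := by
  obtain ⟨m, hm, k, hk, hreq, hzero⟩ := h
  have hlen := hστ.length_le
  refine ⟨m, hm.trans_le hlen, k, hk.trans_le hlen, hreq.mono hlen, fun i hi => ?_⟩
  obtain ⟨hlt, hσ⟩ := List.getElem?_eq_some_iff.1 (hzero i hi)
  rw [List.prefix_iff_getElem?.1 hστ _ hlt, hσ]

theorem IsHit.congr (h : IsHit n x σ) (hx : x.take σ.length = x'.take σ.length) :
    IsHit n x' σ := by
  obtain ⟨m, hm, k, hk, hreq, hzero⟩ := h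
  have hxm : x.take m = x'.take m := by
    simpa only [List.take_take, min_eq_left hm.le] using congrArg (List.take m) hx
  exact ⟨m, hm, k, hk, hreq, hxm ▸ hzero⟩

theorem IsMinimalHit.congr (h : IsMinimalHit n x σ) (hx : x.take σ.length = x'.take σ.length) :
    IsMinimalHit n x' σ := by
  refine ⟨h.1.congr hx, fun h' => h.2 (h'.congr ?_)⟩
  simpa only [List.take_take, List.length_take, min_eq_left, Nat.sub_le, min_le_right] using
    congrArg (List.take (σ.length - 1)) hx.symm

theorem exists_isMinimalHit (h : IsHit n x (strPrefix R x.length)) :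
    ∃ l, 0 < l ∧ l ≤ x.length ∧ IsMinimalHit n (x.take l) (strPrefix R l) := by
  classical
  have hex : ∃ l, IsHit n x (strPrefix R l) := ⟨_, h⟩
  obtain ⟨l, hhit, hmin, hle⟩ : ∃ l, IsHit n x (strPrefix R l) ∧
      (∀ i < l, ¬ IsHit n x (strPrefix R i)) ∧ l ≤ x.length :=
    ⟨Nat.find hex, Nat.find_spec hex, fun i => Nat.find_min hex, Nat.find_min' hex h⟩
  have hpos : 0 < l := by
    obtain ⟨m, hm, -⟩ := hhit
    exact (Nat.zero_le m).trans_lt (by simpa using hm)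
  have hminimal : IsMinimalHit n x (strPrefix R l) := by
    refine ⟨hhit, ?_⟩
    rw [length_strPrefix, take_strPrefix R (Nat.sub_le l 1)]
    exact hmin _ (Nat.sub_lt hpos one_pos)
  exact ⟨l, hpos, hle, hminimal.congr (by simp)⟩

theorem IsMinimalHitAlong.length_unique {a b : ℕ} (ha : IsMinimalHitAlong A n (strPrefix R a))
    (hb : IsMinimalHitAlong A n (strPrefix R b)) : a = b := by
  wlog hab : a < b generalizing a b
  · rcases eq_or_lt_of_not_gt hab with h | h
    · exact h.symm
    · exact (this hb ha h).symm
  have hhit : IsHit n (strPrefix A b) (strPrefix R a) := by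
    refine ha.1.congr ?_
    simp only [length_strPrefix, take_strPrefix A le_rfl, take_strPrefix A hab.le]
  refine absurd ?_ hb.2
  rw [length_strPrefix, take_strPrefix R (Nat.sub_le b 1)]
  exact hhit.of_prefix (take_strPrefix R (Nat.le_sub_one_of_lt hab) ▸ List.take_prefix _ _)

theorem measureReal_isMinimalHitAlong_le (A : ℕ → Bool) (n : ℕ) :
    μCantor.real {R | ∃ l, IsMinimalHitAlong A n (strPrefix R l)} ≤ (1 / 2) ^ (n + 1) := by
  classical
  let F (l : ℕ) : Finset (ℕ × ℕ) :=
    {p ∈ Finset.range l ×ˢ Finset.range l | RequestedBy l p.1 p.2}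
  let S (l : ℕ) : Set (ℕ → Bool) := ⋃ p ∈ F l, zeroOn (block n (strPrefix A p.1, p.2))
  have hmono : Monotone S := fun l l' hl => Set.biUnion_subset_biUnion_left fun p hp => by
    simp only [F, SetLike.mem_coe, Finset.mem_filter, Finset.mem_product, Finset.mem_range] at hp ⊢
    exact ⟨⟨hp.1.1.trans_le hl, hp.1.2.trans_le hl⟩, hp.2.mono hl⟩
  have hsub : {R | ∃ l, IsMinimalHitAlong A n (strPrefix R l)} ⊆ ⋃ l, S l := by
    rintro R ⟨l, ⟨m, hm, k, hk, hreq, hzero⟩, -⟩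
    rw [length_strPrefix] at hm hk hreq
    refine Set.mem_iUnion.2 ⟨l, Set.mem_biUnion (x := (m, k)) ?_
      (mem_zeroOn_block.2 fun i hi => ?_)⟩
    · simp [F, hm, hk, hreq]
    · have h := hzero i hi
      rw [length_strPrefix, take_strPrefix A hm.le] at h
      have hlt : blockPosition (strPrefix A m) k i < l := by
        simpa using (List.getElem?_eq_some_iff.1 h).1
      exact Option.some.inj ((getElem?_strPrefix R hlt).symm.trans h)
  have hS (l : ℕ) : μCantor.real (S l) ≤ (1 / 2) ^ (n + 1) := by
    calc μCantor.real (S l)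
      _ ≤ ∑ p ∈ F l, μCantor.real (zeroOn (block n (strPrefix A p.1, p.2))) :=
          measureReal_biUnion_finset_le _ _
      _ = (1 / 2) ^ (n + 1) * ∑ p ∈ F l, (1 / 2 : ℝ) ^ p.2 := by
          rw [Finset.mul_sum]
          refine Finset.sum_congr rfl fun p _ => ?_
          rw [real_μCantor_zeroOn, card_block, ← pow_add, add_assoc, add_comm]
      _ ≤ (1 / 2) ^ (n + 1) := by
          refine mul_le_of_le_one_right (by positivity) ?_
          exact sum_half_pow_le_one_of_hasApparentLengthDescription fun p hp =>
            hasApparentLengthDescription_iff.2 ⟨l, (Finset.mem_filter.1 hp).2⟩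
  refine (measureReal_mono hsub).trans (not_lt.1 fun h => ?_)
  obtain ⟨l, hl⟩ := exists_lt_measureReal_of_lt_iUnion hmono h
  exact hl.not_ge (hS l)

end Hits

section SmallHits

/-- The list of all strings of length `l`. -/
def stringsOfLength (l : ℕ) : List (List Bool) :=
  Nat.rec [[]] (fun _ L => L.map (List.cons false) ++ L.map (List.cons true)) l

theorem mem_stringsOfLength {l : ℕ} {σ : List Bool} : σ ∈ stringsOfLength l ↔ σ.length = l := by
  induction l generalizing σ with
  | zero => simp [stringsOfLength]
  | succ l ih =>
    have hsucc : stringsOfLength (l + 1) = (stringsOfLength l).map (List.cons false) ++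
      (stringsOfLength l).map (List.cons true) := rfl
    rw [hsucc]
    cases σ with
    | nil => simp
    | cons b σ => cases b <;> simp [ih]

@[fun_prop]
theorem computable_stringsOfLength {α : Type*} [Primcodable α] {f : α → ℕ} (hf : Computable f) :
    Computable fun a => stringsOfLength (f a) := by
  have hcons (b : Bool) : Primrec fun L : List (List Bool) => L.map (List.cons b) :=
    Primrec.list_map .id (Primrec.list_cons.comp (.const b) .snd)
  have hstep := (Primrec.list_append.comp (hcons false) (hcons true)).to_comp
  exact computable_natRec
    (h := fun _ _ L => List.map (List.cons false) L ++ List.map (List.cons true) L) hf (.const _)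
    (hstep.comp (g := fun c : α × ℕ × List (List Bool) => c.2.2) (by fun_prop))

/-- `x` agrees with `A` up to `J`, and the minimal hits `σ` for initial segments of `x` of length at
least `J` are negligible: the class avoiding `V` has measure below `2^{-(2|σ|+n+2)}` in their
cylinders. -/
def HasSmallHits (A : ℕ → Bool) (n J : ℕ) (V : List Bool → Prop) (x : List Bool) : Prop :=
  J ≤ x.length ∧ x.take J = strPrefix A J ∧ ∀ σ : List Bool, J ≤ σ.length → σ.length ≤ x.length →
    IsMinimalHit n (x.take σ.length) σ →
      μCantor.real ((openOf {ρ | V ρ})ᶜ ∩ _root_.cylinder σ) < (1 / 2) ^ (2 * σ.length + n + 2)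

theorem SigmaOneIn.hasSmallHits {V : List Bool → Prop} (hV : SigmaOneIn emptyOracle V)
    (A : ℕ → Bool) (n J : ℕ) : SigmaOneIn emptyOracle (HasSmallHits A n J V) := by
  have hsmall := (SigmaOneIn.measureReal_lt (α := ℕ) (V := fun _ => V)
    (hV.comp fun c : ℕ × List Bool => c.2)).comp
      fun c : (List Bool × ℕ) × List Bool => (0, c.2, 2 * c.2.length + n + 2)
  have hminimal := DeltaOneIn.isMinimalHit (X := emptyOracle).comp
    fun c : (List Bool × ℕ) × List Bool => (n, c.1.1.take c.2.length, c.2)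
  have : SigmaOneIn emptyOracle fun x : List Bool => J ≤ x.length ∧ x.take J = strPrefix A J ∧
      ∀ l < x.length + 1, ∀ σ ∈ stringsOfLength l, σ.length < J ∨
        ¬ IsMinimalHit n (x.take σ.length) σ ∨ μCantor.real ((openOf {ρ | V ρ})ᶜ ∩
          _root_.cylinder σ) < (1 / 2) ^ (2 * σ.length + n + 2) :=
    .and .le (.and .eq (.forall_lt (by fun_prop) (.forall_mem (by fun_prop)
      (.or .lt (.or hminimal.2 hsmall)))))
  refine this.of_iff fun x => and_congr_right' (and_congr_right' ⟨fun h l hl σ hσ => ?_,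
    fun h σ hJ hσ hmin => ?_⟩)
  · obtain rfl := mem_stringsOfLength.1 hσ
    by_cases hJ : J ≤ σ.length
    · exact .inr (not_or_of_imp (h σ hJ (Nat.lt_succ_iff.1 hl)))
    · exact .inl (not_le.1 hJ)
  · have := h σ.length (Nat.lt_succ_iff.2 hσ) σ (mem_stringsOfLength.2 rfl)
    exact (this.resolve_left hJ.not_gt).resolve_left (not_not.2 hmin)

variable {A R : ℕ → Bool} {n J : ℕ} {V : List Bool → Prop} {x : List Bool}

theorem HasSmallHits.take (h : HasSmallHits A n J V x) {l : ℕ} (hJ : J ≤ l) (hl : l ≤ x.length) :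
    HasSmallHits A n J V (x.take l) := by
  obtain ⟨-, hA, hsmall⟩ := h
  have hlen : (x.take l).length = l := List.length_take_of_le hl
  refine ⟨hlen.symm ▸ hJ, by rw [List.take_take, min_eq_left hJ, hA], fun σ hσJ hσl hmin => ?_⟩
  rw [hlen] at hσl
  rw [List.take_take, min_eq_left hσl] at hmin
  exact hsmall σ hσJ (hσl.trans hl) hmin

theorem hasSmallHits_strPrefix (H : ∀ σ : List Bool, J ≤ σ.length → IsMinimalHitAlong A n σ →
      μCantor.real ((openOf {ρ | V ρ})ᶜ ∩ _root_.cylinder σ) < (1 / 2) ^ (2 * σ.length + n + 2))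
    {N : ℕ} (hN : J ≤ N) : HasSmallHits A n J V (strPrefix A N) := by
  refine ⟨by simpa using hN, take_strPrefix A hN, fun σ hJ hσ hmin => H σ hJ ?_⟩
  rwa [take_strPrefix A (by simpa using hσ)] at hmin

/-- The sequences outside `openOf V` with an initial segment that is a minimal hit for some string
with small hits. -/
def smallHitClass (A : ℕ → Bool) (n J : ℕ) (V : List Bool → Prop) : Set (ℕ → Bool) :=
  {R | R ∉ openOf {ρ | V ρ} ∧ ∃ x, 0 < x.length ∧ HasSmallHits A n J V x ∧
    IsMinimalHit n x (strPrefix R x.length)}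

theorem measureReal_smallHitClass_le (A : ℕ → Bool) (n J : ℕ) (V : List Bool → Prop) :
    μCantor.real (smallHitClass A n J V) ≤ (1 / 2) ^ (n + 2) := by
  classical
  let F (l : ℕ) : Finset (List Bool) := {σ ∈ (stringsOfLength (l + 1)).toFinset |
    ∃ x : List Bool, x.length = σ.length ∧ HasSmallHits A n J V x ∧ IsMinimalHit n x σ}
  have hsub : smallHitClass A n J V ⊆
      ⋃ l, ⋃ σ ∈ F l, ((openOf {ρ | V ρ})ᶜ ∩ _root_.cylinder σ) := by
    rintro R ⟨hR, x, hpos, hx, hmin⟩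
    refine Set.mem_iUnion.2 ⟨x.length - 1, Set.mem_biUnion (x := strPrefix R x.length) ?_
      ⟨hR, mem_cylinder_strPrefix R _⟩⟩
    simp only [F, SetLike.mem_coe, Finset.mem_filter, List.mem_toFinset, mem_stringsOfLength,
      length_strPrefix]
    exact ⟨(Nat.sub_add_cancel hpos).symm, x, rfl, hx, hmin⟩
  have hF (l : ℕ) {σ : List Bool} (hσ : σ ∈ F l) : σ.length = l + 1 ∧
      μCantor.real ((openOf {ρ | V ρ})ᶜ ∩ _root_.cylinder σ) ≤
        (1 / 2) ^ (n + 2) * ((1 / 2) ^ (l + 1) * (1 / 2) ^ σ.length) := by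
    simp only [F, Finset.mem_filter, List.mem_toFinset, mem_stringsOfLength] at hσ
    obtain ⟨hlen, x, hxσ, ⟨hJ, -, hsmall⟩, hmin⟩ := hσ
    have := hsmall σ (hxσ ▸ hJ) hxσ.ge (by rwa [← hxσ, List.take_length])
    refine ⟨hlen, this.le.trans_eq ?_⟩
    rw [← pow_add, ← pow_add, hlen]
    congr 1
    ring
  refine (measureReal_mono hsub).trans (measureReal_iUnion_le_of_sum_le
    (g := fun l => (1 / 2) ^ (n + 2) * (1 / 2) ^ (l + 1)) (fun l => ?_) fun N => ?_)
  · have hkraft : ∑ σ ∈ F l, (1 / 2 : ℝ) ^ σ.length ≤ 1 :=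
      sum_half_pow_length_le_one fun σ hσ τ hτ h =>
        h.eq_of_length ((hF l hσ).1.trans (hF l hτ).1.symm)
    refine (measureReal_biUnion_finset_le _ _).trans
      ((Finset.sum_le_sum fun σ hσ => (hF l hσ).2).trans ?_)
    rw [← Finset.mul_sum, ← Finset.mul_sum]
    gcongr
    exact mul_le_of_le_one_right (by positivity) hkraft
  · rw [← Finset.mul_sum]
    refine mul_le_of_le_one_right (by positivity) ?_
    have hgeom : ∑ l ∈ Finset.range N, (1 / 2 : ℝ) ^ (l + 1) = 1 - (1 / 2) ^ N := by
      simp only [pow_succ, ← Finset.sum_mul, geom_sum_eq (show (1 / 2 : ℝ) ≠ 1 by norm_num)]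
      ring
    rw [hgeom]
    exact sub_le_self _ (by positivity)

theorem sum_half_pow_le_of_le_prod {ι : Type*} {F : Finset ι} {k : ι → ℕ} {n : ℕ}
    (h : (1 / 2 : ℝ) ^ (n + 2) ≤ ∏ c ∈ F, (1 - (1 / 2 : ℝ) ^ (k c + n + 1))) :
    ∑ c ∈ F, (1 / 2 : ℝ) ^ k c ≤ 2 ^ (2 * n + 3) := by
  have hexp : (1 / 2 : ℝ) ^ (n + 2) ≤ Real.exp (-∑ c ∈ F, (1 / 2 : ℝ) ^ (k c + n + 1)) := by
    refine h.trans ?_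
    rw [← Finset.sum_neg_distrib, Real.exp_sum]
    refine Finset.prod_le_prod (fun c _ => ?_) fun c _ => Real.one_sub_le_exp_neg _
    exact sub_nonneg.2 (pow_le_one₀ (by norm_num) (by norm_num))
  have hscale : ∑ c ∈ F, (1 / 2 : ℝ) ^ k c =
      2 ^ (n + 1) * ∑ c ∈ F, (1 / 2 : ℝ) ^ (k c + n + 1) := by
    rw [Finset.mul_sum]
    refine Finset.sum_congr rfl fun c _ => ?_
    rw [add_assoc, pow_add _ (k c), mul_left_comm, ← mul_pow]
    norm_num
  have hsum : ∑ c ∈ F, (1 / 2 : ℝ) ^ (k c + n + 1) ≤ 2 ^ (n + 2) := by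
    rw [Real.exp_neg, one_div_pow, one_div, inv_le_inv₀ (by positivity) (Real.exp_pos _)] at hexp
    exact (le_add_of_nonneg_right zero_le_one).trans ((Real.add_one_le_exp _).trans hexp)
  calc ∑ c ∈ F, (1 / 2 : ℝ) ^ k c
    _ ≤ 2 ^ (n + 1) * 2 ^ (n + 2) := by rw [hscale]; gcongr
    _ = 2 ^ (2 * n + 3) := by rw [← pow_add]; congr 1; ring

/-- A request for a description of `p.1` of length `p.2`, made when some string with small hits
requests it and is long enough for a sequence vanishing on the block of `p` to be hit. -/
def IsHitRequest (A : ℕ → Bool) (n J : ℕ) (V : List Bool → Prop) (p : List Bool × ℕ) : Prop :=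
  ∃ (x : List Bool) (m : ℕ), HasSmallHits A n J V x ∧ m < x.length ∧ p.2 < x.length ∧
    RequestedBy x.length m p.2 ∧ p.1 = x.take m ∧
      ∀ i < p.2 + n + 1, blockPosition p.1 p.2 i < x.length

theorem SigmaOneIn.isHitRequest (hV : SigmaOneIn emptyOracle V) (A : ℕ → Bool) (n J : ℕ) :
    SigmaOneIn emptyOracle (IsHitRequest A n J V) := by
  unfold IsHitRequest blockPosition
  exact .exists (.exists (.and
    ((hV.hasSmallHits A n J).comp fun c : ((List Bool × ℕ) × List Bool) × ℕ => c.1.2)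
    (.and .lt (.and .lt (.and
      (DeltaOneIn.requestedBy.1.comp fun c : ((List Bool × ℕ) × List Bool) × ℕ =>
        (c.1.2.length, c.2, c.1.1.2))
      (.and .eq (.forall_lt (by fun_prop) .lt)))))))

theorem notMem_zeroOn_of_isHitRequest {p : List Bool × ℕ} (hp : IsHitRequest A n J V p)
    (hV : R ∉ openOf {ρ | V ρ}) (halong : ∀ l, ¬ IsMinimalHitAlong A n (strPrefix R l))
    (hsmall : R ∉ smallHitClass A n J V) : R ∉ zeroOn (block n p) := by
  intro hR
  obtain ⟨x, m, hx, hm, hk, hreq, hy, hpos⟩ := hp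
  have hhit : IsHit n x (strPrefix R x.length) := by
    rw [IsHit, length_strPrefix]
    refine ⟨m, hm, p.2, hk, hreq, fun i hi => ?_⟩
    rw [← hy, getElem?_strPrefix R (hpos i hi), mem_zeroOn_block.1 hR i hi]
  obtain ⟨l, hl, hlx, hmin⟩ := exists_isMinimalHit hhit
  have hlen : (x.take l).length = l := List.length_take_of_le hlx
  rcases le_total J l with hJ | hJ
  · exact hsmall ⟨hV, x.take l, hlen.symm ▸ hl, hx.take hJ hlx, hlen.symm ▸ hmin⟩
  · have hxA : x.take l = strPrefix A l := by
      have h := congrArg (List.take l) hx.2.1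
      rwa [List.take_take, min_eq_left hJ, take_strPrefix A hJ] at h
    refine halong l ?_
    rwa [IsMinimalHitAlong, length_strPrefix, ← hxA]

theorem sum_half_pow_le_of_isHitRequest (hQ : (1 / 2) ^ n ≤ μCantor.real (openOf {ρ | V ρ})ᶜ)
    {F : Finset (List Bool × ℕ)} (hF : ∀ p ∈ F, IsHitRequest A n J V p) :
    ∑ p ∈ F, (1 / 2 : ℝ) ^ p.2 ≤ 2 ^ (2 * n + 3) := by
  refine sum_half_pow_le_of_le_prod ?_
  let W : Set (ℕ → Bool) := {R | ∃ l, IsMinimalHitAlong A n (strPrefix R l)}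
  have havoid : ((openOf {ρ | V ρ})ᶜ \ W) \ smallHitClass A n J V ⊆
      ⋂ p ∈ F, (zeroOn (block n p))ᶜ := fun R ⟨⟨hRV, hRW⟩, hRS⟩ =>
    Set.mem_iInter₂.2 fun p hp =>
      notMem_zeroOn_of_isHitRequest (hF p hp) hRV (not_exists.1 hRW) hRS
  calc (1 / 2 : ℝ) ^ (n + 2)
    _ = (1 / 2) ^ n - (1 / 2) ^ (n + 1) - (1 / 2) ^ (n + 2) := by ring
    _ ≤ μCantor.real (openOf {ρ | V ρ})ᶜ - μCantor.real W
          - μCantor.real (smallHitClass A n J V) := by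
        have hW := measureReal_isMinimalHitAlong_le A n
        have hS := measureReal_smallHitClass_le A n J V
        gcongr
    _ ≤ μCantor.real (((openOf {ρ | V ρ})ᶜ \ W) \ smallHitClass A n J V) :=
        (sub_le_sub_right le_measureReal_sdiff _).trans le_measureReal_sdiff
    _ ≤ μCantor.real (⋂ p ∈ F, (zeroOn (block n p))ᶜ) := measureReal_mono havoid
    _ = ∏ p ∈ F, (1 - (1 / 2 : ℝ) ^ (p.2 + n + 1)) := by
        simp only [real_μCantor_biInter_compl_zeroOn (pairwise_disjoint_block n), card_block]

/- If all long minimal hits along `A` were negligible, then all initial segments of `A` would have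
small hits, and every apparent length description would turn into a request for one of them. -/
theorem exists_isMinimalHitAlong (hA : ¬ KTrivial A) (hV : SigmaOneIn emptyOracle V) (n : ℕ)
    (hQ : (1 / 2) ^ n ≤ μCantor.real (openOf {ρ | V ρ})ᶜ) (J : ℕ) :
    ∃ σ : List Bool, J ≤ σ.length ∧ IsMinimalHitAlong A n σ ∧ (1 / 2) ^ (2 * σ.length + n + 2) ≤
      μCantor.real ((openOf {ρ | V ρ})ᶜ ∩ _root_.cylinder σ) := by
  by_contra! H
  refine hA (kTrivial_of_requests (hV.isHitRequest A n J) (2 * n + 3)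
    (fun F hF => sum_half_pow_le_of_isHitRequest hQ hF) fun m k hmk => ?_)
  obtain ⟨s, hs⟩ := hasApparentLengthDescription_iff.1 hmk
  let N := J + s + m + k + 1 + blockPosition (strPrefix A m) k (k + n + 1)
  have hlen : (strPrefix A N).length = N := length_strPrefix A N
  refine ⟨strPrefix A N, m, hasSmallHits_strPrefix H (by lia), by lia, ?_, ?_, ?_,
    fun i hi => ?_⟩
  · change k < _; lia
  · exact hs.mono (by lia)
  · exact (take_strPrefix A (by lia)).symm
  · have : blockPosition (strPrefix A m) k i < blockPosition (strPrefix A m) k (k + n + 1) :=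
      Nat.pair_lt_pair_right _ hi
    change blockPosition (strPrefix A m) k i < _
    lia

end SmallHits

/-! ### Constraints and conditions -/

section ClopenApproximation

variable {ι : Type*} [Primcodable ι]

/-- A presentation of the open sets generated by a uniformly `Σ⁰₁` family `B` as increasing unions
of clopen sets, for which both the clopen sets and their complements are generated uniformly. -/
structure ClopenApproximation (B : ι → List Bool → Prop) where
  inside : ι → ℕ → List Bool → Prop
  outside : ι → ℕ → List Bool → Prop
  sigmaOneIn : SigmaOneIn emptyOracle fun c : ι × List Bool => B c.1 c.2
  sigmaOneIn_inside :
    SigmaOneIn emptyOracle fun c : (ι × ℕ) × List Bool => inside c.1.1 c.1.2 c.2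
  sigmaOneIn_outside :
    SigmaOneIn emptyOracle fun c : (ι × ℕ) × List Bool => outside c.1.1 c.1.2 c.2
  compl_outside : ∀ i s, (openOf {ρ | outside i s ρ})ᶜ = openOf {ρ | inside i s ρ}
  monotone_inside : ∀ i, Monotone fun s => openOf {ρ | inside i s ρ}
  iUnion_inside : ∀ i, ⋃ s, openOf {ρ | inside i s ρ} = openOf {ρ | B i ρ}

theorem compl_openOf_length_eq (K : List Bool → Prop) (s : ℕ) :
    (openOf {ρ | ρ.length = s ∧ ∀ i < s + 1, ¬ K (ρ.take i)})ᶜ =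
      openOf {ρ | ρ.length ≤ s ∧ K ρ} := by
  ext X
  simp only [Set.mem_compl_iff, mem_openOf_iff, Set.mem_ofPred_eq, length_strPrefix]
  constructor
  · intro h
    by_contra! hK
    refine h ⟨s, rfl, fun i hi => ?_⟩
    rw [take_strPrefix X (by lia)]
    exact hK i (by lia)
  · rintro ⟨n, hn, hK⟩ ⟨_, rfl, hnot⟩
    exact hnot n (by lia) (by rwa [take_strPrefix X hn])

theorem SigmaOneIn.nonempty_clopenApproximation {B : ι → List Bool → Prop}
    (hB : SigmaOneIn emptyOracle fun c : ι × List Bool => B c.1 c.2) :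
    Nonempty (ClopenApproximation B) := by
  obtain ⟨g, hg, hgB, hmono⟩ := hB.exists_computable_test
  have hg' : DeltaOneIn emptyOracle fun c => g c = true := .of_computable hg
  refine ⟨{
    inside := fun i s ρ => ρ.length ≤ s ∧ g ((i, ρ), s) = true
    outside := fun i s ρ => ρ.length = s ∧ ∀ j < s + 1, ¬ g ((i, ρ.take j), s) = true
    sigmaOneIn := hB
    sigmaOneIn_inside :=
      .and .le (hg'.1.comp fun c : (ι × ℕ) × List Bool => ((c.1.1, c.2), c.1.2))
    sigmaOneIn_outside := .and .eq (.forall_lt (by fun_prop) (hg'.2.comp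
      fun c : ((ι × ℕ) × List Bool) × ℕ => ((c.1.1.1, c.1.2.take c.2), c.1.1.2)))
    compl_outside := fun i s => compl_openOf_length_eq (fun ρ => g ((i, ρ), s) = true) s
    monotone_inside := fun i s t hst X => ?_
    iUnion_inside := fun i => ?_ }⟩
  · simp only [mem_openOf_iff, Set.mem_ofPred_eq]
    exact fun ⟨n, hn, h⟩ => ⟨n, hn.trans hst, hmono _ _ _ hst h⟩
  · have hgB' (ρ : List Bool) : B i ρ ↔ ∃ s, g ((i, ρ), s) = true := hgB (i, ρ)
    ext X
    simp only [Set.mem_iUnion, mem_openOf_iff, Set.mem_ofPred_eq, length_strPrefix, hgB']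
    constructor
    · exact fun ⟨s, n, _, h⟩ => ⟨n, s, h⟩
    · exact fun ⟨n, s, h⟩ => ⟨max n s, n, le_max_left _ _, hmono _ _ _ (le_max_right _ _) h⟩

end ClopenApproximation

section UniversalTest

theorem measureReal_biUnion_le_of_directedOn {Ω ι : Type*} [MeasurableSpace Ω] [Countable ι]
    {μ : Measure Ω} [IsFiniteMeasure μ] {f : ι → Set Ω} {t : Set ι}
    (hd : DirectedOn (fun i j => f i ⊆ f j) t) {r : ℝ} (hr : 0 ≤ r)
    (h : ∀ i ∈ t, μ.real (f i) ≤ r) : μ.real (⋃ i ∈ t, f i) ≤ r := by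
  refine ENNReal.toReal_le_of_le_ofReal hr ?_
  rw [measure_biUnion_eq_iSup t.to_countable hd]
  refine iSup₂_le fun i hi => ?_
  rw [← ofReal_measureReal]
  exact ENNReal.ofReal_le_ofReal (h i hi)

variable {B : ℕ → List Bool → Prop} (𝒞 : ClopenApproximation B)

/-- The union of the open sets generated by the `B e`, where the approximation to the `e`-th set
is cut off as soon as its measure reaches `2^{-(e+2)}`. -/
def ClopenApproximation.Truncation (ρ : List Bool) : Prop :=
  ∃ e s, 𝒞.inside e s ρ ∧ μCantor.real (openOf {ρ | 𝒞.inside e s ρ}) < (1 / 2) ^ (e + 2)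

namespace ClopenApproximation

theorem sigmaOneIn_truncation : SigmaOneIn emptyOracle 𝒞.Truncation := by
  have hmeas : SigmaOneIn emptyOracle fun c : (ℕ × ℕ) × List Bool × ℕ =>
      μCantor.real (openOf {ρ | 𝒞.inside c.1.1 c.1.2 ρ} ∩ _root_.cylinder c.2.1)
        < (1 / 2) ^ c.2.2 :=
    (SigmaOneIn.measureReal_lt (V := fun i : ℕ × ℕ => 𝒞.outside i.1 i.2)
      𝒞.sigmaOneIn_outside).of_iff fun c => by rw [𝒞.compl_outside]
  refine .exists (.exists (.and
    (𝒞.sigmaOneIn_inside.comp fun c : (List Bool × ℕ) × ℕ => ((c.1.2, c.2), c.1.1))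
    ((hmeas.comp fun c : (List Bool × ℕ) × ℕ => ((c.1.2, c.2), [], c.1.2 + 2)).of_iff
      fun c => ?_)))
  rw [cylinder_nil, Set.inter_univ]

theorem measureReal_truncation_le : μCantor.real (openOf {ρ | 𝒞.Truncation ρ}) ≤ 1 / 2 := by
  set C : ℕ → ℕ → Set (ℕ → Bool) := fun e s => openOf {ρ | 𝒞.inside e s ρ}
  set t : ℕ → Set ℕ := fun e => {s | μCantor.real (C e s) < (1 / 2) ^ (e + 2)}
  have hsub : openOf {ρ | 𝒞.Truncation ρ} ⊆ ⋃ e, ⋃ s ∈ t e, C e s := fun X hX => by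
    obtain ⟨n, e, s, hn, hs⟩ := mem_openOf_iff.1 hX
    exact Set.mem_iUnion.2 ⟨e, Set.mem_biUnion hs (mem_openOf_iff.2 ⟨n, hn⟩)⟩
  have hdirected (e : ℕ) : DirectedOn (fun s s' => C e s ⊆ C e s') (t e) := fun a ha b hb => by
    rcases le_total a b with hab | hab
    · exact ⟨b, hb, 𝒞.monotone_inside e hab, subset_rfl⟩
    · exact ⟨a, ha, subset_rfl, 𝒞.monotone_inside e hab⟩
  have hsum (N : ℕ) : ∑ e ∈ Finset.range N, (1 / 2 : ℝ) ^ (e + 2) = 1 / 2 - (1 / 2) ^ (N + 1) := by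
    induction N with
    | zero => norm_num
    | succ N ih => rw [Finset.sum_range_succ, ih]; ring
  refine (measureReal_mono hsub).trans (measureReal_iUnion_le_of_sum_le (fun e =>
    measureReal_biUnion_le_of_directedOn (hdirected e) (by positivity) fun s hs => hs.le)
      fun N => ?_)
  rw [hsum]
  linarith [pow_pos (one_half_pos (α := ℝ)) (N + 1)]

theorem openOf_subset_truncation {e : ℕ}
    (he : μCantor.real (openOf {ρ | B e ρ}) < (1 / 2) ^ (e + 2)) :
    openOf {ρ | B e ρ} ⊆ openOf {ρ | 𝒞.Truncation ρ} := by
  rw [← 𝒞.iUnion_inside e] at he ⊢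
  refine Set.iUnion_subset fun s X hX => ?_
  obtain ⟨n, hn⟩ := mem_openOf_iff.1 hX
  exact mem_openOf_iff.2 ⟨n, e, s, hn, (measureReal_mono (Set.subset_iUnion _ s)).trans_lt he⟩

end ClopenApproximation

theorem exists_sigmaOneIn_forall_notMem_mlRandom :
    ∃ V : List Bool → Prop, SigmaOneIn emptyOracle V ∧
      μCantor.real (openOf {ρ | V ρ}) ≤ 1 / 2 ∧ ∀ X ∉ openOf {ρ | V ρ}, MLRandom X := by
  obtain ⟨𝒞⟩ := SigmaOneIn.nonempty_clopenApproximation (B := fun e ρ =>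
    ∃ m, OracleComputes e emptyOracle (Nat.pair (e + 3) (Encodable.encode ρ)) m)
    (.exists .oracleComputes)
  refine ⟨𝒞.Truncation, 𝒞.sigmaOneIn_truncation, 𝒞.measureReal_truncation_le, ?_⟩
  rintro X hX G ⟨⟨e, he⟩, hG⟩
  obtain rfl : G = testLevel e emptyOracle := funext he
  refine ⟨e + 3, fun hXG => hX (𝒞.openOf_subset_truncation (e := e) ?_ hXG)⟩
  calc μCantor.real (testLevel e emptyOracle (e + 3)) ≤ (2⁻¹ ^ (e + 3) : ℝ≥0∞).toReal :=
        ENNReal.toReal_mono (by simp) (hG (e + 3))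
    _ = (1 / 2) ^ (e + 3) := by simp
    _ < (1 / 2) ^ (e + 2) := pow_lt_pow_right_of_lt_one₀ (by norm_num) (by norm_num) (by lia)

end UniversalTest

section Constraints

variable {ι : Type*} [Primcodable ι] {B : ι → List Bool → Prop}

/-- A requirement on a sequence in terms of the open sets generated by a family `B`: `(i, none)`
asks it to avoid the `i`-th open set, `(i, some N)` asks it to be in the `N`-th clopen
approximation of the `i`-th open set. -/
abbrev Constraint (ι : Type*) := ι × Option ℕ

namespace ClopenApproximation

variable (𝒞 : ClopenApproximation B)

/-- The strings generating the open set of the sequences that violate a constraint. -/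
def Forbids (c : Constraint ι) (ρ : List Bool) : Prop :=
  (c.2 = none ∧ B c.1 ρ) ∨ ∃ N, c.2 = some N ∧ 𝒞.outside c.1 N ρ

/-- The sequences that satisfy a constraint. -/
def solutions (c : Constraint ι) : Set (ℕ → Bool) := (openOf {ρ | 𝒞.Forbids c ρ})ᶜ

theorem solutions_none (i : ι) : 𝒞.solutions (i, none) = (openOf {ρ | B i ρ})ᶜ := by
  simp [solutions, Forbids]

theorem solutions_some (i : ι) (N : ℕ) :
    𝒞.solutions (i, some N) = openOf {ρ | 𝒞.inside i N ρ} := by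
  rw [← 𝒞.compl_outside]
  simp [solutions, Forbids]

theorem solutions_some_subset (i : ι) (N : ℕ) :
    𝒞.solutions (i, some N) ⊆ openOf {ρ | B i ρ} := by
  rw [solutions_some, ← 𝒞.iUnion_inside]
  exact Set.subset_iUnion (fun s => openOf {ρ | 𝒞.inside i s ρ}) N

theorem measureReal_le_add_of_solutions_some_le (S : Set (ℕ → Bool)) (i : ι) {r : ℝ}
    (h : ∀ N, μCantor.real (S ∩ 𝒞.solutions (i, some N)) ≤ r) :
    μCantor.real S ≤ μCantor.real (S ∩ 𝒞.solutions (i, none)) + r := by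
  have hopen : μCantor.real (S ∩ openOf {ρ | B i ρ}) ≤ r := by
    by_contra! hlt
    rw [← 𝒞.iUnion_inside, Set.inter_iUnion] at hlt
    obtain ⟨N, hN⟩ := exists_lt_measureReal_of_lt_iUnion
      (fun a b hab => Set.inter_subset_inter_right S (𝒞.monotone_inside i hab)) hlt
    exact (h N).not_gt (by rwa [solutions_some])
  have hsplit :=
    measureReal_inter_add_sdiff (μ := μCantor) (s := S) (measurableSet_openOf {ρ | B i ρ})
  rw [solutions_none, ← Set.sdiff_eq]
  linarith

/-- The `Π⁰₁` class of the sequences outside the open set generated by `V` that satisfy all the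
constraints in `L`. -/
def admissible (V : List Bool → Prop) (L : List (Constraint ι)) : Set (ℕ → Bool) :=
  (openOf {ρ | V ρ ∨ ∃ c ∈ L, 𝒞.Forbids c ρ})ᶜ

variable {V : List Bool → Prop} {L : List (Constraint ι)}

theorem mem_admissible_iff {X : ℕ → Bool} :
    X ∈ 𝒞.admissible V L ↔ X ∉ openOf {ρ | V ρ} ∧ ∀ c ∈ L, X ∈ 𝒞.solutions c := by
  simp only [admissible, solutions, Set.mem_compl_iff, mem_openOf_iff, Set.mem_ofPred_eq,
    not_exists, not_or, not_and, forall_and]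
  exact and_congr_right' ⟨fun h c hc n => h n c hc, fun h n c hc => h c hc n⟩

theorem admissible_nil : 𝒞.admissible V [] = (openOf {ρ | V ρ})ᶜ := by
  simp [admissible]

theorem admissible_cons_inter (c : Constraint ι) (S : Set (ℕ → Bool)) :
    𝒞.admissible V (c :: L) ∩ S = (𝒞.admissible V L ∩ S) ∩ 𝒞.solutions c := by
  ext X
  simp only [Set.mem_inter_iff, mem_admissible_iff, List.forall_mem_cons]
  tauto

theorem exists_half_pow_le (i : ι) {τ : List Bool} {n : ℕ}
    (h : (1 / 2) ^ n ≤ μCantor.real (𝒞.admissible V L ∩ _root_.cylinder τ)) :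
    ∃ o, (1 / 2) ^ (n + 1) ≤
      μCantor.real (𝒞.admissible V ((i, o) :: L) ∩ _root_.cylinder τ) := by
  by_contra! hlt
  simp only [admissible_cons_inter, pow_succ] at hlt
  linarith [hlt none, 𝒞.measureReal_le_add_of_solutions_some_le _ i fun N => (hlt (some N)).le]

theorem sigmaOneIn_forbids :
    SigmaOneIn emptyOracle fun c : Constraint ι × List Bool => 𝒞.Forbids c.1 c.2 :=
  .or (.and .eq (𝒞.sigmaOneIn.comp fun c : Constraint ι × List Bool => (c.1.1, c.2)))
    (.exists (.and .eq (𝒞.sigmaOneIn_outside.comp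
      fun c : (Constraint ι × List Bool) × ℕ => ((c.1.1.1, c.2), c.1.2))))

theorem sigmaOneIn_measureReal_admissible_lt (hV : SigmaOneIn emptyOracle V) :
    SigmaOneIn emptyOracle fun c : List (Constraint ι) × List Bool × ℕ =>
      μCantor.real (𝒞.admissible V c.1 ∩ _root_.cylinder c.2.1) < (1 / 2) ^ c.2.2 :=
  .measureReal_lt (V := fun L ρ => V ρ ∨ ∃ c ∈ L, 𝒞.Forbids c ρ)
    (.or (hV.comp _) (.exists_mem (by fun_prop) (𝒞.sigmaOneIn_forbids.comp
      fun c : (List (Constraint ι) × List Bool) × Constraint ι => (c.2, c.1.2))))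

/- If no such constraint existed, then `D x = b` would hold exactly when avoiding the open set of
index `q (x, b)` loses more than half of the measure, which is a `Σ⁰₁` event. -/
theorem exists_half_pow_le_of_not_computableSet (hV : SigmaOneIn emptyOracle V) {D : ℕ → Bool}
    (hD : ¬ ComputableSet D) {q : ℕ × Bool → ι} (hq : Computable q) {τ : List Bool} {n : ℕ}
    (h : (1 / 2) ^ n ≤ μCantor.real (𝒞.admissible V L ∩ _root_.cylinder τ)) :
    ∃ x b o, (o = none ↔ D x = b) ∧ (1 / 2) ^ (n + 1) ≤
      μCantor.real (𝒞.admissible V ((q (x, b), o) :: L) ∩ _root_.cylinder τ) := by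
  by_contra! hlt
  refine hD (turingLE_iff.2 (((𝒞.sigmaOneIn_measureReal_admissible_lt hV).comp
    fun c : ℕ × Bool => ((q c, none) :: L, τ, n + 1)).of_iff fun ⟨x, b⟩ => ?_))
  refine ⟨fun hx => hlt x b none (by simpa using hx), fun hnone => ?_⟩
  by_contra hx
  have hsome (N : ℕ) := (hlt x b (some N) (by simpa using hx)).le
  simp only [admissible_cons_inter] at hsome hnone
  have := 𝒞.measureReal_le_add_of_solutions_some_le _ _ hsome
  rw [pow_succ] at this hnone
  linarith

theorem infinite_isMinimalHitAlong {A : ℕ → Bool} (hA : ¬ KTrivial A)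
    (hV : SigmaOneIn emptyOracle V) {τ : List Bool} {n : ℕ}
    (h : (1 / 2) ^ n ≤ μCantor.real (𝒞.admissible V L ∩ _root_.cylinder τ)) (J : ℕ) :
    {σ | J ≤ σ.length ∧ τ <+: σ ∧ IsMinimalHitAlong A n σ ∧ (1 / 2) ^ (2 * σ.length + n + 2) ≤
      μCantor.real (𝒞.admissible V L ∩ _root_.cylinder σ)}.Infinite := by
  have hinter := compl_openOf_inter_cylinder {ρ | V ρ ∨ ∃ c ∈ L, 𝒞.Forbids c ρ} τ
  have hV' : SigmaOneIn emptyOracle fun ρ : List Bool =>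
      (V ρ ∨ ∃ c ∈ L, 𝒞.Forbids c ρ) ∨ (ρ.length = τ.length ∧ ρ ≠ τ) :=
    .or (.or hV (.exists_mem (by fun_prop)
      (𝒞.sigmaOneIn_forbids.comp fun c : List Bool × Constraint ι => (c.2, c.1)))) (.and .eq .ne)
  refine Set.Infinite.of_image List.length (Set.infinite_of_forall_exists_gt fun N => ?_)
  rw [admissible, hinter] at h
  obtain ⟨σ, hσ, hhit, hμ⟩ := exists_isMinimalHitAlong hA hV' n h (J + N + 1 + τ.length)
  rw [Set.ofPred_or, ← hinter, Set.inter_assoc] at hμ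
  have hne : (_root_.cylinder τ ∩ _root_.cylinder σ).Nonempty := by
    by_contra hempty
    rw [Set.not_nonempty_iff_eq_empty.1 hempty, Set.inter_empty, measureReal_empty] at hμ
    exact hμ.not_gt (by positivity)
  rw [cylinder_inter_eq_right (by lia) hne] at hμ
  obtain ⟨X, hτ, hX⟩ := hne
  refine ⟨_, ⟨σ, ⟨by lia, ?_, hhit, hμ⟩, rfl⟩, by lia⟩
  rw [mem_cylinder_iff] at hτ hX
  rw [List.prefix_iff_eq_take, ← hX, take_strPrefix X (by lia), hτ]

end ClopenApproximation

end Constraints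

section Queries

theorem oracleComputes_iff_exists_strPrefix {e n m : ℕ} {X : ℕ → Bool} : OracleComputes e X n m ↔
    ∃ k, WEnum e (Nat.pair (Encodable.encode (strPrefix X k)) (Nat.pair n m)) := by
  constructor
  · rintro ⟨σ, hσ, h⟩
    exact ⟨σ.length, by rwa [← isPrefixOf_iff.1 hσ]⟩
  · exact fun ⟨k, h⟩ => ⟨strPrefix X k, isPrefixOf_strPrefix X k, h⟩

/-- A question about the computations of an oracle `X`: `(e, n, none)` asks whether `Γ_e^X(n)` is
defined, and `(e, n, some m)` whether `Γ_e^X(n) = m`. -/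
abbrev Query := ℕ × ℕ × Option ℕ

/-- The oracle string `ρ` suffices for a positive answer to the query `q`. -/
def HasAnswer (q : Query) (ρ : List Bool) : Prop :=
  ∃ m, (q.2.2 = none ∨ q.2.2 = some m) ∧
    WEnum q.1 (Nat.pair (Encodable.encode ρ) (Nat.pair q.2.1 m))

theorem sigmaOneIn_hasAnswer :
    SigmaOneIn emptyOracle fun c : Query × List Bool => HasAnswer c.1 c.2 :=
  .exists (.and (.or .eq .eq) .wEnum)

theorem mem_openOf_hasAnswer_iff {X : ℕ → Bool} {q : Query} : X ∈ openOf {ρ | HasAnswer q ρ} ↔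
    ∃ m, (q.2.2 = none ∨ q.2.2 = some m) ∧ OracleComputes q.1 X q.2.1 m := by
  simp only [mem_openOf_iff, Set.mem_ofPred_eq, HasAnswer, oracleComputes_iff_exists_strPrefix,
    ← exists_and_left]
  exact exists_comm

theorem mem_openOf_hasAnswer_none_iff {X : ℕ → Bool} {e n : ℕ} :
    X ∈ openOf {ρ | HasAnswer (e, n, none) ρ} ↔ ∃ m, OracleComputes e X n m := by
  simp [mem_openOf_hasAnswer_iff]

theorem mem_openOf_hasAnswer_some_iff {X : ℕ → Bool} {e n m : ℕ} :
    X ∈ openOf {ρ | HasAnswer (e, n, some m) ρ} ↔ OracleComputes e X n m := by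
  simp [mem_openOf_hasAnswer_iff]

/-- The computation witnessing `e ∈ ∅′` is found with all search parameters below `s`. -/
def HaltsBy (e s : ℕ) : Prop :=
  ∃ n < s, ∃ m < s, ∃ k < s, (Nat.Partrec.Code.evaln k (Denumerable.ofNat _ e)
    (Nat.pair (Encodable.encode (strPrefix emptyOracle n)) (Nat.pair e m))).isSome = true

theorem HaltsBy.mono {e s t : ℕ} (hst : s ≤ t) : HaltsBy e s → HaltsBy e t :=
  fun ⟨n, hn, m, hm, k, hk, h⟩ => ⟨n, by lia, m, by lia, k, by lia, h⟩

theorem zeroJump_eq_true_iff {e : ℕ} : zeroJump e = true ↔ ∃ s, HaltsBy e s := by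
  simp only [zeroJump, jump_eq_true_iff, oracleComputes_iff_exists_strPrefix, wEnum_iff]
  constructor
  · rintro ⟨m, n, k, h⟩
    exact ⟨n + m + k + 1, n, by lia, m, by lia, k, by lia, h⟩
  · rintro ⟨-, n, -, m, -, k, -, h⟩
    exact ⟨m, n, k, h⟩

theorem deltaOneIn_haltsBy {X : ℕ → Bool} : DeltaOneIn X fun c : ℕ × ℕ => HaltsBy c.1 c.2 := by
  have := computable_strPrefix_emptyOracle
  exact .exists_lt (by fun_prop) (.exists_lt (by fun_prop) (.exists_lt (by fun_prop)
    (.of_computable (by fun_prop))))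

/-- Meeting the constraint `c` prevents `Γ_e^X` from being the characteristic function of `D`:
either `Γ_e^X(x) = b` for some `b ≠ D x`, or `Γ_e^X(x) = D x` fails. -/
def Diagonalizes (D : ℕ → Bool) (e : ℕ) (c : Constraint Query) : Prop :=
  ∃ x b, c.1 = (e, x, some (natOfBool b)) ∧ (c.2 = none ↔ D x = b)

theorem sigmaOneIn_diagonalizes {D X : ℕ → Bool} (hD : TuringLE D X) :
    SigmaOneIn X fun c : ℕ × Constraint Query => Diagonalizes D c.1 c.2 :=
  .exists (.exists (.and .eq (DeltaOneIn.iff .eq ((DeltaOneIn.oracle D).trans hD)).1))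

variable {𝒞 : ClopenApproximation HasAnswer} {X : ℕ → Bool}

theorem jump_eq_false_iff_of_mem_solutions {e : ℕ} {o : Option ℕ}
    (hX : X ∈ 𝒞.solutions ((e, e, none), o)) : jump X e = false ↔ o = none := by
  rw [← Bool.not_eq_true, jump_eq_true_iff, ← mem_openOf_hasAnswer_none_iff]
  rcases o with - | N
  · simpa only [𝒞.solutions_none, iff_true, Set.mem_compl_iff] using hX
  · simpa using 𝒞.solutions_some_subset _ _ hX

theorem Diagonalizes.exists_not_oracleComputes_iff {D : ℕ → Bool} {e : ℕ} {c : Constraint Query}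
    (hc : Diagonalizes D e c) (hX : X ∈ 𝒞.solutions c) :
    ∃ n m, ¬ (OracleComputes e X n m ↔ m = natOfBool (D n)) := by
  obtain ⟨q, o⟩ := c
  obtain ⟨x, b, rfl, ho⟩ := hc
  refine ⟨x, natOfBool b, ?_⟩
  rw [← mem_openOf_hasAnswer_some_iff, natOfBool_injective.eq_iff, eq_comm (a := b), ← ho]
  rcases o with - | N
  · rw [𝒞.solutions_none] at hX
    exact fun h => hX (h.2 rfl)
  · exact fun h => Option.some_ne_none N (h.1 (𝒞.solutions_some_subset _ _ hX))

end Queries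

section Conditions

/-- A forcing condition, consisting of a stem, an exponent and a list of constraints. -/
abbrev Condition := List Bool × ℕ × List (Constraint Query)

namespace Condition

/-- The initial segment of the generic sequence determined by a condition. -/
abbrev stem (p : Condition) : List Bool := p.1

/-- The number `n` such that `2⁻ⁿ` bounds from below the measure left to the condition. -/
abbrev exponent (p : Condition) : ℕ := p.2.1

/-- The constraints that a condition imposes on the generic sequence. -/
abbrev constraints (p : Condition) : List (Constraint Query) := p.2.2

end Condition

/-- The information gathered at one stage of the construction. -/
abbrev Decision := ℕ × Bool × Constraint Query × Constraint Query

namespace Decision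

/-- A bound for `HaltsBy e`, if `e ∈ ∅′`. -/
abbrev bound (d : Decision) : ℕ := d.1

/-- The bit `D e`. -/
abbrev bit (d : Decision) : Bool := d.2.1

/-- The constraint deciding whether `e` is in the jump of the generic sequence. -/
abbrev jumpConstraint (d : Decision) : Constraint Query := d.2.2.1

/-- The constraint ensuring that `Γ_e` does not compute `D` from the generic sequence. -/
abbrev diagonalConstraint (d : Decision) : Constraint Query := d.2.2.2

end Decision

namespace Condition

/-- The condition with the constraints of `d` added. Each of them may halve the measure. -/
def impose (p : Condition) (d : Decision) : Condition :=
  (p.stem, p.exponent + 2, d.diagonalConstraint :: d.jumpConstraint :: p.constraints)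

/-- The condition with stem replaced by `σ`, and the exponent provided by
`ClopenApproximation.infinite_isMinimalHitAlong`. -/
def lengthen (p : Condition) (σ : List Bool) : Condition :=
  (σ, 2 * σ.length + p.exponent + 2, p.constraints)

@[fun_prop]
theorem computable_impose {α : Type*} [Primcodable α] {f : α → Condition} {g : α → Decision}
    (hf : Computable f) (hg : Computable g) : Computable fun a => (f a).impose (g a) := by
  unfold impose
  fun_prop

@[fun_prop]
theorem computable_lengthen {α : Type*} [Primcodable α] {f : α → Condition} {g : α → List Bool}
    (hf : Computable f) (hg : Computable g) : Computable fun a => (f a).lengthen (g a) := by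
  unfold lengthen
  fun_prop

/-- The admissible sequences extending the stem of `p` have measure at least `2⁻ⁿ`, where `n` is the
exponent of `p`. -/
def IsLarge (𝒞 : ClopenApproximation HasAnswer) (V : List Bool → Prop) (p : Condition) : Prop :=
  (1 / 2) ^ p.exponent ≤ μCantor.real (𝒞.admissible V p.constraints ∩ _root_.cylinder p.stem)

/-- `σ` is a possible next stem after `p` if the decision `d` is taken. -/
structure Admits (𝒞 : ClopenApproximation HasAnswer) (V : List Bool → Prop) (A : ℕ → Bool)
    (p : Condition) (d : Decision) (σ : List Bool) : Prop where
  length_lt : p.stem.length < σ.length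
  bound_le : d.bound ≤ σ.length
  isPrefix : p.stem <+: σ
  isMinimalHitAlong : IsMinimalHitAlong A (p.impose d).exponent σ
  isLarge : IsLarge 𝒞 V ((p.impose d).lengthen σ)

/-- `d` is a correct decision for stage `e` at the condition `p`. -/
structure Decides (𝒞 : ClopenApproximation HasAnswer) (V : List Bool → Prop) (D : ℕ → Bool)
    (e : ℕ) (p : Condition) (d : Decision) : Prop where
  bit_eq : d.bit = D e
  haltsBy_bound : zeroJump e = true → HaltsBy e d.bound
  jumpConstraint_fst : d.jumpConstraint.1 = (e, e, none)
  diagonalizes : Diagonalizes D e d.diagonalConstraint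
  isLarge : IsLarge 𝒞 V (p.impose d)

variable {𝒞 : ClopenApproximation HasAnswer} {V : List Bool → Prop} {A D X : ℕ → Bool}

theorem deltaOneIn_isLarge (hV : SigmaOneIn emptyOracle V) : DeltaOneIn zeroJump (IsLarge 𝒞 V) :=
  ((𝒞.sigmaOneIn_measureReal_admissible_lt hV).deltaOneIn_zeroJump.not.comp
    fun p : Condition => (p.constraints, p.stem, p.exponent)).of_iff fun _ => not_lt.symm

theorem deltaOneIn_admits (hV : SigmaOneIn emptyOracle V) (hA : TuringLE A X)
    (hzero : TuringLE zeroJump X) :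
    DeltaOneIn X fun c : Condition × Decision × List Bool => Admits 𝒞 V A c.1 c.2.1 c.2.2 := by
  have hhit := (DeltaOneIn.isMinimalHitAlong A).trans hA
  have hlarge := (deltaOneIn_isLarge (𝒞 := 𝒞) hV).trans hzero
  have : DeltaOneIn X fun c : Condition × Decision × List Bool =>
      c.1.stem.length < c.2.2.length ∧ c.2.1.bound ≤ c.2.2.length ∧
      c.1.stem = c.2.2.take c.1.stem.length ∧
      IsMinimalHitAlong A (c.1.impose c.2.1).exponent c.2.2 ∧
      IsLarge 𝒞 V ((c.1.impose c.2.1).lengthen c.2.2) :=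
    .and .lt (.and .le (.and .eq (.and
      (hhit.comp fun c : Condition × Decision × List Bool =>
        ((c.1.impose c.2.1).exponent, c.2.2))
      (hlarge.comp fun c : Condition × Decision × List Bool =>
        (c.1.impose c.2.1).lengthen c.2.2))))
  exact this.of_iff fun _ =>
    ⟨fun ⟨hlen, hbound, hprefix, hhit, hlarge⟩ =>
      ⟨hlen, hbound, List.prefix_iff_eq_take.1 hprefix, hhit, hlarge⟩,
    fun ⟨hlen, hbound, hprefix, hhit, hlarge⟩ =>
      ⟨hlen, hbound, List.prefix_iff_eq_take.2 hprefix, hhit, hlarge⟩⟩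

theorem sigmaOneIn_decides (hV : SigmaOneIn emptyOracle V) (hD : TuringLE D X)
    (hzero : TuringLE zeroJump X) :
    SigmaOneIn X fun c : ℕ × Condition × Decision => Decides 𝒞 V D c.1 c.2.1 c.2.2 := by
  have hlarge := (deltaOneIn_isLarge (𝒞 := 𝒞) hV).trans hzero
  have : SigmaOneIn X fun c : ℕ × Condition × Decision =>
      D c.1 = c.2.2.bit ∧ (zeroJump c.1 = true → HaltsBy c.1 c.2.2.bound) ∧
      c.2.2.jumpConstraint.1 = (c.1, c.1, none) ∧ Diagonalizes D c.1 c.2.2.diagonalConstraint ∧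
      IsLarge 𝒞 V (c.2.1.impose c.2.2) :=
    .and ((turingLE_iff.1 hD).comp fun c : ℕ × Condition × Decision => (c.1, c.2.2.bit)) (.and
      (DeltaOneIn.imp ((DeltaOneIn.oracle zeroJump).trans hzero) (deltaOneIn_haltsBy.comp
        fun c : ℕ × Condition × Decision => (c.1, c.2.2.bound))).1 (.and .eq (.and
      ((sigmaOneIn_diagonalizes hD).comp
        fun c : ℕ × Condition × Decision => (c.1, c.2.2.diagonalConstraint))
      (hlarge.1.comp fun c : ℕ × Condition × Decision => c.2.1.impose c.2.2))))
  exact this.of_iff fun _ =>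
    ⟨fun ⟨hbit, hhalts, hjump, hdiag, hlarge⟩ => ⟨hbit.symm, hhalts, hjump, hdiag, hlarge⟩,
    fun ⟨hbit, hhalts, hjump, hdiag, hlarge⟩ => ⟨hbit.symm, hhalts, hjump, hdiag, hlarge⟩⟩

theorem exists_decides (hV : SigmaOneIn emptyOracle V) (hD : ¬ ComputableSet D) (e : ℕ)
    {p : Condition} (hp : IsLarge 𝒞 V p) : ∃ d, Decides 𝒞 V D e p d := by
  obtain ⟨t, ht⟩ : ∃ t, zeroJump e = true → HaltsBy e t := by
    by_cases he : zeroJump e = true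
    · exact (zeroJump_eq_true_iff.1 he).imp fun t ht _ => ht
    · exact ⟨0, fun h => absurd h he⟩
  obtain ⟨o, ho⟩ := 𝒞.exists_half_pow_le (e, e, none) hp
  obtain ⟨x, b, o', hdiag, hlarge⟩ := 𝒞.exists_half_pow_le_of_not_computableSet hV hD
    (q := fun c : ℕ × Bool => (e, c.1, some (natOfBool c.2))) (by fun_prop) ho
  exact ⟨(t, D e, ((e, e, none), o), (e, x, some (natOfBool b)), o'), rfl, ht, rfl,
    ⟨x, b, rfl, hdiag⟩, hlarge⟩

theorem Decides.infinite_admits (hV : SigmaOneIn emptyOracle V) (hA : ¬ KTrivial A) {e : ℕ}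
    {p : Condition} {d : Decision} (hd : Decides 𝒞 V D e p d) : {σ | Admits 𝒞 V A p d σ}.Infinite :=
  (𝒞.infinite_isMinimalHitAlong hA hV hd.isLarge (p.stem.length + 1 + d.bound)).mono
    fun _ h => ⟨by have := h.1; lia, by have := h.1; lia, h.2.1, h.2.2.1, h.2.2.2⟩

end Condition

end Conditions

/-! ### The construction -/

section Limits

theorem exists_forall_isPrefixOf {τ : ℕ → List Bool} (hprefix : ∀ e, τ e <+: τ (e + 1))
    (hlen : ∀ e, e ≤ (τ e).length) : ∃ X, ∀ e, IsPrefixOf (τ e) X := by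
  have hmono {e e' : ℕ} (h : e ≤ e') : τ e <+: τ e' :=
    Nat.le_induction (List.prefix_refl _) (fun k _ ih => ih.trans (hprefix k)) e' h
  refine ⟨fun i => ((τ (i + 1))[i]?).getD false, fun e => isPrefixOf_iff_getElem?.2 fun i hi => ?_⟩
  have hi' : i < (τ (i + 1)).length := hlen (i + 1)
  rw [List.getElem?_eq_getElem hi, List.getElem?_eq_getElem hi', Option.getD_some]
  rcases le_total e (i + 1) with he | he
  · rw [(hmono he).getElem]
  · rw [(hmono he).getElem]

theorem turingLE_of_forall_isPrefixOf {X Y : ℕ → Bool} {τ : ℕ → List Bool}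
    (hτ : SigmaOneIn Y fun c : ℕ × List Bool => τ c.1 = c.2) (hlen : ∀ e, e ≤ (τ e).length)
    (hX : ∀ e, IsPrefixOf (τ e) X) : TuringLE X Y := by
  have : SigmaOneIn Y fun c : ℕ × Bool => ∃ σ, τ (c.1 + 1) = σ ∧ σ[c.1]? = some c.2 :=
    .exists (.and (hτ.comp fun c : (ℕ × Bool) × List Bool => (c.1.1 + 1, c.2)) .eq)
  refine turingLE_iff.2 (this.of_iff fun ⟨i, b⟩ => ?_)
  simp [isPrefixOf_iff_getElem?.1 (hX (i + 1)) i (hlen (i + 1))]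

theorem mem_compl_openOf_of_forall_exists {S : Set (List Bool)} {X : ℕ → Bool}
    (h : ∀ n, ∃ Y ∈ (openOf S)ᶜ, strPrefix Y n = strPrefix X n) : X ∈ (openOf S)ᶜ := fun hX =>
  let ⟨n, hn⟩ := mem_openOf_iff.1 hX
  let ⟨_, hY, hYX⟩ := h n
  hY (mem_openOf_iff.2 ⟨n, hYX ▸ hn⟩)

end Limits

section Construction

theorem IsMinimalHitAlong.eq_of_isPrefixOf {A R : ℕ → Bool} {n : ℕ} {σ τ : List Bool}
    (hσ : IsMinimalHitAlong A n σ) (hτ : IsMinimalHitAlong A n τ) (hσR : IsPrefixOf σ R)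
    (hτR : IsPrefixOf τ R) : σ = τ := by
  rw [isPrefixOf_iff.1 hσR] at hσ ⊢
  rw [isPrefixOf_iff.1 hτR] at hτ ⊢
  rw [hσ.length_unique hτ]

/-- The sequence of conditions `s` is built by the decisions `d`, where the stem of `s (e + 1)`
codes `d e` according to `C`. -/
structure IsConstruction (𝒞 : ClopenApproximation HasAnswer) (V : List Bool → Prop)
    (A D : ℕ → Bool) (C : Condition → List Bool → Decision → Prop) (s : ℕ → Condition)
    (d : ℕ → Decision) : Prop where
  succ : ∀ e, s (e + 1) = ((s e).impose (d e)).lengthen (s (e + 1)).stem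
  isLarge : ∀ e, (s e).IsLarge 𝒞 V
  decides : ∀ e, (s e).Decides 𝒞 V D e (d e)
  admits : ∀ e, (s e).Admits 𝒞 V A (d e) (s (e + 1)).stem
  codes : ∀ e, C (s e) (s (e + 1)).stem (d e)

variable {𝒞 : ClopenApproximation HasAnswer} {V : List Bool → Prop} {A D R : ℕ → Bool}
  {C : Condition → List Bool → Decision → Prop} {s : ℕ → Condition} {d : ℕ → Decision}

theorem Condition.isLarge_nil (hμ : μCantor.real (openOf {ρ | V ρ}) ≤ 1 / 2) :
    Condition.IsLarge 𝒞 V ([], 1, []) := by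
  change (1 / 2) ^ 1 ≤ μCantor.real (𝒞.admissible V [] ∩ _root_.cylinder [])
  rw [𝒞.admissible_nil, cylinder_nil, Set.inter_univ,
    probReal_compl_eq_one_sub (measurableSet_openOf _)]
  linarith

theorem exists_isConstruction_of_codes (hV : SigmaOneIn emptyOracle V)
    (hμ : μCantor.real (openOf {ρ | V ρ}) ≤ 1 / 2) (hD : ¬ ComputableSet D) {X : ℕ → Bool}
    (hDX : TuringLE D X) (hzero : TuringLE zeroJump X)
    (hC : SigmaOneIn X fun c : Condition × List Bool × Decision => C c.1 c.2.1 c.2.2)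
    (hadmits : ∀ p σ d, C p σ d → p.Admits 𝒞 V A d σ)
    (hex : ∀ p d e, p.Decides 𝒞 V D e d → ∃ σ, C p σ d) :
    ∃ s d, IsConstruction 𝒞 V A D C s d ∧ SigmaOneIn X fun c : ℕ × Condition => s c.1 = c.2 := by
  have hstep : SigmaOneIn X fun c : ℕ × Condition × Condition =>
      ∃ d, (c.2.1.Decides 𝒞 V D c.1 d ∧ C c.2.1 c.2.2.stem d) ∧
        c.2.2 = (c.2.1.impose d).lengthen c.2.2.stem :=
    .exists (.and (.and
      ((Condition.sigmaOneIn_decides hV hDX hzero).comp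
        fun c : (ℕ × Condition × Condition) × Decision => (c.1.1, c.1.2.1, c.2))
      (hC.comp fun c : (ℕ × Condition × Condition) × Decision =>
        (c.1.2.1, c.1.2.2.stem, c.2))) .eq)
  obtain ⟨s, -, hs, hlarge, hsigma⟩ := hstep.exists_dependent_choice
    (P := fun e p p' => ∃ d, (p.Decides 𝒞 V D e d ∧ C p p'.stem d) ∧
      p' = (p.impose d).lengthen p'.stem)
    (Inv := fun _ p => p.IsLarge 𝒞 V) (Condition.isLarge_nil hμ)
    (fun e p hp =>
      let ⟨d, hd⟩ := Condition.exists_decides hV hD e hp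
      let ⟨σ, hσ⟩ := hex p d e hd
      ⟨(p.impose d).lengthen σ, d, ⟨hd, hσ⟩, rfl⟩)
    (fun _ p p' _ ⟨d, ⟨_, hC⟩, hp'⟩ => hp' ▸ (hadmits _ _ _ hC).isLarge)
  choose d hd hsucc using hs
  exact ⟨s, d, ⟨hsucc, hlarge, fun e => (hd e).1, fun e => hadmits _ _ _ (hd e).2,
    fun e => (hd e).2⟩, hsigma⟩

theorem exists_isConstruction (hV : SigmaOneIn emptyOracle V)
    (hμ : μCantor.real (openOf {ρ | V ρ}) ≤ 1 / 2) (hA : ¬ KTrivial A) (hD : ¬ ComputableSet D) :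
    ∃ C, (SigmaOneIn (joinSet A zeroJump) fun c : Condition × List Bool × Decision =>
        C c.1 c.2.1 c.2.2) ∧
      (∀ p σ d d', C p σ d → C p σ d' → d = d') ∧
      ∃ s d, IsConstruction 𝒞 V A D C s d ∧
        SigmaOneIn (joinSet A (joinSet D zeroJump)) fun c : ℕ × Condition => s c.1 = c.2 := by
  obtain ⟨C, hC, hunique, hadmits, hex⟩ := DeltaOneIn.exists_coloring
    (Condition.deltaOneIn_admits (𝒞 := 𝒞) hV (turingLE_joinSet_left A zeroJump)
      (turingLE_joinSet_right A zeroJump))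
  have hright := turingLE_joinSet_right A (joinSet D zeroJump)
  have hDright := (turingLE_joinSet_left D zeroJump).trans hright
  have hzero := (turingLE_joinSet_right D zeroJump).trans hright
  have hC' := hC.trans (joinSet_turingLE (turingLE_joinSet_left A (joinSet D zeroJump)) hzero)
  exact ⟨C, hC, hunique, exists_isConstruction_of_codes hV hμ hD hDright hzero hC' hadmits
    fun p d _ hd => hex p d (hd.infinite_admits hV hA)⟩

namespace IsConstruction

theorem le_length_stem (h : IsConstruction 𝒞 V A D C s d) (e : ℕ) : e ≤ (s e).stem.length := by
  induction e with
  | zero => exact Nat.zero_le _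
  | succ e ih => exact ih.trans_lt (h.admits e).length_lt

theorem constraints_succ (h : IsConstruction 𝒞 V A D C s d) (e : ℕ) : (s (e + 1)).constraints =
    (d e).diagonalConstraint :: (d e).jumpConstraint :: (s e).constraints :=
  congrArg Condition.constraints (h.succ e)

theorem constraints_subset (h : IsConstruction 𝒞 V A D C s d) {e e' : ℕ} (he : e ≤ e') :
    (s e).constraints ⊆ (s e').constraints := by
  induction e', he using Nat.le_induction with
  | base => exact List.Subset.refl _
  | succ k _ ih =>
    rw [h.constraints_succ]
    exact fun c hc => List.mem_cons_of_mem _ (List.mem_cons_of_mem _ (ih hc))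

theorem exists_isPrefixOf (h : IsConstruction 𝒞 V A D C s d) :
    ∃ R, ∀ e, IsPrefixOf (s e).stem R :=
  exists_forall_isPrefixOf (fun e => (h.admits e).isPrefix) h.le_length_stem

theorem mem_admissible (h : IsConstruction 𝒞 V A D C s d) (hR : ∀ e, IsPrefixOf (s e).stem R)
    (e : ℕ) : R ∈ 𝒞.admissible V (s e).constraints := by
  refine mem_compl_openOf_of_forall_exists fun n => ?_
  obtain ⟨X, hX, hstem⟩ := nonempty_of_measureReal_ne_zero
    ((show (0 : ℝ) < (1 / 2) ^ (s (e + n)).exponent by positivity).trans_le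
      (h.isLarge (e + n))).ne'
  have hn : n ≤ (s (e + n)).stem.length := (Nat.le_add_left n e).trans (h.le_length_stem _)
  rw [𝒞.mem_admissible_iff] at hX
  refine ⟨X, 𝒞.mem_admissible_iff.2
    ⟨hX.1, fun c hc => hX.2 c (h.constraints_subset (Nat.le_add_right e n) hc)⟩, ?_⟩
  rw [← take_strPrefix X hn, ← take_strPrefix R hn, mem_cylinder_iff.1 hstem,
    ← isPrefixOf_iff.1 (hR _)]

theorem mem_solutions_jumpConstraint (h : IsConstruction 𝒞 V A D C s d)
    (hR : ∀ e, IsPrefixOf (s e).stem R) (e : ℕ) : R ∈ 𝒞.solutions (d e).jumpConstraint :=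
  (𝒞.mem_admissible_iff.1 (h.mem_admissible hR (e + 1))).2 _ (by simp [h.constraints_succ])

theorem mem_solutions_diagonalConstraint (h : IsConstruction 𝒞 V A D C s d)
    (hR : ∀ e, IsPrefixOf (s e).stem R) (e : ℕ) : R ∈ 𝒞.solutions (d e).diagonalConstraint :=
  (𝒞.mem_admissible_iff.1 (h.mem_admissible hR (e + 1))).2 _ (by simp [h.constraints_succ])

theorem not_turingLE (h : IsConstruction 𝒞 V A D C s d) (hR : ∀ e, IsPrefixOf (s e).stem R) :
    ¬ TuringLE D R := by
  rintro ⟨e, he⟩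
  obtain ⟨n, m, hnm⟩ := (h.decides e).diagonalizes.exists_not_oracleComputes_iff
    (h.mem_solutions_diagonalConstraint hR e)
  exact hnm (he n m)

theorem jump_eq_false_iff (h : IsConstruction 𝒞 V A D C s d)
    (hR : ∀ e, IsPrefixOf (s e).stem R) (e : ℕ) :
    jump R e = false ↔ (d e).jumpConstraint.2 = none := by
  refine jump_eq_false_iff_of_mem_solutions (𝒞 := 𝒞) ?_
  rw [← (h.decides e).jumpConstraint_fst]
  exact h.mem_solutions_jumpConstraint hR e

theorem isMinimalHitAlong_stem (h : IsConstruction 𝒞 V A D C s d) (e : ℕ) :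
    IsMinimalHitAlong A ((s e).exponent + 2) (s (e + 1)).stem :=
  (h.admits e).isMinimalHitAlong

theorem exponent_succ (h : IsConstruction 𝒞 V A D C s d) (e : ℕ) :
    (s (e + 1)).exponent = 2 * (s (e + 1)).stem.length + ((s e).exponent + 2) + 2 :=
  congrArg Condition.exponent (h.succ e)

/- `A` recognizes the minimal hits, and by minimality `R` has only one of each kind. -/
theorem sigmaOneIn_stem (h : IsConstruction 𝒞 V A D C s d) (hR : ∀ e, IsPrefixOf (s e).stem R) :
    SigmaOneIn (joinSet A R) fun c : ℕ × List Bool => (s c.1).stem = c.2 := by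
  have hstep : SigmaOneIn (joinSet A R) fun c : ℕ × (List Bool × ℕ) × List Bool × ℕ =>
      IsPrefixOf c.2.2.1 R ∧ IsMinimalHitAlong A (c.2.1.2 + 2) c.2.2.1 ∧
        c.2.2.2 = 2 * c.2.2.1.length + (c.2.1.2 + 2) + 2 :=
    .and ((SigmaOneIn.isPrefixOf R).trans (turingLE_joinSet_right A R)) (.and
      (((DeltaOneIn.isMinimalHitAlong A).1.trans (turingLE_joinSet_left A R)).comp
        fun c : ℕ × (List Bool × ℕ) × List Bool × ℕ => (c.2.1.2 + 2, c.2.2.1)) .eq)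
  have hpair : SigmaOneIn (joinSet A R) fun c : ℕ × List Bool × ℕ =>
      ((s c.1).stem, (s c.1).exponent) = c.2 := by
    refine sigmaOneIn_of_step (s := fun e => ((s e).stem, (s e).exponent))
      (F := fun _ p p' => IsPrefixOf p'.1 R ∧ IsMinimalHitAlong A (p.2 + 2) p'.1 ∧
        p'.2 = 2 * p'.1.length + (p.2 + 2) + 2) hstep fun e ⟨σ, n⟩ => ?_
    rw [Prod.mk.injEq, h.exponent_succ]
    constructor
    · rintro ⟨hσ : IsPrefixOf σ R, hhit, hn⟩
      obtain rfl := hhit.eq_of_isPrefixOf (h.isMinimalHitAlong_stem e) hσ (hR (e + 1))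
      exact ⟨rfl, hn⟩
    · rintro ⟨rfl, rfl⟩
      exact ⟨hR _, h.isMinimalHitAlong_stem e, rfl⟩
  have : SigmaOneIn (joinSet A R) fun c : ℕ × List Bool =>
      ∃ n, ((s c.1).stem, (s c.1).exponent) = (c.2, n) :=
    .exists (hpair.comp fun c : (ℕ × List Bool) × ℕ => (c.1.1, c.1.2, c.2))
  exact this.of_iff fun c => by simp

theorem zeroJump_turingLE (h : IsConstruction 𝒞 V A D C s d)
    (hR : ∀ e, IsPrefixOf (s e).stem R) : TuringLE zeroJump (joinSet A R) := by
  have : SigmaOneIn (joinSet A R) fun e => ∃ σ, (s (e + 1)).stem = σ ∧ ¬ HaltsBy e σ.length :=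
    .exists (.and ((h.sigmaOneIn_stem hR).comp fun c : ℕ × List Bool => (c.1 + 1, c.2))
      (deltaOneIn_haltsBy.2.comp fun c : ℕ × List Bool => (c.1, c.2.length)))
  refine turingLE_of_sigmaOneIn ((SigmaOneIn.jump emptyOracle).trans (emptyOracle_turingLE _))
    (this.of_iff fun e => ?_)
  rw [← Bool.not_eq_true, exists_eq_left', not_iff_not, zeroJump_eq_true_iff]
  refine ⟨fun he => ?_, fun he => ⟨_, he⟩⟩
  exact ((h.decides e).haltsBy_bound (zeroJump_eq_true_iff.2 he)).mono (h.admits e).bound_le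

theorem sigmaOneIn_condition (h : IsConstruction 𝒞 V A D C s d)
    (hR : ∀ e, IsPrefixOf (s e).stem R)
    (hC : SigmaOneIn (joinSet A R) fun c : Condition × List Bool × Decision => C c.1 c.2.1 c.2.2)
    (hunique : ∀ p σ d d', C p σ d → C p σ d' → d = d') :
    SigmaOneIn (joinSet A R) fun c : ℕ × Condition => s c.1 = c.2 := by
  have hstep : SigmaOneIn (joinSet A R) fun c : ℕ × Condition × Condition =>
      (s (c.1 + 1)).stem = c.2.2.stem ∧ ∃ d', C c.2.1 c.2.2.stem d' ∧
        c.2.2 = (c.2.1.impose d').lengthen c.2.2.stem :=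
    .and ((h.sigmaOneIn_stem hR).comp fun c : ℕ × Condition × Condition => (c.1 + 1, c.2.2.stem))
      (.exists (.and (hC.comp fun c : (ℕ × Condition × Condition) × Decision =>
        (c.1.2.1, c.1.2.2.stem, c.2)) .eq))
  refine sigmaOneIn_of_step (F := fun e p p' => (s (e + 1)).stem = p'.stem ∧ ∃ d',
    C p p'.stem d' ∧ p' = (p.impose d').lengthen p'.stem) hstep fun e p' => ⟨?_, ?_⟩
  · rintro ⟨hstem, d', hd', hp'⟩
    rw [← hstem] at hd' hp'
    rw [hp', h.succ e, hunique _ _ _ _ hd' (h.codes e)]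
    rfl
  · rintro rfl
    exact ⟨rfl, d e, h.codes e, h.succ e⟩

theorem sigmaOneIn_decision (h : IsConstruction 𝒞 V A D C s d) (hR : ∀ e, IsPrefixOf (s e).stem R)
    (hC : SigmaOneIn (joinSet A R) fun c : Condition × List Bool × Decision => C c.1 c.2.1 c.2.2)
    (hunique : ∀ p σ d d', C p σ d → C p σ d' → d = d') :
    SigmaOneIn (joinSet A R) fun c : ℕ × Decision => d c.1 = c.2 := by
  have : SigmaOneIn (joinSet A R) fun c : ℕ × Decision =>
      ∃ u : Condition × List Bool, s c.1 = u.1 ∧ (s (c.1 + 1)).stem = u.2 ∧ C u.1 u.2 c.2 :=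
    .exists (.and ((h.sigmaOneIn_condition hR hC hunique).comp
        fun c : (ℕ × Decision) × Condition × List Bool => (c.1.1, c.2.1)) (.and
      ((h.sigmaOneIn_stem hR).comp
        fun c : (ℕ × Decision) × Condition × List Bool => (c.1.1 + 1, c.2.2))
      (hC.comp fun c : (ℕ × Decision) × Condition × List Bool => (c.2.1, c.2.2, c.1.2))))
  refine this.of_iff fun ⟨e, d'⟩ => ⟨?_, ?_⟩
  · rintro (rfl : d e = d')
    exact ⟨(s e, (s (e + 1)).stem), rfl, rfl, h.codes e⟩
  · rintro ⟨⟨p, σ⟩, rfl, rfl, hd'⟩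
    exact hunique _ _ _ _ (h.codes e) hd'

theorem turingLE_of_decision (h : IsConstruction 𝒞 V A D C s d) {X : ℕ → Bool}
    (hd : SigmaOneIn X fun c : ℕ × Decision => d c.1 = c.2) : TuringLE D X := by
  have : SigmaOneIn X fun c : ℕ × Bool => ∃ d', d c.1 = d' ∧ d'.bit = c.2 :=
    .exists (.and (hd.comp fun c : (ℕ × Bool) × Decision => (c.1.1, c.2)) .eq)
  exact turingLE_iff.2 (this.of_iff fun c => by rw [exists_eq_left', (h.decides c.1).bit_eq])

theorem jump_turingLE_of_decision (h : IsConstruction 𝒞 V A D C s d)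
    (hR : ∀ e, IsPrefixOf (s e).stem R) {X : ℕ → Bool} (hRX : TuringLE R X)
    (hd : SigmaOneIn X fun c : ℕ × Decision => d c.1 = c.2) : TuringLE (jump R) X := by
  have : SigmaOneIn X fun e => ∃ d', d e = d' ∧ d'.jumpConstraint.2 = none :=
    .exists (.and hd .eq)
  refine turingLE_of_sigmaOneIn ((SigmaOneIn.jump R).trans hRX) (this.of_iff fun e => ?_)
  rw [exists_eq_left', h.jump_eq_false_iff hR]

theorem turingLE_of_sigmaOneIn (h : IsConstruction 𝒞 V A D C s d)
    (hR : ∀ e, IsPrefixOf (s e).stem R) {X : ℕ → Bool}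
    (hs : SigmaOneIn X fun c : ℕ × Condition => s c.1 = c.2) : TuringLE R X := by
  have : SigmaOneIn X fun c : ℕ × List Bool => ∃ p, s c.1 = p ∧ p.stem = c.2 :=
    .exists (.and (hs.comp fun c : (ℕ × List Bool) × Condition => (c.1.1, c.2)) .eq)
  exact turingLE_of_forall_isPrefixOf (this.of_iff fun c => by simp) h.le_length_stem hR

end IsConstruction

end Construction

/-- Theorem 10 of Day–Miller. -/
theorem stmt16 (A : ℕ → Bool) (hA : ¬ KTrivial A)
    (D : ℕ → Bool) (hD : ¬ ComputableSet D) :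
    ∃ R : ℕ → Bool, MLRandom R ∧
      TuringEquiv (joinSet A R) (joinSet A (joinSet D zeroJump)) ∧
      ¬ TuringLE D R ∧ TuringLE (jump R) (joinSet A R) := by
  obtain ⟨V, hV, hμ, hrandom⟩ := exists_sigmaOneIn_forall_notMem_mlRandom
  obtain ⟨𝒞⟩ := sigmaOneIn_hasAnswer.nonempty_clopenApproximation
  obtain ⟨C, hC, hunique, s, d, h, hs⟩ := exists_isConstruction (𝒞 := 𝒞) hV hμ hA hD
  obtain ⟨R, hR⟩ := h.exists_isPrefixOf
  have hAR := turingLE_joinSet_left A R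
  have hzero := h.zeroJump_turingLE hR
  have hd := h.sigmaOneIn_decision hR (hC.trans (joinSet_turingLE hAR hzero)) hunique
  exact ⟨R, hrandom R (𝒞.mem_admissible_iff.1 (h.mem_admissible hR 0)).1,
    ⟨joinSet_turingLE (turingLE_joinSet_left _ _) (h.turingLE_of_sigmaOneIn hR hs),
      joinSet_turingLE hAR (joinSet_turingLE (h.turingLE_of_decision hd) hzero)⟩,
    h.not_turingLE hR, h.jump_turingLE_of_decision hR (turingLE_joinSet_right A R) hd⟩
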